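/- arXiv:1808.01460 — 4 statements merged into one kernel-verified Lean document; each statement's English description precedes it below -/
import Mathlib

section
/- Let H be a complex Hilbert space, let B(H) be the algebra of bounded linear operators on H with operator norm, and let e ∈ B(H) be a non-zero partial isometry. Then every element a of the face F_e = {e + z : z ∈ B(H), z = (1 − e e*) z (1 − e* e), ‖z‖ ≤ 1} can be written as the average a = (u₁ + u₂)/2 of two extreme points u₁, u₂ of the closed unit ball of B(H) which themselves belong to F_e. (This is the instance for the JBW*-triple B(H) of the statement that every element of the norm-closed face associated with a non-zero compact tripotent is the average of two extreme points of the unit ball belonging to that face.) -/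
/-!
The face `F_e` consists of the contractions that agree with `e` on the initial space of `e`, where
`e` is isometric. Strict convexity of the Hilbert norm then shows that `F_e` is an extreme
subset of the unit ball, so it suffices to write an arbitrary contraction `a` as the average of two
extreme points of the ball: they lie in `F_e` as soon as `a` does.

For this, extend the partial isometry in the polar decomposition of `a` to an isometry, or to the
adjoint of one, according to which of the two orthogonal complements is the smaller. This gives
`a = v |a|` with `v` extreme, and `|a|` is the average of the unitaries `|a| ± i √(1 - |a|²)`.
-/

open ContinuousLinearMap Metric Set

section Isometries

variable {𝕜 E F G : Type*} [RCLike 𝕜]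

theorem exists_linearIsometry_of_denseRange [AddCommGroup E] [Module 𝕜 E]
    [NormedAddCommGroup F] [NormedSpace 𝕜 F] [CompleteSpace F]
    [NormedAddCommGroup G] [NormedSpace 𝕜 G] {f : E →ₗ[𝕜] F} {g : E →ₗ[𝕜] G}
    (hg : DenseRange g) (h : ∀ x, ‖f x‖ = ‖g x‖) :
    ∃ v : G →ₗᵢ[𝕜] F, ∀ x, v (g x) = f x := by
  have hv (x : E) : f.extendOfNorm g (g x) = f x :=
    LinearMap.extendOfNorm_eq hg ⟨1, fun x ↦ by simp [h]⟩ x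
  refine ⟨⟨(f.extendOfNorm g).toLinearMap, fun y ↦ ?_⟩, hv⟩
  refine hg.induction_on y (isClosed_eq ?_ continuous_norm) fun x ↦ ?_
  · exact (f.extendOfNorm g).continuous.norm
  · exact (congrArg norm (hv x)).trans (h x)

variable [NormedAddCommGroup F] [InnerProductSpace 𝕜 F]
  [NormedAddCommGroup G] [InnerProductSpace 𝕜 G]

theorem exists_linearIsometry_of_orthogonal {S : Submodule 𝕜 F} {T : Submodule 𝕜 G}
    [T.HasOrthogonalProjection] (v : T →ₗᵢ[𝕜] S) (w : Tᗮ →ₗᵢ[𝕜] Sᗮ) :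
    ∃ u : G →ₗᵢ[𝕜] F, ∀ y : T, u y = v y := by
  let u : G →ₗ[𝕜] F :=
    S.subtype ∘ₗ v.toLinearMap ∘ₗ T.orthogonalProjectionOnto.toLinearMap +
      Sᗮ.subtype ∘ₗ w.toLinearMap ∘ₗ Tᗮ.orthogonalProjectionOnto.toLinearMap
  have hu (x : G) :
      u x = v (T.orthogonalProjectionOnto x) + w (Tᗮ.orthogonalProjectionOnto x) := rfl
  refine ⟨⟨u, fun x ↦ ?_⟩, fun y ↦ ?_⟩
  · rw [← sq_eq_sq₀ (norm_nonneg _) (norm_nonneg _), T.norm_sq_eq_add_norm_sq_projection x]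
    refine (congrArg (‖·‖ ^ 2) (hu x)).trans ?_
    simp only [sq]
    rw [norm_add_sq_eq_norm_sq_add_norm_sq_of_inner_eq_zero _ _
      (S.inner_right_of_mem_orthogonal (v _).2 (w _).2), S.norm_coe, Sᗮ.norm_coe, v.norm_map,
      w.norm_map]
  · have hy : Tᗮ.orthogonalProjectionOnto (y : G) = 0 :=
      Submodule.orthogonalProjectionOnto_orthogonal_apply_eq_zero y.2
    simp [hu, hy]

theorem nonempty_linearIsometry_of_embedding [CompleteSpace F] {ι κ : Type*}
    (b : HilbertBasis ι 𝕜 G) (c : HilbertBasis κ 𝕜 F) (j : ι ↪ κ) : Nonempty (G →ₗᵢ[𝕜] F) :=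
  ⟨(c.orthonormal.comp j j.injective).orthogonalFamily.linearIsometry.comp
    b.repr.toLinearIsometry⟩

variable [CompleteSpace F] [CompleteSpace G]

variable (𝕜 F G) in
theorem nonempty_linearIsometry_or : Nonempty (G →ₗᵢ[𝕜] F) ∨ Nonempty (F →ₗᵢ[𝕜] G) := by
  obtain ⟨s, b, -⟩ := exists_hilbertBasis 𝕜 G
  obtain ⟨t, c, -⟩ := exists_hilbertBasis 𝕜 F
  exact (Function.Embedding.total s t).imp (fun ⟨j⟩ ↦ nonempty_linearIsometry_of_embedding b c j)
    fun ⟨j⟩ ↦ nonempty_linearIsometry_of_embedding c b j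

theorem exists_linearIsometry_extension_or_leftInverse (T : Submodule 𝕜 G) [CompleteSpace T]
    (v : T →ₗᵢ[𝕜] F) :
    (∃ u : G →ₗᵢ[𝕜] F, ∀ y : T, u y = v y) ∨ ∃ u : F →ₗᵢ[𝕜] G, ∀ y : T, u (v y) = y := by
  let e : T ≃ₗᵢ[𝕜] v.range := v.equivRange
  have : CompleteSpace v.range := e.symm.toIsometryEquiv.completeSpace
  obtain ⟨⟨w⟩⟩ | ⟨⟨w⟩⟩ := nonempty_linearIsometry_or 𝕜 v.rangeᗮ Tᗮ
  · exact .inl (exists_linearIsometry_of_orthogonal e.toLinearIsometry w)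
  · obtain ⟨u, hu⟩ := exists_linearIsometry_of_orthogonal e.symm.toLinearIsometry w
    exact .inr ⟨u, fun y ↦ (hu (e y)).trans (congrArg _ (e.symm_apply_apply y))⟩

theorem exists_linearIsometry_apply_eq_or_of_norm_eq [AddCommGroup E] [Module 𝕜 E]
    {f : E →ₗ[𝕜] F} {g : E →ₗ[𝕜] G} (h : ∀ x, ‖f x‖ = ‖g x‖) :
    (∃ u : G →ₗᵢ[𝕜] F, ∀ x, u (g x) = f x) ∨ ∃ u : F →ₗᵢ[𝕜] G, ∀ x, u (f x) = g x := by
  let T : Submodule 𝕜 G := g.range.topologicalClosure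
  let k : E →ₗ[𝕜] T := Submodule.inclusion g.range.le_topologicalClosure ∘ₗ g.rangeRestrict
  have hk : DenseRange k :=
    ((denseRange_inclusion_iff subset_closure).mpr subset_rfl).comp
      g.surjective_rangeRestrict.denseRange (by fun_prop)
  obtain ⟨v, hv⟩ := exists_linearIsometry_of_denseRange hk h
  refine (exists_linearIsometry_extension_or_leftInverse T v).imp (fun ⟨u, hu⟩ ↦ ⟨u, fun x ↦ ?_⟩)
    fun ⟨u, hu⟩ ↦ ⟨u, fun x ↦ ?_⟩
  · exact (hu (k x)).trans (hv x)
  · rw [← hv]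
    exact hu (k x)

end Isometries

section ExtremePoints

variable {𝕜 E E' F : Type*} [NontriviallyNormedField 𝕜]
  [NormedAddCommGroup F] [NormedSpace 𝕜 F] [NormedSpace ℝ F] [SMulCommClass 𝕜 ℝ F]

theorem comp_linearIsometryEquiv_mem_extremePoints [NormedAddCommGroup E] [NormedSpace 𝕜 E]
    [NormedAddCommGroup E'] [NormedSpace 𝕜 E'] {u : E →L[𝕜] F}
    (hu : u ∈ extremePoints ℝ (closedBall (0 : E →L[𝕜] F) 1)) (w : E' ≃ₗᵢ[𝕜] E) :
    u ∘L w ∈ extremePoints ℝ (closedBall (0 : E' →L[𝕜] F) 1) := by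
  simp only [mem_extremePoints_iff_left, mem_closedBall_zero_iff] at hu ⊢
  have hw (f : E' →L[𝕜] F) (hf : ‖f‖ ≤ 1) : ‖f ∘L (w.symm : E →L[𝕜] E')‖ ≤ 1 :=
    (opNorm_comp_linearIsometryEquiv f w.symm).trans_le hf
  refine ⟨(opNorm_comp_linearIsometryEquiv u w).trans_le hu.1,
    fun f hf g hg ⟨s, t, hs, ht, hst, hfg⟩ ↦ ?_⟩
  have hfu : f ∘L (w.symm : E →L[𝕜] E') = u := by
    refine hu.2 _ (hw f hf) _ (hw g hg) ⟨s, t, hs, ht, hst, ?_⟩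
    ext x
    simpa using congr($hfg (w.symm x))
  ext x
  simp [← hfu]

variable [SeminormedAddCommGroup E] [NormedSpace 𝕜 E] [StrictConvexSpace ℝ F]

theorem apply_eq_of_mem_openSegment {f g h : E →L[𝕜] F} (hf : ‖f‖ ≤ 1) (hg : ‖g‖ ≤ 1)
    (hh : h ∈ openSegment ℝ f g) {x : E} (hx : ‖h x‖ = ‖x‖) : f x = h x := by
  obtain ⟨s, t, hs, ht, hst, rfl⟩ := hh
  have hfg : f x = g x := by
    by_contra hne
    have hfx : ‖f x‖ ≤ ‖x‖ := by simpa using f.le_of_opNorm_le hf x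
    have hgx : ‖g x‖ ≤ ‖x‖ := by simpa using g.le_of_opNorm_le hg x
    exact (norm_combo_lt_of_ne hfx hgx hne hs ht hst).ne hx
  simp [← hfg, ← add_smul, hst]

theorem linearIsometry_mem_extremePoints (u : E →ₗᵢ[𝕜] F) :
    u.toContinuousLinearMap ∈ extremePoints ℝ (closedBall (0 : E →L[𝕜] F) 1) := by
  simp only [mem_extremePoints_iff_left, mem_closedBall_zero_iff]
  exact ⟨u.norm_toContinuousLinearMap_le, fun f hf g hg hu ↦ ContinuousLinearMap.ext fun x ↦
    apply_eq_of_mem_openSegment hf hg hu (u.norm_map x)⟩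

end ExtremePoints

section PolarDecomposition

variable {H K : Type*} [NormedAddCommGroup H] [InnerProductSpace ℂ H]
  [NormedAddCommGroup K] [InnerProductSpace ℂ K]

instance strictConvexSpace_real_of_complex : StrictConvexSpace ℝ H :=
  let := InnerProductSpace.rclikeToReal ℂ H
  inferInstance

variable [CompleteSpace H] [CompleteSpace K]

theorem adjoint_mem_extremePoints {u : H →L[ℂ] K}
    (hu : u ∈ extremePoints ℝ (closedBall (0 : H →L[ℂ] K) 1)) :
    adjoint u ∈ extremePoints ℝ (closedBall (0 : K →L[ℂ] H) 1) := by
  -- `adjoint` is conjugate-linear over `ℂ`, but `image_extremePoints` needs a real-linear map.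
  let Φ : (H →L[ℂ] K) ≃ₗᵢ[ℝ] (K →L[ℂ] H) :=
    adjoint.toIsometryEquiv.toRealLinearIsometryEquivOfMapZero (map_zero adjoint)
  have hΦ := mem_image_of_mem Φ hu
  rwa [image_extremePoints Φ, Φ.image_closedBall, map_zero] at hΦ

theorem norm_sqrt_adjoint_comp_self_apply (a : H →L[ℂ] K) (x : H) :
    ‖CFC.sqrt (adjoint a ∘L a) x‖ = ‖a x‖ := by
  have ha : 0 ≤ adjoint a ∘L a := (nonneg_iff_isPositive _).mpr (isPositive_adjoint_comp_self a)
  rw [← sq_eq_sq₀ (norm_nonneg _) (norm_nonneg _), apply_norm_sq_eq_inner_adjoint_left,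
    apply_norm_sq_eq_inner_adjoint_left, ← star_eq_adjoint (CFC.sqrt _),
    (CFC.sqrt_nonneg (adjoint a ∘L a)).isSelfAdjoint.star_eq, ← mul_def,
    CFC.sqrt_mul_sqrt_self _ ha]

theorem exists_mem_extremePoints_comp_sqrt_eq (a : H →L[ℂ] K) :
    ∃ v ∈ extremePoints ℝ (closedBall (0 : H →L[ℂ] K) 1),
      v ∘L CFC.sqrt (adjoint a ∘L a) = a := by
  set r := CFC.sqrt (adjoint a ∘L a)
  obtain ⟨v, hv⟩ | ⟨v, hv⟩ := exists_linearIsometry_apply_eq_or_of_norm_eq (f := a.toLinearMap)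
    (g := r.toLinearMap) fun x ↦ (norm_sqrt_adjoint_comp_self_apply a x).symm
  · exact ⟨v.toContinuousLinearMap, linearIsometry_mem_extremePoints v,
      ContinuousLinearMap.ext hv⟩
  · refine ⟨adjoint v.toContinuousLinearMap,
      adjoint_mem_extremePoints (linearIsometry_mem_extremePoints v), ?_⟩
    have hvv := (norm_map_iff_adjoint_comp_self v.toContinuousLinearMap).mp v.norm_map
    have hva : v.toContinuousLinearMap ∘L a = r := ContinuousLinearMap.ext hv
    rw [← hva, ← comp_assoc, hvv, one_def, id_comp]

theorem exists_extremePoints_average_eq {a : H →L[ℂ] K} (ha : ‖a‖ ≤ 1) :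
    ∃ u₁ ∈ extremePoints ℝ (closedBall (0 : H →L[ℂ] K) 1),
      ∃ u₂ ∈ extremePoints ℝ (closedBall (0 : H →L[ℂ] K) 1), a = (2 : ℝ)⁻¹ • (u₁ + u₂) := by
  obtain ⟨v, hv, hva⟩ := exists_mem_extremePoints_comp_sqrt_eq a
  let r : selfAdjoint (H →L[ℂ] H) :=
    ⟨CFC.sqrt (adjoint a ∘L a), (CFC.sqrt_nonneg _).isSelfAdjoint⟩
  have hr : ‖r‖ ≤ 1 := opNorm_le_bound _ zero_le_one fun x ↦
    (norm_sqrt_adjoint_comp_self_apply a x).trans_le (a.le_of_opNorm_le ha x)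
  let w : unitary (H →L[ℂ] H) := selfAdjoint.unitarySelfAddISMul r hr
  have hw : (r : H →L[ℂ] H) = (2 : ℝ)⁻¹ • ((w : H →L[ℂ] H) + star (w : H →L[ℂ] H)) := by
    rw [← realPart_apply_coe, selfAdjoint.realPart_unitarySelfAddISMul]
  refine ⟨_, comp_linearIsometryEquiv_mem_extremePoints hv (Unitary.linearIsometryEquiv w),
    _, comp_linearIsometryEquiv_mem_extremePoints hv (Unitary.linearIsometryEquiv (star w)), ?_⟩
  have hav : a = v ∘L ((2 : ℝ)⁻¹ • ((w : H →L[ℂ] H) + star (w : H →L[ℂ] H))) := by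
    rw [← hw]
    exact hva.symm
  rw [hav]
  ext x
  simp

end PolarDecomposition

section PartialIsometry

variable {𝕜 H K : Type*} [RCLike 𝕜] [NormedAddCommGroup H] [InnerProductSpace 𝕜 H]
  [CompleteSpace H] [NormedAddCommGroup K] [InnerProductSpace 𝕜 K] [CompleteSpace K]

theorem adjoint_apply_apply_of_norm_apply_eq {u : H →L[𝕜] K} (hu : ‖u‖ ≤ 1) {x : H}
    (hx : ‖u x‖ = ‖x‖) : adjoint u (u x) = x := by
  have hle : ‖adjoint u (u x)‖ ≤ ‖x‖ := by
    rw [← hx, ← one_mul ‖u x‖]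
    exact (adjoint u).le_of_opNorm_le ((adjoint.norm_map u).trans_le hu) (u x)
  refine eq_of_norm_le_re_inner_eq_norm_sq (𝕜 := 𝕜) hle ?_
  rw [← hx]
  exact (apply_norm_sq_eq_inner_adjoint_left u x).symm

/-- The partial isometries between two Hilbert spaces, that is, the tripotents of the JBW*-triple
of bounded operators from `H` to `K`. -/
def IsPartialIsometry (e : H →L[𝕜] K) : Prop := (e ∘L adjoint e) ∘L e = e

/-- The face `F_e = e + B_{M₀(e)}`, where `M₀(e)` consists of the operators `z` with
`z = (1 - e e*) z (1 - e* e)`. -/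
def partialIsometryFace (e : H →L[𝕜] K) : Set (H →L[𝕜] K) :=
  {x | ∃ z, ((1 - e ∘L adjoint e) ∘L z) ∘L (1 - adjoint e ∘L e) = z ∧ ‖z‖ ≤ 1 ∧ x = e + z}

namespace IsPartialIsometry

variable {e : H →L[𝕜] K}

theorem adjoint_comp_comp_adjoint (he : IsPartialIsometry e) :
    adjoint e ∘L e ∘L adjoint e = adjoint e := by
  simpa only [adjoint_comp, adjoint_adjoint] using congrArg adjoint he

theorem isStarProjection_adjoint_comp_self (he : IsPartialIsometry e) :
    IsStarProjection (adjoint e ∘L e) :=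
  ⟨congrArg (fun f ↦ adjoint e ∘L f) he, isPositive_adjoint_comp_self e |>.isSelfAdjoint⟩

theorem norm_adjoint_comp_self_apply (he : IsPartialIsometry e) (x : H) :
    ‖(adjoint e ∘L e) x‖ = ‖e x‖ := by
  have hex : e (adjoint e (e x)) = e x := congr($he x)
  rw [← sq_eq_sq₀ (norm_nonneg _) (norm_nonneg _), ← inner_self_eq_norm_sq (𝕜 := 𝕜),
    ← inner_self_eq_norm_sq (𝕜 := 𝕜), comp_apply, adjoint_inner_right, hex]

theorem one_sub_comp_comp_one_sub_eq_self_iff (he : IsPartialIsometry e) {z : H →L[𝕜] K} :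
    ((1 - e ∘L adjoint e) ∘L z) ∘L (1 - adjoint e ∘L e) = z ↔
      adjoint e ∘L z = 0 ∧ z ∘L adjoint e = 0 := by
  have hl : adjoint e ∘L (1 - e ∘L adjoint e) = 0 := by
    rw [comp_sub, he.adjoint_comp_comp_adjoint, one_def, comp_id, sub_self]
  have hr : (1 - adjoint e ∘L e) ∘L adjoint e = 0 := by
    rw [sub_comp, comp_assoc, he.adjoint_comp_comp_adjoint, one_def, id_comp, sub_self]
  constructor
  · intro hz
    rw [← hz]
    exact ⟨by rw [comp_assoc, ← comp_assoc, hl, zero_comp], by rw [comp_assoc, hr, comp_zero]⟩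
  · rintro ⟨hez, hze⟩
    rw [sub_comp, comp_assoc, hez, comp_zero, sub_zero, comp_sub, one_def, one_def, id_comp,
      comp_id, ← comp_assoc, hze, zero_comp, sub_zero]

theorem norm_sq_add_norm_sub_sq (he : IsPartialIsometry e) (x : H) :
    ‖e x‖ ^ 2 + ‖x - (adjoint e ∘L e) x‖ ^ 2 = ‖x‖ ^ 2 := by
  have hin : inner 𝕜 x ((adjoint e ∘L e) x) = inner 𝕜 (e x) (e x) := adjoint_inner_right e x (e x)
  rw [norm_sub_sq (𝕜 := 𝕜), he.norm_adjoint_comp_self_apply, hin, inner_self_eq_norm_sq]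
  ring

theorem norm_add_le_one (he : IsPartialIsometry e) {z : H →L[𝕜] K} (hz : ‖z‖ ≤ 1)
    (hez : adjoint e ∘L z = 0) (hze : z ∘L adjoint e = 0) : ‖e + z‖ ≤ 1 := by
  refine opNorm_le_bound _ zero_le_one fun x ↦ ?_
  rw [one_mul, ← sq_le_sq₀ (norm_nonneg _) (norm_nonneg _)]
  have hzx : ‖z x‖ ≤ ‖x - (adjoint e ∘L e) x‖ := by
    have hzp : z ((adjoint e ∘L e) x) = 0 := congr($hze (e x))
    have hle := z.le_of_opNorm_le hz (x - (adjoint e ∘L e) x)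
    rwa [map_sub, hzp, sub_zero, one_mul] at hle
  have horth : inner 𝕜 (e x) (z x) = 0 := by
    have hezx : adjoint e (z x) = 0 := congr($hez x)
    rw [← adjoint_inner_right, hezx, inner_zero_right]
  calc ‖(e + z) x‖ ^ 2 = ‖e x‖ ^ 2 + ‖z x‖ ^ 2 := by
        rw [add_apply, sq, sq, sq]
        exact norm_add_sq_eq_norm_sq_add_norm_sq_of_inner_eq_zero _ _ horth
    _ ≤ ‖e x‖ ^ 2 + ‖x - (adjoint e ∘L e) x‖ ^ 2 := by gcongr
    _ = ‖x‖ ^ 2 := he.norm_sq_add_norm_sub_sq x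

theorem norm_sub_le_one (he : IsPartialIsometry e) {x : H →L[𝕜] K} (hx : ‖x‖ ≤ 1)
    (hxe : x ∘L (adjoint e ∘L e) = e) : ‖x - e‖ ≤ 1 := by
  have h : x - e = x ∘L (1 - adjoint e ∘L e) := by
    rw [comp_sub, hxe, one_def, comp_id]
  rw [h]
  exact (opNorm_comp_le _ _).trans
    (mul_le_one₀ hx (norm_nonneg _) he.isStarProjection_adjoint_comp_self.one_sub.norm_le)

theorem adjoint_comp_eq_of_comp_eq (he : IsPartialIsometry e) {u : H →L[𝕜] K} (hu : ‖u‖ ≤ 1)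
    (hue : u ∘L (adjoint e ∘L e) = e) : adjoint u ∘L e = adjoint e ∘L e := by
  ext x
  have hux : u ((adjoint e ∘L e) x) = e x := congr($hue x)
  rw [comp_apply, ← hux]
  refine adjoint_apply_apply_of_norm_apply_eq hu ?_
  rw [hux, he.norm_adjoint_comp_self_apply]

theorem mem_partialIsometryFace_iff (he : IsPartialIsometry e) {x : H →L[𝕜] K} :
    x ∈ partialIsometryFace e ↔ ‖x‖ ≤ 1 ∧ x ∘L (adjoint e ∘L e) = e := by
  constructor
  · rintro ⟨z, hz, hz₁, rfl⟩
    obtain ⟨hez, hze⟩ := he.one_sub_comp_comp_one_sub_eq_self_iff.mp hz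
    refine ⟨he.norm_add_le_one hz₁ hez hze, ?_⟩
    rw [add_comp, ← comp_assoc z, hze, zero_comp, add_zero]
    exact he
  · rintro ⟨hx, hxe⟩
    refine ⟨x - e, he.one_sub_comp_comp_one_sub_eq_self_iff.mpr ⟨?_, ?_⟩,
      he.norm_sub_le_one hx hxe, (add_sub_cancel _ _).symm⟩
    · have h := congrArg adjoint (he.adjoint_comp_eq_of_comp_eq hx hxe)
      simp only [adjoint_comp, adjoint_adjoint] at h
      rw [comp_sub, h, sub_self]
    · calc (x - e) ∘L adjoint e = (x - x ∘L (adjoint e ∘L e)) ∘L adjoint e := by rw [hxe]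
        _ = 0 := by
          rw [sub_comp, comp_assoc, comp_assoc, he.adjoint_comp_comp_adjoint, sub_self]

end IsPartialIsometry

end PartialIsometry

section Face

variable {H K : Type*} [NormedAddCommGroup H] [InnerProductSpace ℂ H] [CompleteSpace H]
  [NormedAddCommGroup K] [InnerProductSpace ℂ K] [CompleteSpace K]

theorem IsPartialIsometry.isExtreme_partialIsometryFace {e : H →L[ℂ] K}
    (he : IsPartialIsometry e) :
    IsExtreme ℝ (closedBall (0 : H →L[ℂ] K) 1) (partialIsometryFace e) where
  subset _ hx := mem_closedBall_zero_iff.mpr (he.mem_partialIsometryFace_iff.mp hx).1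
  left_mem_of_mem_openSegment f hf g hg h hh hfg := by
    rw [mem_closedBall_zero_iff] at hf hg
    rw [he.mem_partialIsometryFace_iff] at hh ⊢
    refine ⟨hf, (ContinuousLinearMap.ext fun x ↦ ?_).trans hh.2⟩
    refine apply_eq_of_mem_openSegment hf hg hfg ?_
    exact congr(‖$(hh.2) x‖).trans (he.norm_adjoint_comp_self_apply x).symm

theorem average_of_two_extreme_points_in_face_general {e : H →L[ℂ] K} (he : IsPartialIsometry e)
    {a : H →L[ℂ] K} (ha : a ∈ partialIsometryFace e) :
    ∃ u₁ u₂ : H →L[ℂ] K,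
      u₁ ∈ extremePoints ℝ (closedBall (0 : H →L[ℂ] K) 1) ∧
      u₂ ∈ extremePoints ℝ (closedBall (0 : H →L[ℂ] K) 1) ∧
      u₁ ∈ partialIsometryFace e ∧ u₂ ∈ partialIsometryFace e ∧ a = (2 : ℝ)⁻¹ • (u₁ + u₂) := by
  have hF := he.isExtreme_partialIsometryFace
  obtain ⟨u₁, hu₁, u₂, hu₂, rfl⟩ :=
    exists_extremePoints_average_eq (mem_closedBall_zero_iff.mp (hF.subset ha))
  have hseg : (2 : ℝ)⁻¹ • (u₁ + u₂) ∈ openSegment ℝ u₁ u₂ :=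
    ⟨2⁻¹, 2⁻¹, by norm_num, by norm_num, by norm_num, (smul_add _ _ _).symm⟩
  exact ⟨u₁, u₂, hu₁, hu₂, hF.left_mem_of_mem_openSegment hu₁.1 hu₂.1 ha hseg,
    hF.right_mem_of_mem_openSegment hu₁.1 hu₂.1 ha hseg, rfl⟩

end Face

/-- every element of the norm-closed face `F_e = e + B_{M₀(e)}` of the
closed unit ball of `B(H)` associated with a non-zero partial isometry `e` is the
average of two extreme points of the closed unit ball belonging to `F_e`. -/
theorem average_of_two_extreme_points_in_face
    {H : Type*} [NormedAddCommGroup H] [InnerProductSpace ℂ H] [CompleteSpace H]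
    (e : H →L[ℂ] H) (he : e * star e * e = e) (hene : e ≠ 0)
    (a : H →L[ℂ] H)
    (ha : a ∈ {x : H →L[ℂ] H | ∃ z, (1 - e * star e) * z * (1 - star e * e) = z ∧
      ‖z‖ ≤ 1 ∧ x = e + z}) :
    ∃ u₁ u₂ : H →L[ℂ] H,
      u₁ ∈ Set.extremePoints ℝ (Metric.closedBall (0 : H →L[ℂ] H) 1) ∧
      u₂ ∈ Set.extremePoints ℝ (Metric.closedBall (0 : H →L[ℂ] H) 1) ∧
      u₁ ∈ {x : H →L[ℂ] H | ∃ z, (1 - e * star e) * z * (1 - star e * e) = z ∧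
        ‖z‖ ≤ 1 ∧ x = e + z} ∧
      u₂ ∈ {x : H →L[ℂ] H | ∃ z, (1 - e * star e) * z * (1 - star e * e) = z ∧
        ‖z‖ ≤ 1 ∧ x = e + z} ∧
      a = (2 : ℝ)⁻¹ • (u₁ + u₂) :=
  average_of_two_extreme_points_in_face_general he ha
end

section
/- Let n ≥ 3 and let Mₙ(ℂ) be the C*-algebra of n×n complex matrices. For every partial isometry e ∈ Mₙ(ℂ) of matrix rank one and every unitary u ∈ Mₙ(ℂ), there exists a partial isometry w ∈ Mₙ(ℂ) of matrix rank one such that e w* = 0, w* e = 0 (i.e. w is triple-orthogonal to e) and u = w + (1 − w w*) u (1 − w* w). (This is the instance for the rank-n type 1 Cartan factor Mₙ(ℂ) of the statement that every Cartan factor of rank at least three satisfies property (𝒫): for each minimal tripotent e and each complete tripotent u there is a minimal tripotent w orthogonal to e with u = w + P₀(w)(u).) -/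
/-!
For an isometry `u` and a self-adjoint projection `p`, the partial isometry `w = u p` always
satisfies `u = w + (1 - w w*) u (1 - w* w)`, since `w* w = p` and `w w* u = u p`. So it remains to
choose `p` of rank one with `e p = 0` and `e* u p = 0`, that is, to project onto a line in
`ker e ∩ ker (e* u)`. Both kernels have codimension at most `rank e`, so their intersection is
nonzero as soon as `2 rank e` is less than the number of columns.
-/

section CommonKernel

open Matrix

variable {l m n K : Type*} [Fintype n] [Field K]

theorem exists_ne_zero_mulVec_eq_zero_of_rank_add_rank_lt {a : Matrix l n K} {b : Matrix m n K}
    (h : a.rank + b.rank < Fintype.card n) : ∃ x ≠ 0, a *ᵥ x = 0 ∧ b *ᵥ x = 0 := by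
  have not_disjoint : ¬ Disjoint a.mulVecLin.ker b.mulVecLin.ker := fun hdisj => by
    have hle := Submodule.finrank_add_finrank_le_of_disjoint hdisj
    have ha := a.mulVecLin.finrank_range_add_finrank_ker
    have hb := b.mulVecLin.finrank_range_add_finrank_ker
    rw [Module.finrank_fintype_fun_eq_card] at ha hb hle
    unfold Matrix.rank at h
    omega
  obtain ⟨x, ⟨hax, hbx⟩, hx⟩ :=
    Submodule.exists_mem_ne_zero_of_ne_bot (disjoint_iff.not.mp not_disjoint)
  exact ⟨x, hx, hax, hbx⟩

end CommonKernel

section Rank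

open Matrix

variable {l m n : Type*} [Fintype n]

theorem rank_mul_of_mul_eq_one {R : Type*} [CommSemiring R] [StrongRankCondition R] [Fintype l]
    [Fintype m] [DecidableEq m] {a : Matrix l m R} {b : Matrix m l R} (hba : b * a = 1)
    (c : Matrix m n R) : (a * c).rank = c.rank := by
  refine le_antisymm (rank_mul_le_right a c) ?_
  calc c.rank = (b * (a * c)).rank := by rw [← Matrix.mul_assoc, hba, Matrix.one_mul]
    _ ≤ (a * c).rank := rank_mul_le_right b (a * c)

theorem rank_vecMulVec_eq_one {K : Type*} [Field K] {x : m → K} {y : n → K} (hx : x ≠ 0)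
    (hy : y ≠ 0) : (vecMulVec x y).rank = 1 := by
  classical
  refine le_antisymm (rank_vecMulVec_le x y) (Nat.one_le_iff_ne_zero.mpr fun h => ?_)
  rw [Matrix.rank, Submodule.finrank_eq_zero, LinearMap.range_eq_bot, ← toLin'_apply',
    LinearEquiv.map_eq_zero_iff] at h
  obtain ⟨i, hi⟩ := Function.ne_iff.mp hx
  obtain ⟨j, hj⟩ := Function.ne_iff.mp hy
  exact mul_ne_zero hi hj (congr_fun₂ h i j)

end Rank

section LineProjection

open Matrix

variable {m n K : Type*} [Fintype n] [Field K] [StarRing K]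

/-- The matrix `x x* / (x* x)` of the orthogonal projection onto the line spanned by a vector `x`.
It is zero when `x* x = 0`, by the convention `0⁻¹ = 0`. -/
def lineProjection (x : n → K) : Matrix n n K :=
  (star x ⬝ᵥ x)⁻¹ • vecMulVec x (star x)

theorem isStarProjection_lineProjection (x : n → K) : IsStarProjection (lineProjection x) where
  isIdempotentElem := by
    have hd : (star x ⬝ᵥ x)⁻¹ * (star x ⬝ᵥ x)⁻¹ * (star x ⬝ᵥ x) = (star x ⬝ᵥ x)⁻¹ := by
      simpa only [inv_inv] using mul_self_mul_inv (star x ⬝ᵥ x)⁻¹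
    rw [IsIdempotentElem, lineProjection, Matrix.smul_mul, Matrix.mul_smul,
      vecMulVec_mul_vecMulVec, vecMulVec_smul, smul_smul, smul_smul, hd]
  isSelfAdjoint := by
    have hs : star (star x ⬝ᵥ x) = star x ⬝ᵥ x := by rw [← star_dotProduct_star, star_star]
    rw [IsSelfAdjoint, star_eq_conjTranspose, lineProjection, conjTranspose_smul,
      conjTranspose_vecMulVec, star_star, star_inv₀, hs]

theorem mul_lineProjection_eq_zero {a : Matrix m n K} {x : n → K} (h : a *ᵥ x = 0) :
    a * lineProjection x = 0 := by
  rw [lineProjection, Matrix.mul_smul, mul_vecMulVec, h, zero_vecMulVec, smul_zero]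

theorem rank_lineProjection [PartialOrder K] [StarOrderedRing K] {x : n → K} (hx : x ≠ 0) :
    (lineProjection x).rank = 1 := by
  have hd : star x ⬝ᵥ x ≠ 0 := dotProduct_star_self_eq_zero.not.mpr hx
  rw [lineProjection, ← smul_vecMulVec]
  exact rank_vecMulVec_eq_one (smul_ne_zero (inv_ne_zero hd) hx) (star_ne_zero.mpr hx)

end LineProjection

section IsometryMulProjection

open Matrix

variable {m n R : Type*} [Fintype m] [Fintype n] [DecidableEq n]

section Semiring

variable [Semiring R] [StarRing R] {u : Matrix m n R} {p : Matrix n n R}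

theorem conjTranspose_isometry_mul_projection_mul_isometry (hu : uᴴ * u = 1)
    (hp : IsStarProjection p) : (u * p)ᴴ * u = p := by
  rw [conjTranspose_mul, Matrix.mul_assoc, hu, Matrix.mul_one]
  exact hp.isSelfAdjoint

theorem conjTranspose_mul_self_isometry_mul_projection (hu : uᴴ * u = 1)
    (hp : IsStarProjection p) : (u * p)ᴴ * (u * p) = p := by
  rw [← Matrix.mul_assoc, conjTranspose_isometry_mul_projection_mul_isometry hu hp]
  exact hp.isIdempotentElem

theorem isometry_mul_projection_mul_conjTranspose_mul_self (hu : uᴴ * u = 1)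
    (hp : IsStarProjection p) : u * p * (u * p)ᴴ * (u * p) = u * p := by
  rw [Matrix.mul_assoc, conjTranspose_mul_self_isometry_mul_projection hu hp, Matrix.mul_assoc,
    hp.isIdempotentElem.eq]

end Semiring

theorem isometry_eq_add_peirce_zero [DecidableEq m] [Ring R] [StarRing R] {u : Matrix m n R}
    {p : Matrix n n R} (hu : uᴴ * u = 1) (hp : IsStarProjection p) :
    u = u * p + (1 - u * p * (u * p)ᴴ) * u * (1 - (u * p)ᴴ * (u * p)) := by
  have hcompl : (1 - u * p * (u * p)ᴴ) * u = u * (1 - p) := by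
    rw [Matrix.sub_mul, Matrix.one_mul, Matrix.mul_assoc,
      conjTranspose_isometry_mul_projection_mul_isometry hu hp, Matrix.mul_assoc,
      hp.isIdempotentElem.eq, Matrix.mul_sub, Matrix.mul_one]
  rw [conjTranspose_mul_self_isometry_mul_projection hu hp, hcompl, Matrix.mul_assoc,
    hp.one_sub.isIdempotentElem.eq, ← Matrix.mul_add, add_sub_cancel, Matrix.mul_one]

end IsometryMulProjection

open Matrix in
theorem matrix_property_P_general {m n K : Type*} [Fintype m] [DecidableEq m] [Fintype n]
    [DecidableEq n] [Field K] [PartialOrder K] [StarRing K] [StarOrderedRing K]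
    {e u : Matrix m n K} (he : 2 * e.rank < Fintype.card n) (hu : uᴴ * u = 1) :
    ∃ w : Matrix m n K, w * wᴴ * w = w ∧ w.rank = 1 ∧ e * wᴴ = 0 ∧ wᴴ * e = 0 ∧
      u = w + (1 - w * wᴴ) * u * (1 - wᴴ * w) := by
  have hrank : e.rank + (eᴴ * u).rank < Fintype.card n := by
    have heu := (rank_mul_le_left eᴴ u).trans_eq e.rank_conjTranspose
    omega
  obtain ⟨x, hx, hex, heux⟩ := exists_ne_zero_mulVec_eq_zero_of_rank_add_rank_lt hrank
  have hp : IsStarProjection (lineProjection x) := isStarProjection_lineProjection x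
  refine ⟨u * lineProjection x, isometry_mul_projection_mul_conjTranspose_mul_self hu hp, ?_, ?_,
    ?_, isometry_eq_add_peirce_zero hu hp⟩
  · rw [rank_mul_of_mul_eq_one hu, rank_lineProjection hx]
  · rw [conjTranspose_mul, ← star_eq_conjTranspose (lineProjection x), hp.isSelfAdjoint.star_eq,
      ← Matrix.mul_assoc, mul_lineProjection_eq_zero hex, Matrix.zero_mul]
  · rw [← conjTranspose_eq_zero, conjTranspose_mul, conjTranspose_conjTranspose,
      ← Matrix.mul_assoc, mul_lineProjection_eq_zero heux]

/-- the rank-`n` type 1 Cartan factor `Mₙ(ℂ)` (`n ≥ 3`) satisfies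
property (𝒫): for every rank-one partial isometry `e` and every unitary `u`, there
is a rank-one partial isometry `w` orthogonal to `e` with
`u = w + (1 - w w*) u (1 - w* w)`. -/
theorem matrix_property_P (n : ℕ) (hn : 3 ≤ n)
    (e : Matrix (Fin n) (Fin n) ℂ) (he : e * star e * e = e) (herank : e.rank = 1)
    (u : Matrix (Fin n) (Fin n) ℂ) (hu : u ∈ unitary (Matrix (Fin n) (Fin n) ℂ)) :
    ∃ w : Matrix (Fin n) (Fin n) ℂ,
      w * star w * w = w ∧ w.rank = 1 ∧
      e * star w = 0 ∧ star w * e = 0 ∧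
      u = w + (1 - w * star w) * u * (1 - star w * w) := by
  open ComplexOrder in
  exact matrix_property_P_general (by rw [herank, Fintype.card_fin]; omega) hu.1
end

section
/- Let H and K be complex Hilbert spaces with dim H ≥ 3 and dim K ≥ 3, and let B(H, K) be the Banach space of bounded linear operators from H to K with the operator norm. Then B(H, K) satisfies the Mazur–Ulam property: for every real Banach space Y, every surjective isometry Δ : S(B(H, K)) → S(Y) between the unit spheres admits a unique extension to a surjective real-linear isometry from B(H, K) onto Y. (This is the type 1 Cartan factor instance of the theorem that every JBW*-triple of rank at least three satisfies the Mazur–Ulam property, since B(H, K) is a JBW*-triple of rank min(dim H, dim K) ≥ 3.) -/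
/-!
For unit vectors `v` and `w`, the face `{x | ‖x‖ ≤ 1, x w = v}` of the unit ball of `B(H, K)` is
described metrically, as the set of points of the sphere at distance two from `-v ⊗ w`. Hence its
image under `Δ` is convex, and by Hahn-Banach some `ψ` in the dual unit ball equals `1` on this
image. It is enough to show that `ψ (Δ x) = Re ⟪v, x w⟫` for all `x` in the sphere: these
functionals separate the points of `B(H, K)`, so the positively homogeneous extension of `Δ` is
linear. Taking adjoints if necessary, we may assume that `H` embeds isometrically in `K`.

Consider a face `u ⊗ q + y` with `u ⟂ v` and `q ⟂ w`. On this face `Δ` is affine along the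
directions `V - u ⊗ q` with `V` isometric, because such a direction moves all unit vectors
orthogonal to `q` at the same speed. Applied to suitable triples of isometries, this makes `Δ`
additive on orthogonal operators of rank one; as the rank is at least three, there is a rank one
operator orthogonal to any two given ones, and this gives the formula when `x` has rank one. For
small `y`, an operator `z` of rank one with `Re ⟪v, z w⟫ = Re ⟪v, y w⟫ ± 1/2` and `‖z - y‖ ≤ 1/2`,
obtained from a Schur complement, gives the formula at `u ⊗ q + y`. By affinity it propagates along
the directions `V - u ⊗ q`, whose closed convex hull contains `y` whenever `u ⊗ q + y` is in the
face, since strict contractions are averages of isometries up to a small error.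

Thus `ψ ∘ Δ` is as claimed on isometries and `Δ` is affine on every face, so the formula holds on
all faces, and these are dense in the sphere.
-/

namespace OperatorSphere

open InnerProductSpace (rankOne)
open scoped InnerProductSpace

lemma norm_inv_norm_smul {E : Type*} [NormedAddCommGroup E] [NormedSpace ℝ E] {x : E}
    (hx : x ≠ 0) : ‖‖x‖⁻¹ • x‖ = 1 :=
  norm_smul_inv_norm (𝕜 := ℝ) hx

section SphereIsometry

variable {X Y : Type*} [NormedAddCommGroup X] [NormedAddCommGroup Y] {Δ : X → Y}

/-- A surjective isometry between the unit spheres of two normed spaces, encoded as a map between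
the ambient spaces whose values off the unit sphere are irrelevant. -/
structure IsSphereIsometry (Δ : X → Y) : Prop where
  norm_map : ∀ x, ‖x‖ = 1 → ‖Δ x‖ = 1
  surj : ∀ y, ‖y‖ = 1 → ∃ x, ‖x‖ = 1 ∧ Δ x = y
  iso : ∀ x y, ‖x‖ = 1 → ‖y‖ = 1 → ‖Δ x - Δ y‖ = ‖x - y‖

/-- The star of `e` in the unit sphere: the points of the sphere at distance two from `-e`. -/
def sphereStar (e : X) : Set X := {x | ‖x‖ = 1 ∧ ‖x + e‖ = 2}

lemma IsSphereIsometry.eq_of_apply_eq (hΔ : IsSphereIsometry Δ) {x y : X} (hx : ‖x‖ = 1)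
    (hy : ‖y‖ = 1) (h : Δ x = Δ y) : x = y := by
  rw [← sub_eq_zero, ← norm_eq_zero, ← hΔ.iso x y hx hy, h, sub_self, norm_zero]

lemma IsSphereIsometry.continuousOn (hΔ : IsSphereIsometry Δ) :
    ContinuousOn Δ {x | ‖x‖ = 1} := by
  have h : LipschitzOnWith 1 Δ {x | ‖x‖ = 1} := LipschitzOnWith.of_dist_le_mul fun x hx y hy => by
    rw [dist_eq_norm, dist_eq_norm, hΔ.iso x y hx hy, NNReal.coe_one, one_mul]
  exact h.continuousOn

lemma IsSphereIsometry.comp (hΔ : IsSphereIsometry Δ) [NormedSpace ℝ X]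
    {X' : Type*} [NormedAddCommGroup X'] [NormedSpace ℝ X'] (e : X' ≃ₗᵢ[ℝ] X) :
    IsSphereIsometry (Δ ∘ e) where
  norm_map x hx := hΔ.norm_map (e x) (by rwa [e.norm_map])
  surj y hy := by
    obtain ⟨x, hx, rfl⟩ := hΔ.surj y hy
    exact ⟨e.symm x, by rwa [e.symm.norm_map], by rw [Function.comp_apply, e.apply_symm_apply]⟩
  iso x y hx hy := by
    rw [Function.comp_apply, Function.comp_apply,
      hΔ.iso _ _ (by rwa [e.norm_map]) (by rwa [e.norm_map]), ← map_sub, e.norm_map]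

lemma IsSphereIsometry.exists_apply_eq_neg (hΔ : IsSphereIsometry Δ) {x : X} (hx : ‖x‖ = 1) :
    ∃ x', ‖x'‖ = 1 ∧ Δ x' = -Δ x :=
  hΔ.surj _ (by rw [norm_neg, hΔ.norm_map x hx])

lemma IsSphereIsometry.image_sphereStar (hΔ : IsSphereIsometry Δ) {e : X} (he : ‖e‖ = 1) :
    Δ '' sphereStar e = sphereStar (-Δ (-e)) := by
  have norm_add : ∀ x, ‖x‖ = 1 → ‖Δ x + -Δ (-e)‖ = ‖x + e‖ := fun x hx => by
    rw [← sub_eq_add_neg, hΔ.iso x (-e) hx (by rwa [norm_neg]), sub_neg_eq_add]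
  refine Set.Subset.antisymm ?_ fun y ⟨hy, hye⟩ => ?_
  · rintro _ ⟨x, ⟨hx, hxe⟩, rfl⟩
    exact ⟨hΔ.norm_map x hx, (norm_add x hx).trans hxe⟩
  · obtain ⟨x, hx, rfl⟩ := hΔ.surj y hy
    exact ⟨x, ⟨hx, (norm_add x hx).symm.trans hye⟩, rfl⟩

variable [NormedSpace ℝ Y]

lemma IsSphereIsometry.neg_mem_sphereStar (hΔ : IsSphereIsometry Δ) {e : X} (he : ‖e‖ = 1)
    (hstar : ∀ x ∈ sphereStar e, ∀ y ∈ sphereStar e, ‖x + y‖ = 2) {x x' : X}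
    (hx : x ∈ sphereStar e) (hx' : ‖x'‖ = 1) (h : Δ x' = -Δ x) : -x' ∈ sphereStar e := by
  have norm_neg_add : ∀ z, ‖z‖ = 1 → ‖-z + e‖ = ‖Δ z - Δ e‖ := fun z hz => by
    rw [hΔ.iso z e hz he, norm_sub_rev, neg_add_eq_sub]
  obtain ⟨q, hq, hqe⟩ := hΔ.exists_apply_eq_neg he
  have hqstar : -q ∈ sphereStar e := by
    refine ⟨by rwa [norm_neg], ?_⟩
    rw [norm_neg_add q hq, hqe, ← neg_add', norm_neg, ← two_smul ℝ, norm_smul, hΔ.norm_map e he]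
    norm_num
  refine ⟨by rwa [norm_neg], ?_⟩
  rw [norm_neg_add x' hx', h, ← neg_add', norm_neg, ← hstar x hx _ hqstar, ← sub_eq_add_neg,
    ← hΔ.iso x q hx.1 hq, hqe, sub_neg_eq_add]

lemma IsSphereIsometry.norm_add_eq_two (hΔ : IsSphereIsometry Δ) {e : X} (he : ‖e‖ = 1)
    (hstar : ∀ x ∈ sphereStar e, ∀ y ∈ sphereStar e, ‖x + y‖ = 2) {x y : X}
    (hx : x ∈ sphereStar e) (hy : y ∈ sphereStar e) : ‖Δ x + Δ y‖ = 2 := by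
  obtain ⟨y', hy', hyy'⟩ := hΔ.exists_apply_eq_neg hy.1
  rw [← sub_neg_eq_add, ← hyy', hΔ.iso x y' hx.1 hy', sub_eq_add_neg]
  exact hstar x hx _ (hΔ.neg_mem_sphereStar he hstar hy hy' hyy')

lemma convex_sphereStar {y₀ : Y} (hy₀ : y₀ ∈ sphereStar y₀)
    (hstar : ∀ a ∈ sphereStar y₀, ∀ b ∈ sphereStar y₀, ‖a + b‖ = 2) : Convex ℝ (sphereStar y₀) := by
  have midpoint_mem : ∀ a ∈ sphereStar y₀, (1 / 2 : ℝ) • (a + y₀) ∈ sphereStar y₀ := by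
    intro a ha
    have hm : ‖(1 / 2 : ℝ) • (a + y₀)‖ = 1 := by rw [norm_smul, ha.2]; norm_num
    refine ⟨hm, le_antisymm ((norm_add_le _ _).trans (by rw [hm, hy₀.1]; norm_num)) ?_⟩
    have h := norm_sub_norm_le ((3 : ℝ) • (a + y₀)) ((2 : ℝ) • a)
    rw [show (3 : ℝ) • (a + y₀) - (2 : ℝ) • a = (2 : ℝ) • ((1 / 2 : ℝ) • (a + y₀) + y₀) by module,
      norm_smul, norm_smul, norm_smul, ha.2, ha.1] at h
    simp only [Real.norm_ofNat] at h
    linarith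
  have norm_le : ∀ a ∈ sphereStar y₀, ∀ b ∈ sphereStar y₀, ∀ r s : ℝ, 0 ≤ r → 0 ≤ s → r + s = 1 →
      ‖r • a + s • b‖ ≤ 1 := fun a ha b hb r s hr hs hrs =>
    mem_closedBall_zero_iff.1 (convex_closedBall (0 : Y) 1 (mem_closedBall_zero_iff.2 ha.1.le)
      (mem_closedBall_zero_iff.2 hb.1.le) hr hs hrs)
  intro a ha b hb r s hr hs hrs
  -- The sum of `r • a + s • b` and its mirror image `s • a + r • b` is `a + b`.
  have h₁ := norm_le a ha b hb r s hr hs hrs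
  have h₂ := norm_le a ha b hb s r hs hr (by rwa [add_comm])
  have hsum : (4 : ℝ) ≤ ‖r • a + s • b + y₀‖ + ‖s • a + r • b + y₀‖ := by
    have h := norm_add_le (r • a + s • b + y₀) (s • a + r • b + y₀)
    have hs' : s = 1 - r := by linarith
    rw [show r • a + s • b + y₀ + (s • a + r • b + y₀) =
        (2 : ℝ) • ((1 / 2 : ℝ) • (a + y₀) + (1 / 2 : ℝ) • (b + y₀)) by rw [hs']; module,
      norm_smul, hstar _ (midpoint_mem a ha) _ (midpoint_mem b hb), Real.norm_ofNat] at h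
    linarith
  have h₃ := norm_add_le (r • a + s • b) y₀
  have h₄ := norm_add_le (s • a + r • b) y₀
  rw [hy₀.1] at h₃ h₄
  exact ⟨by linarith, by linarith⟩

lemma IsSphereIsometry.convex_image_sphereStar (hΔ : IsSphereIsometry Δ) {e : X} (he : ‖e‖ = 1)
    (hstar : ∀ x ∈ sphereStar e, ∀ y ∈ sphereStar e, ‖x + y‖ = 2) :
    Convex ℝ (Δ '' sphereStar e) := by
  have he' : ‖-Δ (-e)‖ = 1 := by rw [norm_neg, hΔ.norm_map (-e) (by rwa [norm_neg])]
  have hself : -Δ (-e) ∈ sphereStar (-Δ (-e)) := by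
    refine ⟨he', ?_⟩
    rw [← two_smul ℝ, norm_smul, he']
    norm_num
  rw [hΔ.image_sphereStar he]
  refine convex_sphereStar hself ?_
  rw [← hΔ.image_sphereStar he]
  rintro _ ⟨x, hx, rfl⟩ _ ⟨y, hy, rfl⟩
  exact hΔ.norm_add_eq_two he hstar hx hy

lemma exists_dual_eq_one_of_convex {S : Set Y} (hconv : Convex ℝ S) (hS : ∀ y ∈ S, ‖y‖ = 1) :
    ∃ ψ : Y →L[ℝ] ℝ, ‖ψ‖ ≤ 1 ∧ ∀ y ∈ S, ψ y = 1 := by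
  have hdisj : Disjoint (Metric.ball (0 : Y) 1) S := Set.disjoint_left.2 fun y hy hyS =>
    (mem_ball_zero_iff.1 hy).ne (hS y hyS)
  obtain ⟨φ, u, hφ, hφS⟩ := geometric_hahn_banach_open (convex_ball (0 : Y) 1)
    Metric.isOpen_ball hconv hdisj
  have hu : 0 < u := by simpa using hφ 0 (by simp)
  have hφu : ‖φ‖ ≤ u := by
    by_contra! h
    obtain ⟨x, hx, hux⟩ := φ.exists_lt_apply_of_lt_opNorm h
    rcases lt_abs.1 hux with hux | hux
    · exact hux.asymm (hφ x (mem_ball_zero_iff.2 hx))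
    · rw [← map_neg] at hux
      exact hux.asymm (hφ (-x) (mem_ball_zero_iff.2 (by rwa [norm_neg])))
  have hnorm : ‖u⁻¹ • φ‖ ≤ 1 := by
    rw [norm_smul, norm_inv, Real.norm_of_nonneg hu.le, inv_mul_le_one₀ hu]
    exact hφu
  refine ⟨u⁻¹ • φ, hnorm, fun y hy => le_antisymm ?_ ?_⟩
  · have h := (u⁻¹ • φ).le_of_opNorm_le hnorm y
    rw [hS y hy, one_mul] at h
    exact (le_abs_self _).trans h
  · rw [smul_apply, smul_eq_mul, le_inv_mul_iff₀ hu, mul_one]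
    exact hφS y hy

end SphereIsometry

section LinearExtension

variable {X X' Y : Type*} [NormedAddCommGroup X] [NormedSpace ℝ X] [NormedAddCommGroup X']
  [NormedSpace ℝ X'] [NormedAddCommGroup Y] [NormedSpace ℝ Y] {Δ : X → Y}

/-- `T` is a surjective real-linear isometry that agrees with `Δ` on the unit sphere. -/
def IsLinearExtension (Δ T : X → Y) : Prop :=
  (∀ x y : X, T (x + y) = T x + T y) ∧ (∀ (r : ℝ) (x : X), T (r • x) = r • T x) ∧
    (∀ x : X, ‖T x‖ = ‖x‖) ∧ Function.Surjective T ∧ ∀ x : X, ‖x‖ = 1 → T x = Δ x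

/-- The positively homogeneous extension of a map defined on the unit sphere. -/
noncomputable def homogeneousExtension (Δ : X → Y) (x : X) : Y := ‖x‖ • Δ (‖x‖⁻¹ • x)

lemma homogeneousExtension_of_norm_eq_one (Δ : X → Y) {x : X} (hx : ‖x‖ = 1) :
    homogeneousExtension Δ x = Δ x := by
  simp [homogeneousExtension, hx]

lemma IsLinearExtension.eq_homogeneousExtension {T : X → Y} (hT : IsLinearExtension Δ T) :
    T = homogeneousExtension Δ := by
  obtain ⟨-, map_smul, -, -, heq⟩ := hT
  funext x
  rcases eq_or_ne x 0 with rfl | hx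
  · simpa [homogeneousExtension] using map_smul 0 0
  · rw [homogeneousExtension, ← heq _ (norm_inv_norm_smul hx), ← map_smul,
      smul_inv_smul₀ (norm_ne_zero_iff.2 hx)]

lemma IsSphereIsometry.norm_homogeneousExtension (hΔ : IsSphereIsometry Δ) (x : X) :
    ‖homogeneousExtension Δ x‖ = ‖x‖ := by
  rcases eq_or_ne x 0 with rfl | hx
  · simp [homogeneousExtension]
  · rw [homogeneousExtension, norm_smul, norm_norm, hΔ.norm_map _ (norm_inv_norm_smul hx),
      mul_one]

lemma IsSphereIsometry.surjective_homogeneousExtension (hΔ : IsSphereIsometry Δ) :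
    Function.Surjective (homogeneousExtension Δ) := by
  intro y
  rcases eq_or_ne y 0 with rfl | hy
  · exact ⟨0, by simp [homogeneousExtension]⟩
  · obtain ⟨z, hz, hzy⟩ := hΔ.surj _ (norm_inv_norm_smul hy)
    have hn : ‖y‖ ≠ 0 := norm_ne_zero_iff.2 hy
    refine ⟨‖y‖ • z, ?_⟩
    rw [homogeneousExtension, norm_smul, hz, norm_norm, mul_one, inv_smul_smul₀ hn, hzy,
      smul_inv_smul₀ hn]

lemma apply_homogeneousExtension {ψ : Y →ₗ[ℝ] ℝ} {f : X →ₗ[ℝ] ℝ}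
    (h : ∀ x, ‖x‖ = 1 → ψ (Δ x) = f x) (x : X) : ψ (homogeneousExtension Δ x) = f x := by
  rcases eq_or_ne x 0 with rfl | hx
  · simp [homogeneousExtension]
  · rw [homogeneousExtension, map_smul, h _ (norm_inv_norm_smul hx), ← map_smul,
      smul_inv_smul₀ (norm_ne_zero_iff.2 hx)]

/-- Functionals on `Y` which are linear along `Δ` and separate the points of `X` detect every
failure of linearity of the homogeneous extension, because that extension is onto. -/
lemma IsSphereIsometry.isLinearExtension_homogeneousExtension (hΔ : IsSphereIsometry Δ)
    (hsep : ∀ x : X, x ≠ 0 → ∃ (ψ : Y →ₗ[ℝ] ℝ) (f : X →ₗ[ℝ] ℝ),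
      (∀ z, ‖z‖ = 1 → ψ (Δ z) = f z) ∧ f x ≠ 0) :
    IsLinearExtension Δ (homogeneousExtension Δ) := by
  have eq_zero : ∀ y : Y, (∀ (ψ : Y →ₗ[ℝ] ℝ) (f : X →ₗ[ℝ] ℝ),
      (∀ z, ‖z‖ = 1 → ψ (Δ z) = f z) → ψ y = 0) → y = 0 := by
    intro y hy
    obtain ⟨x, rfl⟩ := hΔ.surjective_homogeneousExtension y
    suffices x = 0 by simp [homogeneousExtension, this]
    by_contra hx
    obtain ⟨ψ, f, hψ, hfx⟩ := hsep x hx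
    exact hfx (by rw [← apply_homogeneousExtension hψ, hy ψ f hψ])
  refine ⟨fun x y => ?_, fun r x => ?_, hΔ.norm_homogeneousExtension,
    hΔ.surjective_homogeneousExtension, fun x => homogeneousExtension_of_norm_eq_one Δ⟩
  · refine sub_eq_zero.1 (eq_zero _ fun ψ f hψ => ?_)
    rw [map_sub, map_add]
    simp only [apply_homogeneousExtension hψ, map_add, sub_self]
  · refine sub_eq_zero.1 (eq_zero _ fun ψ f hψ => ?_)
    rw [map_sub, map_smul]
    simp only [apply_homogeneousExtension hψ, map_smul, sub_self]

lemma IsLinearExtension.comp_symm {T : X' → Y} (e : X' ≃ₗᵢ[ℝ] X)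
    (hT : IsLinearExtension (Δ ∘ e) T) : IsLinearExtension Δ (T ∘ e.symm) := by
  obtain ⟨map_add, map_smul, norm_map, surj, heq⟩ := hT
  refine ⟨fun x y => ?_, fun r x => ?_, fun x => ?_, surj.comp e.symm.surjective, fun x hx => ?_⟩
  · simp only [Function.comp_apply, _root_.map_add, map_add]
  · simp only [Function.comp_apply, _root_.map_smul, map_smul]
  · rw [Function.comp_apply, norm_map, e.symm.norm_map]
  · rw [Function.comp_apply, heq _ (by rwa [e.symm.norm_map]), Function.comp_apply,
      e.apply_symm_apply]

end LinearExtension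

section UnitVector

variable {E : Type*} [NormedAddCommGroup E] [InnerProductSpace ℂ E] {v : E}

lemma inner_sub_inner_smul (hv : ‖v‖ = 1) (k : E) : ⟪v, k - ⟪v, k⟫_ℂ • v⟫_ℂ = 0 := by
  rw [inner_sub_right, inner_smul_right, inner_self_eq_one_of_norm_eq_one hv, mul_one, sub_self]

lemma norm_smul_add_sq (hv : ‖v‖ = 1) (c : ℂ) {k : E} (hk : ⟪v, k⟫_ℂ = 0) :
    ‖c • v + k‖ ^ 2 = ‖c‖ ^ 2 + ‖k‖ ^ 2 := by
  have h := norm_add_sq_eq_norm_sq_add_norm_sq_of_inner_eq_zero (𝕜 := ℂ) (c • v) k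
    (by rw [inner_smul_left, hk, mul_zero])
  rwa [norm_smul, hv, mul_one, ← sq, ← sq, ← sq] at h

lemma norm_inner_sq_add_norm_sub_sq (hv : ‖v‖ = 1) (k : E) :
    ‖⟪v, k⟫_ℂ‖ ^ 2 + ‖k - ⟪v, k⟫_ℂ • v‖ ^ 2 = ‖k‖ ^ 2 := by
  rw [← norm_smul_add_sq hv _ (inner_sub_inner_smul hv k), add_sub_cancel]

lemma norm_sub_inner_smul_le (hv : ‖v‖ = 1) (k : E) : ‖k - ⟪v, k⟫_ℂ • v‖ ≤ ‖k‖ :=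
  (sq_le_sq₀ (norm_nonneg _) (norm_nonneg _)).1
    (by linarith [norm_inner_sq_add_norm_sub_sq hv k, sq_nonneg ‖⟪v, k⟫_ℂ‖])

lemma norm_inner_le_of_norm_eq_one (hv : ‖v‖ = 1) (k : E) : ‖⟪v, k⟫_ℂ‖ ≤ ‖k‖ :=
  (norm_inner_le_norm v k).trans_eq (by rw [hv, one_mul])

lemma exists_unit_orthogonal (hE : 3 ≤ Module.rank ℂ E) (a b : E) :
    ∃ u : E, ‖u‖ = 1 ∧ ⟪a, u⟫_ℂ = 0 ∧ ⟪b, u⟫_ℂ = 0 := by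
  classical
  let U : Submodule ℂ E := Submodule.span ℂ (({a, b} : Finset E) : Set E)
  have hU : Uᗮ ≠ ⊥ := by
    intro hbot
    have : FiniteDimensional ℂ U := FiniteDimensional.span_finset ℂ _
    have htop : U = ⊤ := Submodule.orthogonal_eq_bot_iff.1 hbot
    have hrank : Module.rank ℂ U ≤ 2 :=
      (rank_span_finset_le ({a, b} : Finset E)).trans (by exact_mod_cast Finset.card_le_two)
    rw [htop, rank_top] at hrank
    exact absurd (hE.trans hrank) (by norm_num)
  obtain ⟨u, hu, hu0⟩ := Submodule.exists_mem_ne_zero_of_ne_bot hU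
  have inner_eq_zero : ∀ c ∈ U, ⟪c, ‖u‖⁻¹ • u⟫_ℂ = 0 := fun c hc =>
    (Submodule.mem_orthogonal U _).1 (Uᗮ.smul_of_tower_mem ‖u‖⁻¹ hu) c hc
  exact ⟨‖u‖⁻¹ • u, norm_inv_norm_smul hu0, inner_eq_zero a (Submodule.subset_span (by simp)),
    inner_eq_zero b (Submodule.subset_span (by simp))⟩

/-- The complex Householder transformation `x ↦ x - ⟪d, x⟫ / ⟪d, a⟫ • d` with `d = a - b`. -/
lemma exists_linearIsometry_apply_eq {a b : E} (ha : ‖a‖ = 1) (hb : ‖b‖ = 1) :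
    ∃ R : E →ₗᵢ[ℂ] E, R a = b ∧ ∀ k, ⟪a, k⟫_ℂ = 0 → ⟪b, k⟫_ℂ = 0 → R k = k := by
  rcases eq_or_ne a b with rfl | hab
  · exact ⟨LinearIsometry.id, rfl, fun k _ _ => rfl⟩
  set d := a - b with hd
  set c := ⟪d, a⟫_ℂ with hc
  have hdd : ⟪d, d⟫_ℂ = c + starRingEnd ℂ c := by
    rw [hc, inner_conj_symm, hd]
    simp only [inner_sub_left, inner_sub_right, inner_self_eq_one_of_norm_eq_one ha,
      inner_self_eq_one_of_norm_eq_one hb]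
    ring
  have hc0 : c ≠ 0 := by
    intro h
    rw [h, map_zero, add_zero, inner_self_eq_zero] at hdd
    exact hab (sub_eq_zero.1 hdd)
  have hcc0 : starRingEnd ℂ c ≠ 0 := (map_ne_zero _).2 hc0
  let L : E →ₗ[ℂ] E := LinearMap.id - c⁻¹ • (rankOne ℂ d d : E →L[ℂ] E).toLinearMap
  have hL : ∀ x, L x = x - (c⁻¹ * ⟪d, x⟫_ℂ) • d := fun x => by simp [L, smul_smul]
  refine ⟨L.isometryOfInner fun x y => ?_, ?_, fun k hak hbk => ?_⟩
  · rw [hL, hL]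
    simp only [inner_sub_left, inner_sub_right, inner_smul_left, inner_smul_right, hdd, map_mul,
      map_inv₀, inner_conj_symm]
    field_simp
    ring
  · change L a = b
    rw [hL, ← hc, inv_mul_cancel₀ hc0, one_smul, hd, sub_sub_cancel]
  · change L k = k
    rw [hL, hd, inner_sub_left, hak, hbk, sub_zero, mul_zero, zero_smul, sub_zero]

end UnitVector

section Operator

variable {H K : Type*} [NormedAddCommGroup H] [InnerProductSpace ℂ H]
  [NormedAddCommGroup K] [InnerProductSpace ℂ K] {x y V : H →L[ℂ] K} {u v : K} {q w : H}

lemma exists_linearIsometry_of_unit (J : H →ₗᵢ[ℂ] K) (hw : ‖w‖ = 1) (hv : ‖v‖ = 1) :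
    ∃ V : H →ₗᵢ[ℂ] K, V w = v := by
  obtain ⟨R, hR, -⟩ := exists_linearIsometry_apply_eq (a := J w) (by rw [J.norm_map, hw]) hv
  exact ⟨R.comp J, hR⟩

lemma exists_linearIsometry_of_orthonormal_pair (J : H →ₗᵢ[ℂ] K) {w₁ w₂ : H} {v₁ v₂ : K}
    (hw₁ : ‖w₁‖ = 1) (hw₂ : ‖w₂‖ = 1) (hw : ⟪w₁, w₂⟫_ℂ = 0) (hv₁ : ‖v₁‖ = 1) (hv₂ : ‖v₂‖ = 1)
    (hv : ⟪v₁, v₂⟫_ℂ = 0) : ∃ V : H →ₗᵢ[ℂ] K, V w₁ = v₁ ∧ V w₂ = v₂ := by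
  obtain ⟨V, hV⟩ := exists_linearIsometry_of_unit J hw₁ hv₁
  obtain ⟨R, hR, hfix⟩ := exists_linearIsometry_apply_eq (a := V w₂) (by rw [V.norm_map, hw₂]) hv₂
  refine ⟨R.comp V, ?_, hR⟩
  rw [LinearIsometry.coe_comp, Function.comp_apply, hV]
  refine hfix v₁ ?_ (inner_eq_zero_symm.1 hv)
  rw [← hV, V.inner_map_map, inner_eq_zero_symm, hw]

lemma norm_apply_le_of_norm_le_one (hx : ‖x‖ ≤ 1) (h : H) : ‖x h‖ ≤ ‖h‖ :=
  (x.le_of_opNorm_le hx h).trans_eq (one_mul _)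

lemma norm_le_one_of_isometric (hx : ∀ h, ‖x h‖ = ‖h‖) : ‖x‖ ≤ 1 :=
  x.opNorm_le_bound zero_le_one fun h => by rw [hx, one_mul]

lemma opNorm_sq_le {C : ℝ} (hC : 0 ≤ C) (h : ∀ k, ‖x k‖ ^ 2 ≤ C * ‖k‖ ^ 2) : ‖x‖ ^ 2 ≤ C := by
  refine Real.le_sqrt (norm_nonneg _) hC |>.1 (x.opNorm_le_bound (Real.sqrt_nonneg C) fun k => ?_)
  rw [← Real.sqrt_sq (norm_nonneg k), ← Real.sqrt_mul hC]
  exact Real.le_sqrt_of_sq_le (h k)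

/-- The contractions sending `w` to `v`; for unit vectors, a face of the unit ball. -/
def face (v : K) (w : H) : Set (H →L[ℂ] K) := {x | ‖x‖ ≤ 1 ∧ x w = v}

/-- The operators whose matrix entries in the row of `v` and in the column of `w` vanish. -/
def corner (v : K) (w : H) : Submodule ℂ (H →L[ℂ] K) where
  carrier := {x | x w = 0 ∧ ∀ h, ⟪v, x h⟫_ℂ = 0}
  add_mem' := by
    rintro a b ⟨ha, ha'⟩ ⟨hb, hb'⟩
    exact ⟨by simp [ha, hb], fun h => by simp [ha', hb']⟩
  zero_mem' := ⟨by simp, by simp⟩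
  smul_mem' := by
    rintro c a ⟨ha, ha'⟩
    exact ⟨by simp [ha], fun h => by simp [ha']⟩

/-- The real part of the matrix entry of an operator at `v` and `w`, as a functional. -/
noncomputable def reEntry (v : K) (w : H) : (H →L[ℂ] K) →L[ℝ] ℝ :=
  Complex.reCLM ∘L ((innerSL ℂ v ∘L ContinuousLinearMap.apply ℂ K w).restrictScalars ℝ)

lemma reEntry_apply (v : K) (w : H) (x : H →L[ℂ] K) : reEntry v w x = (⟪v, x w⟫_ℂ).re := rfl

lemma abs_reEntry_le (hv : ‖v‖ = 1) (hw : ‖w‖ = 1) (x : H →L[ℂ] K) : |reEntry v w x| ≤ ‖x‖ :=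
  calc |reEntry v w x| ≤ ‖⟪v, x w⟫_ℂ‖ := Complex.abs_re_le_norm _
    _ ≤ ‖x w‖ := norm_inner_le_of_norm_eq_one hv _
    _ ≤ ‖x‖ := by simpa [hw] using x.le_opNorm w

lemma norm_rankOne_eq_one (hv : ‖v‖ = 1) (hw : ‖w‖ = 1) :
    ‖(rankOne ℂ v w : H →L[ℂ] K)‖ = 1 := by
  rw [InnerProductSpace.norm_rankOne, hv, hw, one_mul]

lemma norm_eq_one_of_norm_apply (hx : ‖x‖ ≤ 1) (hw : ‖w‖ = 1) (h : ‖x w‖ = 1) : ‖x‖ = 1 :=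
  le_antisymm hx (by simpa [h, hw] using x.le_opNorm w)

lemma norm_eq_one_of_mem_face (hv : ‖v‖ = 1) (hw : ‖w‖ = 1) (hx : x ∈ face v w) : ‖x‖ = 1 :=
  norm_eq_one_of_norm_apply hx.1 hw (by rw [hx.2, hv])

lemma convex_face (v : K) (w : H) : Convex ℝ (face v w) := by
  rintro x ⟨hx, hxw⟩ y ⟨hy, hyw⟩ r s hr hs hrs
  refine ⟨mem_closedBall_zero_iff.1 (convex_closedBall (0 : H →L[ℂ] K) 1
    (mem_closedBall_zero_iff.2 hx) (mem_closedBall_zero_iff.2 hy) hr hs hrs), ?_⟩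
  rw [add_apply, smul_apply, smul_apply, hxw, hyw, ← add_smul, hrs, one_smul]

lemma norm_add_eq_two_of_mem_face (hv : ‖v‖ = 1) (hw : ‖w‖ = 1) (hx : x ∈ face v w)
    (hy : y ∈ face v w) : ‖x + y‖ = 2 := by
  refine le_antisymm ((norm_add_le _ _).trans (by linarith [hx.1, hy.1])) ?_
  have h := (x + y).le_opNorm w
  rwa [add_apply, hx.2, hy.2, ← two_smul ℝ, norm_smul, hv, hw, Real.norm_ofNat, mul_one,
    mul_one] at h

lemma rankOne_mem_face (hv : ‖v‖ = 1) (hw : ‖w‖ = 1) : rankOne ℂ v w ∈ face v w :=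
  ⟨(norm_rankOne_eq_one hv hw).le, by
    rw [InnerProductSpace.rankOne_apply, inner_self_eq_one_of_norm_eq_one hw, one_smul]⟩

/-- A quantitative form of strict convexity: the parallelogram law at `x h` and `⟪w, h⟫ • v`. -/
lemma norm_add_rankOne_sq_le (hx : ‖x‖ ≤ 1) (hv : ‖v‖ = 1) (hw : ‖w‖ = 1) :
    ‖x + rankOne ℂ v w‖ ^ 2 ≤ 4 - ‖x w - v‖ ^ 2 / 6 := by
  have hd : ‖x w - v‖ ≤ 2 :=
    (norm_sub_le _ _).trans (by linarith [norm_apply_le_of_norm_le_one hx w])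
  have hd2 : ‖x w - v‖ ^ 2 ≤ 2 ^ 2 := pow_le_pow_left₀ (norm_nonneg _) hd 2
  refine opNorm_sq_le (by linarith) fun h => ?_
  set α := ⟪w, h⟫_ℂ with hα
  have hsplit := norm_inner_sq_add_norm_sub_sq hw h
  have hpar := parallelogram_law_with_norm ℂ (x h) (α • v)
  have hxh := norm_apply_le_of_norm_le_one hx h
  have hdα : ‖α‖ * ‖x w - v‖ ≤ ‖x h - α • v‖ + ‖h - α • w‖ := by
    have e : α • (x w - v) = (x h - α • v) - x (h - α • w) := by
      rw [map_sub, map_smul, smul_sub]; abel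
    rw [← norm_smul, e]
    exact (norm_sub_le _ _).trans (by gcongr; exact norm_apply_le_of_norm_le_one hx _)
  rw [norm_smul, hv, mul_one] at hpar
  rw [add_apply, InnerProductSpace.rankOne_apply, ← hα]
  have hxh2 : ‖x h‖ ^ 2 ≤ ‖h‖ ^ 2 := pow_le_pow_left₀ (norm_nonneg _) hxh 2
  have hdα2 := pow_le_pow_left₀ (by positivity) hdα 2
  nlinarith [sq_nonneg (‖x h - α • v‖ - ‖h - α • w‖),
    mul_le_mul_of_nonneg_right hd2 (sq_nonneg ‖h - α • w‖)]

lemma sphereStar_rankOne (hv : ‖v‖ = 1) (hw : ‖w‖ = 1) :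
    sphereStar (rankOne ℂ v w) = face v w := by
  ext x
  refine ⟨fun ⟨hx, hxe⟩ => ⟨hx.le, ?_⟩, fun hx => ⟨norm_eq_one_of_mem_face hv hw hx,
    norm_add_eq_two_of_mem_face hv hw hx (rankOne_mem_face hv hw)⟩⟩
  have h := norm_add_rankOne_sq_le hx.le hv hw
  rw [hxe] at h
  exact sub_eq_zero.1 (norm_eq_zero.1 (pow_eq_zero_iff two_ne_zero |>.1
    (le_antisymm (by linarith) (sq_nonneg _))))

lemma norm_rankOne_sub_smul_le {g : H →L[ℂ] K} (hg : ‖g‖ ≤ 1) (hv : ‖v‖ = 1) (hw : ‖w‖ = 1)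
    {t : ℝ} (ht : 0 ≤ t) (ht' : t ≤ 1 / 4) :
    ‖rankOne ℂ v w - t • g‖ ≤ 1 - t * reEntry v w g + 2 * t ^ 2 := by
  set a := reEntry v w g with ha
  have hta : t * a ≤ 1 / 4 := by
    have ha1 := (le_abs_self a).trans ((abs_reEntry_le hv hw g).trans hg)
    nlinarith
  suffices ‖rankOne ℂ v w - t • g‖ ^ 2 ≤ 1 - 2 * (t * a) + 3 * t ^ 2 by
    refine abs_le_of_sq_le_sq' (this.trans ?_) (by linarith [sq_nonneg t]) |>.2
    nlinarith [mul_nonneg (sub_nonneg.2 hta) (sq_nonneg t), sq_nonneg (t * a), sq_nonneg (t ^ 2)]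
  refine opNorm_sq_le (by linarith [sq_nonneg t]) fun h => ?_
  set α := ⟪w, h⟫_ℂ with hα
  set h' := h - α • w with hh'
  have hsplit : ‖α‖ ^ 2 + ‖h'‖ ^ 2 = ‖h‖ ^ 2 := norm_inner_sq_add_norm_sub_sq hw h
  have hgh := pow_le_pow_left₀ (norm_nonneg _) (norm_apply_le_of_norm_le_one hg h) 2
  have hre : ‖α‖ ^ 2 * a - ‖α‖ * ‖h'‖ ≤ (⟪α • v, g h⟫_ℂ).re := by
    have e : ⟪α • v, g h⟫_ℂ = (‖α‖ ^ 2 : ℝ) * ⟪v, g w⟫_ℂ + starRingEnd ℂ α * ⟪v, g h'⟫_ℂ := by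
      rw [hh', map_sub, map_smul, inner_sub_right, inner_smul_right, inner_smul_left,
        Complex.ofReal_pow, ← Complex.conj_mul']
      ring
    have hrest : ‖starRingEnd ℂ α * ⟪v, g h'⟫_ℂ‖ ≤ ‖α‖ * ‖h'‖ := by
      rw [norm_mul, RCLike.norm_conj]
      gcongr
      exact (norm_inner_le_of_norm_eq_one hv _).trans (norm_apply_le_of_norm_le_one hg _)
    rw [e, Complex.add_re, Complex.re_ofReal_mul, ha, reEntry_apply]
    linarith [neg_le_of_abs_le ((Complex.abs_re_le_norm _).trans hrest)]
  have hnorm : ‖(rankOne ℂ v w - t • g) h‖ ^ 2 =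
      ‖α‖ ^ 2 - 2 * (t * (⟪α • v, g h⟫_ℂ).re) + t ^ 2 * ‖g h‖ ^ 2 := by
    rw [sub_apply, smul_apply, InnerProductSpace.rankOne_apply, ← hα, @norm_sub_sq ℂ, norm_smul,
      norm_smul, hv, Real.norm_of_nonneg ht, ← Complex.coe_smul, inner_smul_right, mul_one,
      mul_pow, RCLike.re_to_complex, Complex.re_ofReal_mul]
  rw [hnorm, ← hsplit]
  rw [← hsplit] at hgh
  linarith [mul_le_mul_of_nonneg_left hre ht, mul_le_mul_of_nonneg_left hgh (sq_nonneg t),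
    sq_nonneg (2 * (t * ‖α‖) - ‖h'‖), mul_nonneg (sub_nonneg.2 hta) (sq_nonneg ‖h'‖),
    mul_nonneg (sq_nonneg t) (sq_nonneg ‖h'‖)]

lemma rankOne_add_mem_face (hv : ‖v‖ = 1) (hw : ‖w‖ = 1) (hy : y ∈ corner v w) (hy1 : ‖y‖ ≤ 1) :
    rankOne ℂ v w + y ∈ face v w := by
  refine ⟨ContinuousLinearMap.opNorm_le_bound _ zero_le_one fun h => ?_, by
    rw [add_apply, hy.1, add_zero, (rankOne_mem_face hv hw).2]⟩
  have hyh : y h = y (h - ⟪w, h⟫_ℂ • w) := by rw [map_sub, map_smul, hy.1, smul_zero, sub_zero]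
  rw [one_mul, ← sq_le_sq₀ (norm_nonneg _) (norm_nonneg _), add_apply,
    InnerProductSpace.rankOne_apply, norm_smul_add_sq hv _ (hy.2 h),
    ← norm_inner_sq_add_norm_sub_sq hw h, hyh]
  gcongr
  exact norm_apply_le_of_norm_le_one hy1 _

lemma norm_sub_rankOne_le (hw : ‖w‖ = 1) (hx : x ∈ face v w) : ‖x - rankOne ℂ v w‖ ≤ 1 := by
  refine ContinuousLinearMap.opNorm_le_bound _ zero_le_one fun h => ?_
  have e : (x - rankOne ℂ v w) h = x (h - ⟪w, h⟫_ℂ • w) := by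
    rw [sub_apply, InnerProductSpace.rankOne_apply, map_sub, map_smul, hx.2]
  rw [e, one_mul]
  exact (norm_apply_le_of_norm_le_one hx.1 _).trans (norm_sub_inner_smul_le hw h)

/-- The isometric members of `face v w`. -/
def isometricFace (v : K) (w : H) : Set (H →L[ℂ] K) := {V | (∀ h, ‖V h‖ = ‖h‖) ∧ V w = v}

lemma isometricFace_subset_face (v : K) (w : H) : isometricFace v w ⊆ face v w :=
  fun _ hV => ⟨norm_le_one_of_isometric hV.1, hV.2⟩

lemma mem_isometricFace_of_add_eq {V₁ V₂ : H →L[ℂ] K} (hv : ‖v‖ = 1) (hw : ‖w‖ = 1)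
    (h₁ : ∀ h, ‖V₁ h‖ = ‖h‖) (h₂ : ∀ h, ‖V₂ h‖ = ‖h‖) (hsum : V₁ w + V₂ w = v + v) :
    V₁ ∈ isometricFace v w ∧ V₂ ∈ isometricFace v w := by
  have heq : V₁ w = V₂ w := by
    have hpar := parallelogram_law_with_norm ℂ (V₁ w) (V₂ w)
    rw [hsum, ← two_smul ℝ, norm_smul, hv, h₁, h₂, hw, Real.norm_ofNat] at hpar
    exact sub_eq_zero.1 (norm_eq_zero.1 (pow_eq_zero_iff two_ne_zero |>.1 (by linarith)))
  rw [heq, ← two_smul ℝ, ← two_smul ℝ] at hsum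
  have hV₂ := smul_right_injective K (two_ne_zero' ℝ) hsum
  exact ⟨⟨h₁, heq.trans hV₂⟩, h₂, hV₂⟩

lemma reEntry_inv_norm_smul_ne_zero {k : H} (hk : x k ≠ 0) :
    reEntry (‖x k‖⁻¹ • x k) (‖k‖⁻¹ • k) x ≠ 0 := by
  have hk0 : k ≠ 0 := by rintro rfl; exact hk (map_zero x)
  have hxk := norm_ne_zero_iff.2 hk
  rw [reEntry_apply, x.map_smul_of_tower, inner_smul_right_eq_smul, inner_smul_left_eq_smul,
    Complex.smul_re, Complex.smul_re, ← RCLike.re_eq_complex_re, inner_self_eq_norm_sq]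
  exact smul_ne_zero (inv_ne_zero (norm_ne_zero_iff.2 hk0))
    (smul_ne_zero (inv_ne_zero hxk) (pow_ne_zero 2 hxk))

lemma eq_zero_of_mem_corner (hq : ‖q‖ = 1) (hx : x ∈ corner u q)
    (h : ∀ v w, ‖v‖ = 1 → ‖w‖ = 1 → ⟪u, v⟫_ℂ = 0 → ⟪q, w⟫_ℂ = 0 → reEntry v w x = 0) : x = 0 := by
  by_contra hx0
  obtain ⟨k, hk⟩ := DFunLike.ne_iff.1 hx0
  set k' := k - ⟪q, k⟫_ℂ • q
  have hk' : x k' ≠ 0 := by rwa [map_sub, map_smul, hx.1, smul_zero, sub_zero]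
  have hk0 : k' ≠ 0 := by rintro h0; exact hk' (by rw [h0, map_zero])
  refine reEntry_inv_norm_smul_ne_zero hk'
    (h _ _ (norm_inv_norm_smul hk') (norm_inv_norm_smul hk0) ?_ ?_)
  · rw [inner_smul_right_eq_smul, hx.2, smul_zero]
  · rw [inner_smul_right_eq_smul, inner_sub_inner_smul hq, smul_zero]

variable [CompleteSpace H] [CompleteSpace K]

lemma adjoint_apply_of_mem_face (hv : ‖v‖ = 1) (hw : ‖w‖ = 1) (hx : x ∈ face v w) :
    x.adjoint v = w := by
  refine eq_of_norm_le_re_inner_eq_norm_sq (𝕜 := ℂ) ?_ ?_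
  · rw [hw, ← hv]
    exact norm_apply_le_of_norm_le_one (by rw [LinearIsometryEquiv.norm_map]; exact hx.1) v
  · rw [ContinuousLinearMap.adjoint_inner_left, hx.2, inner_self_eq_norm_sq, hv, hw]

lemma inner_apply_of_mem_face (hv : ‖v‖ = 1) (hw : ‖w‖ = 1) (hx : x ∈ face v w) (h : H) :
    ⟪v, x h⟫_ℂ = ⟪w, h⟫_ℂ := by
  rw [← ContinuousLinearMap.adjoint_inner_left, adjoint_apply_of_mem_face hv hw hx]

lemma sub_rankOne_mem_corner (hv : ‖v‖ = 1) (hw : ‖w‖ = 1) (hx : x ∈ face v w) :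
    x - rankOne ℂ v w ∈ corner v w := by
  refine ⟨by rw [sub_apply, hx.2, (rankOne_mem_face hv hw).2, sub_self], fun h => ?_⟩
  rw [sub_apply, inner_sub_right, inner_apply_of_mem_face hv hw hx,
    inner_apply_of_mem_face hv hw (rankOne_mem_face hv hw), sub_self]

lemma exists_mem_face_norm_sub_sq_le (hx : ‖x‖ ≤ 1) (hw : ‖w‖ = 1) (hxw : x w ≠ 0) :
    ∃ v : K, ‖v‖ = 1 ∧ ∃ x' ∈ face v w, ‖x - x'‖ ^ 2 ≤ 2 * (1 - ‖x w‖) := by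
  set v := ‖x w‖⁻¹ • x w with hv_def
  have hv : ‖v‖ = 1 := norm_inv_norm_smul hxw
  have hvx : x w = (‖x w‖ : ℂ) • v := by
    rw [Complex.coe_smul, hv_def, smul_inv_smul₀ (norm_ne_zero_iff.2 hxw)]
  set a := x.adjoint v
  have ha : ‖a‖ ≤ 1 :=
    (norm_apply_le_of_norm_le_one (by rwa [LinearIsometryEquiv.norm_map]) v).trans_eq hv
  have haw : ⟪a, w⟫_ℂ = ‖x w‖ := by
    rw [ContinuousLinearMap.adjoint_inner_left]
    nth_rw 1 [hvx]
    rw [inner_smul_right, inner_self_eq_one_of_norm_eq_one hv, mul_one]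
  have sub_apply_eq : ∀ h, (x - rankOne ℂ v a) h = x h - ⟪v, x h⟫_ℂ • v := fun h => by
    rw [sub_apply, InnerProductSpace.rankOne_apply, ContinuousLinearMap.adjoint_inner_left]
  have hcorner : x - rankOne ℂ v a ∈ corner v w := by
    refine ⟨?_, fun h => by rw [sub_apply_eq, inner_sub_inner_smul hv]⟩
    rw [sub_apply, InnerProductSpace.rankOne_apply, haw, ← hvx, sub_self]
  have hnorm : ‖x - rankOne ℂ v a‖ ≤ 1 :=
    ContinuousLinearMap.opNorm_le_bound _ zero_le_one fun h => by
      rw [sub_apply_eq, one_mul]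
      exact (norm_sub_inner_smul_le hv _).trans (norm_apply_le_of_norm_le_one hx h)
  refine ⟨v, hv, _, rankOne_add_mem_face hv hw hcorner hnorm, ?_⟩
  have e : x - (rankOne ℂ v w + (x - rankOne ℂ v a)) = rankOne ℂ v (a - w) := by
    rw [map_sub]; abel
  rw [e, InnerProductSpace.norm_rankOne, hv, one_mul, @norm_sub_sq ℂ, haw, hw,
    RCLike.re_to_complex, Complex.ofReal_re]
  linarith [pow_le_one₀ (n := 2) (norm_nonneg a) ha]

lemma mem_closure_faces (hx : ‖x‖ = 1) :
    x ∈ closure {y : H →L[ℂ] K | ∃ v w, ‖v‖ = 1 ∧ ‖w‖ = 1 ∧ y ∈ face v w} := by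
  refine Metric.mem_closure_iff.2 fun ε hε => ?_
  set δ := min 1 (ε ^ 2 / 2)
  have hδ : 0 < δ := lt_min one_pos (by positivity)
  have hlt : Real.toNNReal (1 - δ) < ‖x‖₊ := by
    rw [Real.toNNReal_lt_iff_lt_coe (sub_nonneg.2 (min_le_left _ _)), coe_nnnorm, hx]
    linarith
  obtain ⟨w, hw, hxw⟩ := x.exists_nnnorm_eq_one_lt_apply_of_lt_opNNNorm hlt
  replace hw : ‖w‖ = 1 := congrArg NNReal.toReal hw
  replace hxw : 1 - δ < ‖x w‖ := (Real.le_coe_toNNReal _).trans_lt (NNReal.coe_lt_coe.2 hxw)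
  obtain ⟨v, hv, x', hx', hdist⟩ := exists_mem_face_norm_sub_sq_le hx.le hw
    (norm_pos_iff.1 (by linarith [min_le_left 1 (ε ^ 2 / 2)]))
  refine ⟨x', ⟨v, w, hv, hw, hx'⟩, ?_⟩
  rw [dist_eq_norm]
  exact lt_of_pow_lt_pow_left₀ 2 hε.le (by linarith [min_le_right 1 (ε ^ 2 / 2)])

lemma exists_isometric_comp_isSelfAdjoint {c : ℝ} (hc : 0 < c) (hy : ∀ h, c * ‖h‖ ≤ ‖y h‖) :
    ∃ (U : H →L[ℂ] K) (S : H →L[ℂ] H), (∀ h, ‖U h‖ = ‖h‖) ∧ IsSelfAdjoint S ∧ y = U ∘L S := by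
  set a := y.adjoint ∘L y
  have ha : 0 ≤ a := a.nonneg_iff_isPositive.2 (ContinuousLinearMap.isPositive_adjoint_comp_self y)
  have inner_a : ∀ h, ⟪a h, h⟫_ℂ = (‖y h‖ ^ 2 : ℝ) := fun h => by
    rw [ContinuousLinearMap.comp_apply, ContinuousLinearMap.adjoint_inner_left,
      inner_self_eq_norm_sq_to_K, Complex.ofReal_pow]
    rfl
  have ha_unit : IsUnit a := by
    refine a.isUnit_of_forall_le_norm_inner_map (c := Real.toNNReal (c ^ 2))
      (Real.toNNReal_pos.2 (sq_pos_of_pos hc)) fun h => ?_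
    rw [inner_a, Complex.norm_real, Real.norm_of_nonneg (sq_nonneg _),
      Real.coe_toNNReal _ (sq_nonneg c), ← mul_pow, mul_comm]
    exact pow_le_pow_left₀ (by positivity) (hy h) 2
  have hS : IsSelfAdjoint (CFC.sqrt a) := .of_nonneg (CFC.sqrt_nonneg a)
  have hSS : CFC.sqrt a * CFC.sqrt a = a := CFC.sqrt_mul_sqrt_self a ha
  obtain ⟨u, hu⟩ : IsUnit (CFC.sqrt a) :=
    ((Commute.refl (CFC.sqrt a)).isUnit_mul_iff.1 (by rwa [hSS])).1
  have norm_y : ∀ h, ‖y h‖ = ‖(u : H →L[ℂ] H) h‖ := fun h => by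
    have e : ⟪a h, h⟫_ℂ = (‖(u : H →L[ℂ] H) h‖ ^ 2 : ℝ) := by
      rw [← hSS, ← hu, mul_apply_eq_comp, ← ContinuousLinearMap.adjoint_inner_right,
        ← ContinuousLinearMap.star_eq_adjoint, hu, hS.star_eq, inner_self_eq_norm_sq_to_K,
        Complex.ofReal_pow]
      rfl
    rw [inner_a, Complex.ofReal_inj] at e
    exact (sq_eq_sq₀ (norm_nonneg _) (norm_nonneg _)).1 e
  refine ⟨y ∘L (↑u⁻¹ : H →L[ℂ] H), u, fun h => ?_, hu ▸ hS, ?_⟩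
  · rw [ContinuousLinearMap.comp_apply, norm_y, ← mul_apply_eq_comp, u.mul_inv, one_apply_eq_self]
  · rw [ContinuousLinearMap.comp_assoc, ← ContinuousLinearMap.mul_def, u.inv_mul]
    rfl

lemma exists_unitary_add_star_eq {S : H →L[ℂ] H} (hS : IsSelfAdjoint S) (hS1 : ‖S‖ ≤ 1) :
    ∃ g ∈ unitary (H →L[ℂ] H), g + star g = S + S := by
  set g := selfAdjoint.unitarySelfAddISMul ⟨S, hS⟩ hS1
  refine ⟨g, g.2, ?_⟩
  have h : (realPart (g : H →L[ℂ] H) : H →L[ℂ] H) = S :=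
    congrArg Subtype.val (selfAdjoint.realPart_unitarySelfAddISMul ⟨S, hS⟩ hS1)
  rw [← two_smul ℝ S, ← h, realPart_apply_coe, smul_inv_smul₀ two_ne_zero]

lemma exists_isometric_add_eq {c : ℝ} (hc : 0 < c) (hy : ∀ h, c * ‖h‖ ≤ ‖y h‖) (hy1 : ‖y‖ ≤ 1) :
    ∃ V₁ V₂ : H →L[ℂ] K, (∀ h, ‖V₁ h‖ = ‖h‖) ∧ (∀ h, ‖V₂ h‖ = ‖h‖) ∧ V₁ + V₂ = y + y := by
  obtain ⟨U, S, hU, hS, rfl⟩ := exists_isometric_comp_isSelfAdjoint hc hy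
  have hS1 : ‖S‖ ≤ 1 := S.opNorm_le_bound zero_le_one fun h => by
    have h2 := (U ∘L S).le_of_opNorm_le hy1 h
    rwa [ContinuousLinearMap.comp_apply, hU] at h2
  obtain ⟨g, hg, hgS⟩ := exists_unitary_add_star_eq hS hS1
  refine ⟨U ∘L g, U ∘L star g, fun h => ?_, fun h => ?_, ?_⟩
  · rw [ContinuousLinearMap.comp_apply, hU, ContinuousLinearMap.norm_map_of_mem_unitary hg]
  · rw [ContinuousLinearMap.comp_apply, hU,
      ContinuousLinearMap.norm_map_of_mem_unitary (Unitary.star_mem hg)]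
  · rw [← ContinuousLinearMap.comp_add, hgS, ContinuousLinearMap.comp_add]

lemma le_norm_add_apply (hv : ‖v‖ = 1) (hw : ‖w‖ = 1) (hV : V ∈ isometricFace v w) (h : H) :
    (1 - ‖x - rankOne ℂ v w‖) * ‖h‖ ≤ ‖(x + V) h‖ := by
  rcases eq_or_ne h 0 with rfl | hh
  · simp
  set y := x - rankOne ℂ v w
  have e : ⟪V h, (x + V) h⟫_ℂ = ⟪V h, y h⟫_ℂ + (‖⟪w, h⟫_ℂ‖ ^ 2 + ‖h‖ ^ 2 : ℝ) := by
    have hVv : ⟪V h, v⟫_ℂ = starRingEnd ℂ ⟪w, h⟫_ℂ := by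
      rw [← inner_apply_of_mem_face hv hw (isometricFace_subset_face v w hV), inner_conj_symm]
    have hx : (x + V) h = y h + ⟪w, h⟫_ℂ • v + V h := by
      simp only [y, add_apply, sub_apply, InnerProductSpace.rankOne_apply, sub_add_cancel]
    rw [hx, inner_add_right, inner_add_right, inner_smul_right, hVv, Complex.mul_conj',
      inner_self_eq_norm_sq_to_K, hV.1, add_assoc]
    push_cast
    rfl
  have hy : ‖⟪V h, y h⟫_ℂ‖ ≤ ‖y‖ * ‖h‖ ^ 2 :=
    calc ‖⟪V h, y h⟫_ℂ‖ ≤ ‖V h‖ * ‖y h‖ := norm_inner_le_norm _ _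
      _ ≤ ‖h‖ * (‖y‖ * ‖h‖) := by rw [hV.1]; gcongr; exact y.le_opNorm h
      _ = ‖y‖ * ‖h‖ ^ 2 := by ring
  have hre := (Complex.re_le_norm _).trans (norm_inner_le_norm (𝕜 := ℂ) (V h) ((x + V) h))
  rw [e, Complex.add_re, Complex.ofReal_re, hV.1] at hre
  have hre' := neg_le_of_abs_le ((Complex.abs_re_le_norm _).trans hy)
  refine le_of_mul_le_mul_left ?_ (norm_pos_iff.2 hh)
  linarith [sq_nonneg ‖⟪w, h⟫_ℂ‖]

lemma exists_isometricFace_add_eq (hv : ‖v‖ = 1) (hw : ‖w‖ = 1) (hx : x ∈ face v w)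
    (hx1 : ‖x - rankOne ℂ v w‖ < 1) (hV : V ∈ isometricFace v w) :
    ∃ V₁ ∈ isometricFace v w, ∃ V₂ ∈ isometricFace v w, V₁ + V₂ = x + V := by
  obtain ⟨y, hy⟩ : ∃ y : H →L[ℂ] K, y + y = x + V :=
    ⟨(2⁻¹ : ℝ) • (x + V), by rw [← two_smul ℝ, smul_inv_smul₀ two_ne_zero]⟩
  have norm_y : ‖y‖ ≤ 1 := by
    have h := norm_add_le x V
    rw [← hy, ← two_smul ℝ, norm_smul, Real.norm_ofNat] at h
    linarith [hx.1, norm_le_one_of_isometric hV.1]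
  have norm_le_apply : ∀ h, (1 - ‖x - rankOne ℂ v w‖) / 2 * ‖h‖ ≤ ‖y h‖ := fun h => by
    have hle := le_norm_add_apply (x := x) hv hw hV h
    rw [← hy, add_apply, ← two_smul ℝ, norm_smul, Real.norm_ofNat] at hle
    linarith
  obtain ⟨V₁, V₂, h₁, h₂, hsum⟩ :=
    exists_isometric_add_eq (half_pos (sub_pos.2 hx1)) norm_le_apply norm_y
  rw [hy] at hsum
  obtain ⟨hV₁, hV₂⟩ := mem_isometricFace_of_add_eq hv hw h₁ h₂
    (by rw [← add_apply, hsum, add_apply, hx.2, hV.2])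
  exact ⟨V₁, hV₁, V₂, hV₂, hsum⟩

/-- Repeatedly splitting `x + V` into two isometries, as in the proof of the Russo-Dye theorem. -/
lemma add_inv_smul_sub_mem_convexHull (hv : ‖v‖ = 1) (hw : ‖w‖ = 1) (hx : x ∈ face v w)
    (hx1 : ‖x - rankOne ℂ v w‖ < 1) (hV : V ∈ isometricFace v w) (n : ℕ) :
    x + (1 / ((n : ℝ) + 1)) • (V - x) ∈ convexHull ℝ (isometricFace v w) := by
  induction n generalizing V with
  | zero => simpa using subset_convexHull ℝ _ hV
  | succ n ih =>
    obtain ⟨V₁, hV₁, V₂, hV₂, hsum⟩ := exists_isometricFace_add_eq hv hw hx hx1 hV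
    have hn : (n : ℝ) + 1 ≠ 0 := by positivity
    have hn' : (n : ℝ) + 1 + 1 ≠ 0 := by positivity
    have hmem := convex_convexHull ℝ (isometricFace v w) (ih hV₁) (subset_convexHull ℝ _ hV₂)
      (a := ((n : ℝ) + 1) / (n + 1 + 1)) (b := 1 / ((n : ℝ) + 1 + 1)) (by positivity)
      (by positivity) (by field_simp)
    convert hmem using 1
    rw [Nat.cast_succ, eq_sub_of_add_eq' hsum.symm]
    match_scalars <;> (field_simp; try ring)

lemma mem_closure_convexHull_of_norm_sub_lt_one (hv : ‖v‖ = 1) (hw : ‖w‖ = 1) (hx : x ∈ face v w)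
    (hx1 : ‖x - rankOne ℂ v w‖ < 1) (hne : (isometricFace v w).Nonempty) :
    x ∈ closure (convexHull ℝ (isometricFace v w)) := by
  obtain ⟨V, hV⟩ := hne
  have hlim : Filter.Tendsto (fun n : ℕ => x + (1 / ((n : ℝ) + 1)) • (V - x)) Filter.atTop
      (nhds x) := by
    simpa using ((tendsto_one_div_add_atTop_nhds_zero_nat (𝕜 := ℝ)).smul_const (V - x)).const_add x
  exact mem_closure_of_tendsto hlim (Filter.Eventually.of_forall
    (add_inv_smul_sub_mem_convexHull hv hw hx hx1 hV))

lemma face_subset_closure_convexHull (hv : ‖v‖ = 1) (hw : ‖w‖ = 1)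
    (hne : (isometricFace v w).Nonempty) :
    face v w ⊆ closure (convexHull ℝ (isometricFace v w)) := by
  intro x hx
  have hc := sub_rankOne_mem_corner hv hw hx
  have hlim : Filter.Tendsto (fun t : ℝ => rankOne ℂ v w + t • (x - rankOne ℂ v w))
      (nhdsWithin 1 (Set.Ico 0 1)) (nhds x) := by
    refine Filter.Tendsto.mono_left ?_ nhdsWithin_le_nhds
    have h : Continuous fun t : ℝ => rankOne ℂ v w + t • (x - rankOne ℂ v w) := by fun_prop
    simpa using h.tendsto 1
  have : (nhdsWithin (1 : ℝ) (Set.Ico 0 1)).NeBot := right_nhdsWithin_Ico_neBot one_pos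
  refine isClosed_closure.mem_of_tendsto hlim (Filter.eventually_of_mem self_mem_nhdsWithin ?_)
  rintro t ⟨ht0, ht1⟩
  have hlt : ‖t • (x - rankOne ℂ v w)‖ < 1 := by
    rw [norm_smul, Real.norm_of_nonneg ht0]
    exact (mul_le_of_le_one_right ht0 (norm_sub_rankOne_le hw hx)).trans_lt ht1
  exact mem_closure_convexHull_of_norm_sub_lt_one hv hw
    (rankOne_add_mem_face hv hw ((corner v w).smul_of_tower_mem t hc) hlt.le)
    (by rwa [add_sub_cancel_left]) hne

end Operator

/-- The contractive functional `ψ` supports the unit ball of `Y` at the image under `Δ` of the face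
`face v w`. -/
structure Supports {H K Y : Type*} [NormedAddCommGroup H] [InnerProductSpace ℂ H]
    [NormedAddCommGroup K] [InnerProductSpace ℂ K] [NormedAddCommGroup Y] [NormedSpace ℝ Y]
    (Δ : (H →L[ℂ] K) → Y) (v : K) (w : H) (ψ : Y →L[ℝ] ℝ) : Prop where
  norm_le_one : ‖ψ‖ ≤ 1
  apply_eq_one : ∀ x ∈ face v w, ψ (Δ x) = 1

section FaceImage

variable {H K Y : Type*} [NormedAddCommGroup H] [InnerProductSpace ℂ H] [NormedAddCommGroup K]
  [InnerProductSpace ℂ K] [NormedAddCommGroup Y] [NormedSpace ℝ Y] {Δ : (H →L[ℂ] K) → Y}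
  {x y z V : H →L[ℂ] K} {v : K} {w : H}

lemma apply_eq_of_apply_inv_norm_smul_eq {h : H}
    (hxy : h ≠ 0 → x (‖h‖⁻¹ • h) = y (‖h‖⁻¹ • h)) : x h = y h := by
  rcases eq_or_ne h 0 with rfl | hh
  · rw [map_zero, map_zero]
  · specialize hxy hh
    rw [x.map_smul_of_tower, y.map_smul_of_tower] at hxy
    exact smul_right_injective K (inv_ne_zero (norm_ne_zero_iff.2 hh)) hxy

lemma eq_combo_of_norm_sub_le {a b c : K} {d r s : ℝ} (hrs : r + s = 1) (hab : ‖a - b‖ = d)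
    (hac : ‖a - c‖ ≤ s * d) (hcb : ‖c - b‖ ≤ r * d) : c = r • a + s • b := by
  let := InnerProductSpace.rclikeToReal ℂ K
  obtain rfl : r = 1 - s := eq_sub_of_add_eq hrs
  subst hab
  have h := norm_sub_le_norm_sub_add_norm_sub a c b
  rw [← AffineMap.lineMap_apply_module]
  refine eq_lineMap_of_dist_eq_mul_of_dist_eq_mul ?_ ?_ <;> simp only [dist_eq_norm] <;> linarith

lemma IsSphereIsometry.convex_image_face (hΔ : IsSphereIsometry Δ) (hv : ‖v‖ = 1)
    (hw : ‖w‖ = 1) : Convex ℝ (Δ '' face v w) := by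
  rw [← sphereStar_rankOne hv hw]
  refine hΔ.convex_image_sphereStar (norm_rankOne_eq_one hv hw) ?_
  rw [sphereStar_rankOne hv hw]
  exact fun x hx y hy => norm_add_eq_two_of_mem_face hv hw hx hy

lemma IsSphereIsometry.neg_mem_face (hΔ : IsSphereIsometry Δ) (hv : ‖v‖ = 1) (hw : ‖w‖ = 1)
    (hx : x ∈ face v w) (hy : ‖y‖ = 1) (h : Δ y = -Δ x) : -y ∈ face v w := by
  have hstar := sphereStar_rankOne hv hw
  rw [← hstar]
  refine hΔ.neg_mem_sphereStar (norm_rankOne_eq_one hv hw) ?_ (hstar ▸ hx) hy h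
  rw [hstar]
  exact fun x hx y hy => norm_add_eq_two_of_mem_face hv hw hx hy

lemma IsSphereIsometry.exists_supports (hΔ : IsSphereIsometry Δ) (hv : ‖v‖ = 1) (hw : ‖w‖ = 1) :
    ∃ ψ : Y →L[ℝ] ℝ, Supports Δ v w ψ := by
  obtain ⟨ψ, hψ, hψ1⟩ := exists_dual_eq_one_of_convex (hΔ.convex_image_face hv hw)
    (Set.forall_mem_image.2 fun x hx => hΔ.norm_map x (norm_eq_one_of_mem_face hv hw hx))
  exact ⟨ψ, hψ, Set.forall_mem_image.1 hψ1⟩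

lemma IsSphereIsometry.apply_neg_of_isometric (hΔ : IsSphereIsometry Δ) (hV1 : ‖V‖ = 1)
    (hV : ∀ h, ‖V h‖ = ‖h‖) : Δ (-V) = -Δ V := by
  obtain ⟨y, hy, hyV⟩ := hΔ.exists_apply_eq_neg hV1
  suffices y = -V by rw [← this, hyV]
  ext h
  refine apply_eq_of_apply_inv_norm_smul_eq fun hh => ?_
  have hw := norm_inv_norm_smul hh
  have hneg := hΔ.neg_mem_face (by rw [hV, hw]) hw ⟨hV1.le, rfl⟩ hy hyV
  rw [neg_apply, ← hneg.2, neg_apply, neg_neg]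

lemma IsSphereIsometry.mem_face_of_apply_eq_combo (hΔ : IsSphereIsometry Δ) (hv : ‖v‖ = 1)
    (hw : ‖w‖ = 1) (hx : x ∈ face v w) (hy : y ∈ face v w) {r s : ℝ} (hr : 0 ≤ r) (hs : 0 ≤ s)
    (hrs : r + s = 1) (hz : ‖z‖ = 1) (h : Δ z = r • Δ x + s • Δ y) : z ∈ face v w := by
  obtain ⟨z', hz', hzz'⟩ := hΔ.convex_image_face hv hw ⟨x, hx, rfl⟩ ⟨y, hy, rfl⟩ hr hs hrs
  rwa [hΔ.eq_of_apply_eq hz (norm_eq_one_of_mem_face hv hw hz') (h.trans hzz'.symm)]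

lemma IsSphereIsometry.apply_eq_of_apply_eq_combo (hΔ : IsSphereIsometry Δ) (hx : ‖x‖ ≤ 1)
    (hy : ‖y‖ ≤ 1) {r s : ℝ} (hr : 0 ≤ r) (hs : 0 ≤ s) (hrs : r + s = 1) (hz : ‖z‖ = 1)
    (h : Δ z = r • Δ x + s • Δ y) {k : H} (hxy : x k = y k) (hxk : ‖x k‖ = ‖k‖) : z k = x k := by
  refine apply_eq_of_apply_inv_norm_smul_eq fun hk => ?_
  have hv : ‖x (‖k‖⁻¹ • k)‖ = 1 := by
    rw [x.map_smul_of_tower, norm_smul, hxk, ← norm_smul, norm_inv_norm_smul hk]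
  exact (hΔ.mem_face_of_apply_eq_combo hv (norm_inv_norm_smul hk) ⟨hx, rfl⟩
    ⟨hy, by rw [x.map_smul_of_tower, y.map_smul_of_tower, hxy]⟩ hr hs hrs hz h).2

lemma IsSphereIsometry.apply_combo_of_split (hΔ : IsSphereIsometry Δ) (hv : ‖v‖ = 1)
    (hw : ‖w‖ = 1) (hx : x ∈ face v w) (hy : y ∈ face v w) {t : ℝ} (ht : ‖x - y‖ ≤ t)
    (hsplit : ∀ h, ∃ h₁ h₂, h₁ + h₂ = h ∧ x h₁ = y h₁ ∧ ‖x h₁‖ = ‖h₁‖ ∧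
      ‖(x - y) h₂‖ = t * ‖h₂‖) {r s : ℝ} (hr : 0 ≤ r) (hs : 0 ≤ s) (hrs : r + s = 1) :
    Δ (r • x + s • y) = r • Δ x + s • Δ y := by
  have hx1 := norm_eq_one_of_mem_face hv hw hx
  have hy1 := norm_eq_one_of_mem_face hv hw hy
  obtain ⟨z, hz, hzΔ⟩ := hΔ.convex_image_face hv hw ⟨x, hx, rfl⟩ ⟨y, hy, rfl⟩ hr hs hrs
  have hz1 := norm_eq_one_of_mem_face hv hw hz
  have hxz : ‖x - z‖ ≤ s * t := by
    have e : Δ x - (r • Δ x + s • Δ y) = s • (Δ x - Δ y) := by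
      rw [eq_sub_of_add_eq hrs]; module
    rw [← hΔ.iso x z hx1 hz1, hzΔ, e, norm_smul, hΔ.iso x y hx1 hy1, Real.norm_of_nonneg hs]
    gcongr
  have hzy : ‖z - y‖ ≤ r * t := by
    have e : r • Δ x + s • Δ y - Δ y = r • (Δ x - Δ y) := by
      rw [eq_sub_of_add_eq' hrs]; module
    rw [← hΔ.iso z y hz1 hy1, hzΔ, e, norm_smul, hΔ.iso x y hx1 hy1, Real.norm_of_nonneg hr]
    gcongr
  rw [← hzΔ]
  congr 1
  ext h
  obtain ⟨h₁, h₂, rfl, hxy, hxh, hxyh⟩ := hsplit h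
  have z_apply_left : z h₁ = x h₁ :=
    hΔ.apply_eq_of_apply_eq_combo hx.1 hy.1 hr hs hrs hz1 hzΔ hxy hxh
  have z_apply_right : z h₂ = r • x h₂ + s • y h₂ := by
    refine eq_combo_of_norm_sub_le hrs hxyh ?_ ?_
    · rw [← mul_assoc, ← sub_apply]
      exact (x - z).le_of_opNorm_le hxz h₂
    · rw [← mul_assoc, ← sub_apply]
      exact (z - y).le_of_opNorm_le hzy h₂
  have combo_apply : ∀ k, (r • x + s • y) k = r • x k + s • y k := fun k => rfl
  rw [map_add, map_add, z_apply_left, z_apply_right, combo_apply, combo_apply, ← hxy, ← add_smul,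
    hrs, one_smul]

lemma IsSphereIsometry.apply_combo_of_isometric (hΔ : IsSphereIsometry Δ) (hw : ‖w‖ = 1)
    (hx : ∀ h, ‖x h‖ = ‖h‖) (hy : ∀ h, ‖y h‖ = ‖h‖) (hxy : x w = y w)
    (hsplit : ∀ h, ∃ h₁ h₂, h₁ + h₂ = h ∧ x h₁ = y h₁ ∧ y h₂ = -x h₂) {r s : ℝ} (hr : 0 ≤ r)
    (hs : 0 ≤ s) (hrs : r + s = 1) : Δ (r • x + s • y) = r • Δ x + s • Δ y := by
  have hx1 := norm_le_one_of_isometric hx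
  have hy1 := norm_le_one_of_isometric hy
  refine hΔ.apply_combo_of_split (by rw [hx, hw]) hw ⟨hx1, rfl⟩ ⟨hy1, hxy.symm⟩ (t := 2)
    ((norm_sub_le x y).trans (by linarith)) (fun h => ?_) hr hs hrs
  obtain ⟨h₁, h₂, hh, h₁xy, h₂xy⟩ := hsplit h
  refine ⟨h₁, h₂, hh, h₁xy, hx h₁, ?_⟩
  rw [sub_apply, h₂xy, sub_neg_eq_add, ← two_smul ℝ, norm_smul, hx, Real.norm_ofNat]

/-- Along a direction `V - rankOne v w` with `V` isometric, all the unit vectors orthogonal to `w`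
move at the same speed. -/
lemma IsSphereIsometry.apply_add_smul_sub_rankOne (hΔ : IsSphereIsometry Δ) (hv : ‖v‖ = 1)
    (hw : ‖w‖ = 1) (hV : V ∈ isometricFace v w) {t : ℝ} (ht : 0 ≤ t) (hx : x ∈ face v w)
    (hy : x + t • (V - rankOne ℂ v w) ∈ face v w) {s : ℝ} (hs : 0 ≤ s) (hs1 : s ≤ 1) :
    Δ (x + (s * t) • (V - rankOne ℂ v w)) =
      (1 - s) • Δ x + s • Δ (x + t • (V - rankOne ℂ v w)) := by
  set d := V - rankOne ℂ v w
  have hd : ‖d‖ ≤ 1 := norm_sub_rankOne_le hw (isometricFace_subset_face v w hV)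
  have e : x + (s * t) • d = (1 - s) • x + s • (x + t • d) := by module
  rw [e]
  refine hΔ.apply_combo_of_split hv hw hx hy (t := t) ?_ (fun h => ?_) (sub_nonneg.2 hs1) hs
    (sub_add_cancel 1 s)
  · rw [sub_add_cancel_left, norm_neg, norm_smul, Real.norm_of_nonneg ht]
    exact mul_le_of_le_one_right ht hd
  · have d_apply : d w = 0 := by
      simp only [d, sub_apply, hV.2, (rankOne_mem_face hv hw).2, sub_self]
    refine ⟨⟪w, h⟫_ℂ • w, h - ⟪w, h⟫_ℂ • w, add_sub_cancel _ _, ?_, ?_, ?_⟩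
    · rw [add_apply, smul_apply, map_smul d, d_apply, smul_zero, smul_zero, add_zero]
    · rw [map_smul, hx.2, norm_smul, norm_smul, hv, hw]
    · rw [sub_add_cancel_left, neg_apply, norm_neg, smul_apply, norm_smul,
        Real.norm_of_nonneg ht, sub_apply, InnerProductSpace.rankOne_apply,
        inner_sub_inner_smul hw, zero_smul, sub_zero, hV.1]

end FaceImage

section OrthogonalAdditivity

variable {H K Y : Type*} [NormedAddCommGroup H] [InnerProductSpace ℂ H] [NormedAddCommGroup K]
  [InnerProductSpace ℂ K] [NormedAddCommGroup Y] [NormedSpace ℝ Y] {Δ : (H →L[ℂ] K) → Y}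
  {V : H →L[ℂ] K} {w w₁ w₂ : H}

lemma rankOne_apply_of_inner_eq_zero {h : H} (v : K) (hwh : ⟪w, h⟫_ℂ = 0) :
    rankOne ℂ v w h = 0 := by
  rw [InnerProductSpace.rankOne_apply, hwh, zero_smul]

lemma norm_two_smul_rankOne_sub_apply (hV : ∀ h, ‖V h‖ = ‖h‖) (hw : ‖w‖ = 1) (h : H) :
    ‖((2 : ℝ) • rankOne ℂ (V w) w - V) h‖ = ‖h‖ := by
  have e : ((2 : ℝ) • rankOne ℂ (V w) w - V) h = V (⟪w, h⟫_ℂ • w + -(h - ⟪w, h⟫_ℂ • w)) := by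
    rw [sub_apply, smul_apply, InnerProductSpace.rankOne_apply, map_add, map_neg, map_sub, map_smul]
    module
  rw [e, hV, ← sq_eq_sq₀ (norm_nonneg _) (norm_nonneg _), norm_smul_add_sq hw, norm_neg,
    norm_inner_sq_add_norm_sub_sq hw]
  rw [inner_neg_right, inner_sub_inner_smul hw, neg_zero]

lemma two_smul_rankOne_sub_apply_self (hw : ‖w‖ = 1) :
    ((2 : ℝ) • rankOne ℂ (V w) w - V) w = V w := by
  rw [sub_apply, smul_apply, InnerProductSpace.rankOne_apply,
    inner_self_eq_one_of_norm_eq_one hw, one_smul, two_smul, add_sub_cancel_right]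

lemma IsSphereIsometry.two_smul_apply_rankOne (hΔ : IsSphereIsometry Δ)
    (hV : ∀ h, ‖V h‖ = ‖h‖) (hw : ‖w‖ = 1) :
    (2 : ℝ) • Δ (rankOne ℂ (V w) w) = Δ V + Δ ((2 : ℝ) • rankOne ℂ (V w) w - V) := by
  set e := rankOne ℂ (V w) w
  have hV' : V ∈ isometricFace (V w) w := ⟨hV, rfl⟩
  have hR : (2 : ℝ) • e - V ∈ face (V w) w := ⟨norm_le_one_of_isometric
    (norm_two_smul_rankOne_sub_apply hV hw), two_smul_rankOne_sub_apply_self hw⟩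
  have eV : (2 : ℝ) • e - V + (2 : ℝ) • (V - e) = V := by module
  have ee : (2 : ℝ) • e - V + (2⁻¹ * 2 : ℝ) • (V - e) = e := by module
  have h := hΔ.apply_add_smul_sub_rankOne (by rw [hV, hw]) hw hV' zero_le_two hR
    (by rw [eV]; exact isometricFace_subset_face _ _ hV') (s := 2⁻¹) (by norm_num) (by norm_num)
  rw [eV, ee] at h
  rw [h]
  module

lemma IsSphereIsometry.apply_neg_rankOne (hΔ : IsSphereIsometry Δ)
    (hV : ∀ h, ‖V h‖ = ‖h‖) (hw : ‖w‖ = 1) :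
    Δ (-rankOne ℂ (V w) w) = -Δ (rankOne ℂ (V w) w) := by
  have apply_neg : ∀ U : H →L[ℂ] K, (∀ h, ‖U h‖ = ‖h‖) → Δ (-U) = -Δ U := fun U hU =>
    hΔ.apply_neg_of_isometric
      (norm_eq_one_of_norm_apply (norm_le_one_of_isometric hU) hw (by rw [hU, hw])) hU
  have h₁ := hΔ.two_smul_apply_rankOne hV hw
  have h₂ := hΔ.two_smul_apply_rankOne (V := -V) (fun h => by rw [neg_apply, norm_neg, hV]) hw
  have e : (2 : ℝ) • -rankOne ℂ (V w) w - -V = -((2 : ℝ) • rankOne ℂ (V w) w - V) := by module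
  rw [neg_apply, map_neg, neg_apply, e, apply_neg V hV,
    apply_neg _ (norm_two_smul_rankOne_sub_apply hV hw), ← neg_add, ← h₁, ← smul_neg] at h₂
  exact smul_right_injective Y (two_ne_zero' ℝ) h₂

lemma IsSphereIsometry.apply_combo_sub_two_smul_rankOne (hΔ : IsSphereIsometry Δ)
    (hV : ∀ h, ‖V h‖ = ‖h‖) (hw₁ : ‖w₁‖ = 1) (hw₂ : ‖w₂‖ = 1) (hw : ⟪w₂, w₁⟫_ℂ = 0) {r s : ℝ}
    (hr : 0 ≤ r) (hs : 0 ≤ s) (hrs : r + s = 1) :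
    Δ (r • V + s • (V - (2 : ℝ) • rankOne ℂ (V w₂) w₂)) =
      r • Δ V + s • Δ (V - (2 : ℝ) • rankOne ℂ (V w₂) w₂) := by
  have sub_apply_eq : ∀ h, ⟪w₂, h⟫_ℂ = 0 → V h = (V - (2 : ℝ) • rankOne ℂ (V w₂) w₂) h :=
    fun h hh => by
      rw [sub_apply, smul_apply, rankOne_apply_of_inner_eq_zero _ hh, smul_zero, sub_zero]
  refine hΔ.apply_combo_of_isometric hw₁ hV (fun h => ?_) (sub_apply_eq w₁ hw)
    (fun h => ⟨h - ⟪w₂, h⟫_ℂ • w₂, ⟪w₂, h⟫_ℂ • w₂, sub_add_cancel _ _,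
      sub_apply_eq _ (inner_sub_inner_smul hw₂ h), ?_⟩) hr hs hrs
  · rw [← neg_sub, neg_apply, norm_neg, norm_two_smul_rankOne_sub_apply hV hw₂]
  · rw [map_smul, map_smul, ← neg_sub, neg_apply, two_smul_rankOne_sub_apply_self hw₂, smul_neg]

lemma IsSphereIsometry.apply_combo_two_smul_add_rankOne_sub (hΔ : IsSphereIsometry Δ)
    (hV : ∀ h, ‖V h‖ = ‖h‖) (hw₁ : ‖w₁‖ = 1) (hw₂ : ‖w₂‖ = 1) (hw : ⟪w₁, w₂⟫_ℂ = 0) {A : H →L[ℂ] K}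
    (hA : ∀ h, ‖A h‖ = ‖h‖)
    (hAV : A = (2 : ℝ) • (rankOne ℂ (V w₁) w₁ + rankOne ℂ (V w₂) w₂) - V)
    {r s : ℝ} (hr : 0 ≤ r) (hs : 0 ≤ s) (hrs : r + s = 1) :
    Δ (r • V + s • A) = r • Δ V + s • Δ A := by
  have apply_eq : ∀ h, A h = (2 : ℝ) • (⟪w₁, h⟫_ℂ • V w₁ + ⟪w₂, h⟫_ℂ • V w₂) - V h := fun h => by
    rw [hAV]; rfl
  have hw' := inner_eq_zero_symm.1 hw
  have hA₁ : A w₁ = V w₁ := by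
    rw [apply_eq, inner_self_eq_one_of_norm_eq_one hw₁, hw']; module
  have hA₂ : A w₂ = V w₂ := by
    rw [apply_eq, inner_self_eq_one_of_norm_eq_one hw₂, hw]; module
  refine hΔ.apply_combo_of_isometric hw₁ hV hA hA₁.symm
    (fun h => ⟨⟪w₁, h⟫_ℂ • w₁ + ⟪w₂, h⟫_ℂ • w₂, h - (⟪w₁, h⟫_ℂ • w₁ + ⟪w₂, h⟫_ℂ • w₂),
      add_sub_cancel _ _, ?_, ?_⟩) hr hs hrs
  · simp only [map_add, map_smul, hA₁, hA₂]
  · rw [map_sub, map_sub, apply_eq h]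
    simp only [map_add, map_smul, hA₁, hA₂]
    module

lemma neg_two_smul_rankOne_sub_apply (hw : ⟪w₁, w₂⟫_ℂ = 0) :
    (-((2 : ℝ) • rankOne ℂ (V w₁) w₁ - V)) w₂ = V w₂ := by
  rw [neg_sub, sub_apply, smul_apply, rankOne_apply_of_inner_eq_zero _ hw, smul_zero, sub_zero]

lemma two_smul_rankOne_sub_neg :
    (2 : ℝ) • rankOne ℂ (V w₂) w₂ - -((2 : ℝ) • rankOne ℂ (V w₁) w₁ - V) =
      (2 : ℝ) • (rankOne ℂ (V w₁) w₁ + rankOne ℂ (V w₂) w₂) - V := by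
  module

lemma norm_two_smul_add_rankOne_sub_apply (hV : ∀ h, ‖V h‖ = ‖h‖) (hw₁ : ‖w₁‖ = 1)
    (hw₂ : ‖w₂‖ = 1) (hw : ⟪w₁, w₂⟫_ℂ = 0) (h : H) :
    ‖((2 : ℝ) • (rankOne ℂ (V w₁) w₁ + rankOne ℂ (V w₂) w₂) - V) h‖ = ‖h‖ := by
  rw [← two_smul_rankOne_sub_neg, ← neg_two_smul_rankOne_sub_apply hw]
  exact norm_two_smul_rankOne_sub_apply
    (fun h => by rw [neg_apply, norm_neg, norm_two_smul_rankOne_sub_apply hV hw₁]) hw₂ h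

lemma IsSphereIsometry.two_smul_apply_rankOne_of_inner_eq_zero (hΔ : IsSphereIsometry Δ)
    (hV : ∀ h, ‖V h‖ = ‖h‖) (hw₁ : ‖w₁‖ = 1) (hw₂ : ‖w₂‖ = 1) (hw : ⟪w₁, w₂⟫_ℂ = 0) :
    (2 : ℝ) • Δ (rankOne ℂ (V w₂) w₂) =
      Δ ((2 : ℝ) • (rankOne ℂ (V w₁) w₁ + rankOne ℂ (V w₂) w₂) - V) -
        Δ ((2 : ℝ) • rankOne ℂ (V w₁) w₁ - V) := by
  have hB := norm_two_smul_rankOne_sub_apply hV hw₁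
  have hBw := neg_two_smul_rankOne_sub_apply (V := V) hw
  have h := hΔ.two_smul_apply_rankOne (V := -((2 : ℝ) • rankOne ℂ (V w₁) w₁ - V))
    (fun h => by rw [neg_apply, norm_neg, hB]) hw₂
  rwa [hBw, two_smul_rankOne_sub_neg, hΔ.apply_neg_of_isometric (norm_eq_one_of_norm_apply
    (norm_le_one_of_isometric hB) hw₁ (by rw [hB, hw₁])) hB, neg_add_eq_sub] at h

lemma IsSphereIsometry.apply_combo_three (hΔ : IsSphereIsometry Δ) {v : K} (hv : ‖v‖ = 1)
    (hw : ‖w‖ = 1) {A B : H →L[ℂ] K} (hV : V ∈ face v w) (hA : A ∈ face v w)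
    (hB : B ∈ isometricFace v w) (hVB : V + B = (2 : ℝ) • rankOne ℂ v w)
    (hVA : ∀ {r s : ℝ}, 0 ≤ r → 0 ≤ s → r + s = 1 → Δ (r • V + s • A) = r • Δ V + s • Δ A)
    (hAB : ∀ {r s : ℝ}, 0 ≤ r → 0 ≤ s → r + s = 1 → Δ (r • A + s • B) = r • Δ A + s • Δ B)
    {s : ℝ} (hs : 0 ≤ s) (hs1 : s ≤ 1) :
    Δ ((1 / 2 : ℝ) • V + ((1 - s) / 2) • B + (s / 2) • A) =
      (1 / 2 : ℝ) • Δ V + ((1 - s) / 2) • Δ B + (s / 2) • Δ A := by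
  have hs2 : 0 < 2 - s := by linarith
  have hr : 0 ≤ 1 - s / 2 := by linarith
  have hs' : 0 ≤ s / 2 := by linarith
  obtain ⟨e, he⟩ : ∃ e, e = rankOne ℂ v w := ⟨_, rfl⟩
  rw [← he] at hVB
  obtain rfl : V = (2 : ℝ) • e - B := eq_sub_of_add_eq hVB
  obtain ⟨x, hx⟩ : ∃ x, x = (1 - s / 2) • ((2 : ℝ) • e - B) + (s / 2) • A := ⟨_, rfl⟩
  have hxf : x ∈ face v w := hx ▸ convex_face v w hV hA hr hs' (by ring)
  have hy : x + (2 - s) • (B - e) = (s / 2) • A + (1 - s / 2) • B := by rw [hx]; module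
  have hyf : x + (2 - s) • (B - e) ∈ face v w :=
    hy ▸ convex_face v w hA (isometricFace_subset_face v w hB) hs' hr (by ring)
  have hz : x + ((1 - s) / (2 - s) * (2 - s)) • (B - e) =
      (1 / 2 : ℝ) • ((2 : ℝ) • e - B) + ((1 - s) / 2) • B + (s / 2) • A := by
    rw [div_mul_cancel₀ _ hs2.ne', hx]; module
  have key := hΔ.apply_add_smul_sub_rankOne hv hw hB hs2.le hxf (he ▸ hyf)
    (div_nonneg (sub_nonneg.2 hs1) hs2.le) ((div_le_one hs2).2 (by linarith))
  rw [← he, hz, hy, hx, hVA hr hs' (by ring), hAB hs' hr (by ring)] at key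
  rw [key]
  match_scalars <;> field_simp <;> ring

lemma IsSphereIsometry.apply_rankOne_add_smul_rankOne (hΔ : IsSphereIsometry Δ)
    (hV : ∀ h, ‖V h‖ = ‖h‖) (hw₁ : ‖w₁‖ = 1) (hw₂ : ‖w₂‖ = 1) (hw : ⟪w₁, w₂⟫_ℂ = 0)
    {s : ℝ} (hs : 0 ≤ s) (hs1 : s ≤ 1) :
    Δ (rankOne ℂ (V w₁) w₁ + s • rankOne ℂ (V w₂) w₂) =
      Δ (rankOne ℂ (V w₁) w₁) + s • Δ (rankOne ℂ (V w₂) w₂) := by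
  have hw' := inner_eq_zero_symm.1 hw
  have hB := norm_two_smul_rankOne_sub_apply hV hw₁
  have hBw₁ := two_smul_rankOne_sub_apply_self (V := V) hw₁
  have hΔ₁ := hΔ.two_smul_apply_rankOne hV hw₁
  have hA := norm_two_smul_add_rankOne_sub_apply hV hw₁ hw₂ hw
  have hΔ₂ := hΔ.two_smul_apply_rankOne_of_inner_eq_zero hV hw₁ hw₂ hw
  obtain ⟨A, hAV⟩ :
    ∃ A, A = (2 : ℝ) • (rankOne ℂ (V w₁) w₁ + rankOne ℂ (V w₂) w₂) - V := ⟨_, rfl⟩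
  rw [← hAV] at hA hΔ₂
  have hAw₁ : A w₁ = V w₁ := by
    rw [hAV, smul_add, add_sub_right_comm, add_apply, hBw₁, smul_apply,
      rankOne_apply_of_inner_eq_zero _ hw', smul_zero, add_zero]
  have hAw₂ : A w₂ = V w₂ := by
    rw [hAV, smul_add, add_sub_assoc, add_apply, two_smul_rankOne_sub_apply_self hw₂, smul_apply,
      rankOne_apply_of_inner_eq_zero _ hw, smul_zero, zero_add]
  have hAB : A - (2 : ℝ) • rankOne ℂ (A w₂) w₂ = (2 : ℝ) • rankOne ℂ (V w₁) w₁ - V := by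
    rw [hAw₂, hAV]; module
  have key := hΔ.apply_combo_three (by rw [hV, hw₁]) hw₁ ⟨norm_le_one_of_isometric hV, rfl⟩
    ⟨norm_le_one_of_isometric hA, hAw₁⟩ ⟨hB, hBw₁⟩ (add_sub_cancel _ _)
    (hΔ.apply_combo_two_smul_add_rankOne_sub hV hw₁ hw₂ hw hA hAV)
    (hAB ▸ hΔ.apply_combo_sub_two_smul_rankOne hA hw₁ hw₂ hw') hs hs1
  have e : rankOne ℂ (V w₁) w₁ + s • rankOne ℂ (V w₂) w₂ = (1 / 2 : ℝ) • V +
      ((1 - s) / 2) • ((2 : ℝ) • rankOne ℂ (V w₁) w₁ - V) + (s / 2) • A := by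
    rw [hAV]; module
  rw [e, key, ← inv_smul_smul₀ (two_ne_zero' ℝ) (Δ (rankOne ℂ (V w₁) w₁)), hΔ₁,
    ← inv_smul_smul₀ (two_ne_zero' ℝ) (Δ (rankOne ℂ (V w₂) w₂)), hΔ₂]
  module

end OrthogonalAdditivity

section RankOneApproximation

variable {H K : Type*} [NormedAddCommGroup H] [InnerProductSpace ℂ H] [NormedAddCommGroup K]
  [InnerProductSpace ℂ K] {u v a : K} {q w l : H} {x y : H →L[ℂ] K}

lemma rankOne_smul_smul (r s : ℝ) (a : K) (l : H) :
    rankOne ℂ (r • a) (s • l) = (r * s) • rankOne ℂ a l := by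
  ext h
  rw [InnerProductSpace.rankOne_apply, smul_apply, InnerProductSpace.rankOne_apply,
    inner_smul_left_eq_smul, smul_comm, smul_assoc, smul_smul]

lemma rankOne_mem_corner (hua : ⟪u, a⟫_ℂ = 0) (hlq : ⟪l, q⟫_ℂ = 0) :
    rankOne ℂ a l ∈ corner u q :=
  ⟨rankOne_apply_of_inner_eq_zero a hlq, fun h => by
    rw [InnerProductSpace.rankOne_apply, inner_smul_right, hua, mul_zero]⟩

lemma norm_le_of_mem_corner (hw : ‖w‖ = 1) (hx : x ∈ corner v w) {C : ℝ} (hC : 0 ≤ C)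
    (h : ∀ k, ⟪w, k⟫_ℂ = 0 → ‖x k‖ ≤ C * ‖k‖) : ‖x‖ ≤ C := by
  refine x.opNorm_le_bound hC fun k => ?_
  have e : x (k - ⟪w, k⟫_ℂ • w) = x k := by rw [map_sub, map_smul, hx.1, smul_zero, sub_zero]
  rw [← e]
  exact (h _ (inner_sub_inner_smul hw k)).trans
    (mul_le_mul_of_nonneg_left (norm_sub_inner_smul_le hw k) hC)

/-- Subtracting this operator of rank one from `y` leaves the Schur complement of the entry
`⟪v, y w⟫`. -/
lemma rankOne_sub_mem_corner [CompleteSpace H] [CompleteSpace K] (hvw : ⟪v, y w⟫_ℂ ≠ 0) :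
    rankOne ℂ ((⟪v, y w⟫_ℂ)⁻¹ • y w) (y.adjoint v) - y ∈ corner v w := by
  refine ⟨?_, fun h => ?_⟩
  · rw [sub_apply, InnerProductSpace.rankOne_apply, ContinuousLinearMap.adjoint_inner_left,
      smul_inv_smul₀ hvw, sub_self]
  · rw [sub_apply, InnerProductSpace.rankOne_apply, ContinuousLinearMap.adjoint_inner_left,
      inner_sub_right, inner_smul_right, inner_smul_right, inv_mul_cancel₀ hvw, mul_one, sub_self]

lemma norm_rankOne_sub_le [CompleteSpace H] [CompleteSpace K] (hv : ‖v‖ = 1) (hw : ‖w‖ = 1)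
    (hyw : ‖y w‖ ≤ 9 / 16) (hvw : 7 / 16 ≤ ‖⟪v, y w⟫_ℂ‖)
    (hy : ∀ k, ⟪w, k⟫_ℂ = 0 → ‖y k‖ ≤ 1 / 16 * ‖k‖) :
    ‖rankOne ℂ ((⟪v, y w⟫_ℂ)⁻¹ • y w) (y.adjoint v) - y‖ ≤ 1 / 2 := by
  have hvw0 : 0 < ‖⟪v, y w⟫_ℂ‖ := by linarith
  refine norm_le_of_mem_corner hw (rankOne_sub_mem_corner (norm_pos_iff.1 hvw0)) (by norm_num)
    fun k hk => ?_
  have hcol : ‖(⟪v, y w⟫_ℂ)⁻¹ • y w‖ ≤ 9 / 7 := by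
    rw [norm_smul, norm_inv, inv_mul_le_iff₀ hvw0]
    linarith
  have hrow := (norm_inner_le_of_norm_eq_one hv (y k)).trans (hy k hk)
  rw [sub_apply, InnerProductSpace.rankOne_apply, ContinuousLinearMap.adjoint_inner_left]
  refine (norm_sub_le _ _).trans ?_
  rw [norm_smul]
  have h := mul_le_mul hrow hcol (norm_nonneg _) (by positivity)
  linarith [hy k hk, norm_nonneg k]

lemma inner_add_smul_rankOne (hv : ‖v‖ = 1) (hw : ‖w‖ = 1) (x : H →L[ℂ] K) (c : ℝ) :
    ⟪v, (x + c • rankOne ℂ v w) w⟫_ℂ = ⟪v, x w⟫_ℂ + c := by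
  rw [add_apply, smul_apply, (rankOne_mem_face hv hw).2, inner_add_right, inner_smul_right_eq_smul,
    inner_self_eq_one_of_norm_eq_one hv, Complex.real_smul, mul_one]

lemma norm_add_smul_rankOne_le (hv : ‖v‖ = 1) (hw : ‖w‖ = 1) (hx : ‖x‖ ≤ 1 / 16) {c : ℝ}
    (hc : |c| = 1 / 2) : ‖x + c • rankOne ℂ v w‖ ≤ 9 / 16 := by
  refine (norm_add_le _ _).trans ?_
  rw [norm_smul, norm_rankOne_eq_one hv hw, Real.norm_eq_abs, hc]
  linarith

lemma le_norm_inner_add_smul_rankOne (hv : ‖v‖ = 1) (hw : ‖w‖ = 1) (hx : ‖x‖ ≤ 1 / 16) {c : ℝ}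
    (hc : |c| = 1 / 2) : 7 / 16 ≤ ‖⟪v, (x + c • rankOne ℂ v w) w⟫_ℂ‖ := by
  have hxw : ‖x w‖ ≤ 1 / 16 := by simpa only [hw, mul_one] using x.le_of_opNorm_le hx w
  have h := norm_sub_le (⟪v, x w⟫_ℂ + c) ⟪v, x w⟫_ℂ
  rw [add_sub_cancel_left, Complex.norm_real, Real.norm_eq_abs, hc] at h
  rw [inner_add_smul_rankOne hv hw]
  linarith [norm_inner_le_of_norm_eq_one hv (x w)]

lemma norm_rankOne_sub_le_of_eq_add [CompleteSpace H] [CompleteSpace K] (hv : ‖v‖ = 1)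
    (hw : ‖w‖ = 1) (hx : ‖x‖ ≤ 1 / 16) {c : ℝ} (hc : |c| = 1 / 2)
    (hy : y = x + c • rankOne ℂ v w) :
    ‖rankOne ℂ ((⟪v, y w⟫_ℂ)⁻¹ • y w) (y.adjoint v) - x‖ ≤ 1 / 2 := by
  have hc0 : c ≠ 0 := by rintro rfl; norm_num at hc
  have hvw : 7 / 16 ≤ ‖⟪v, y w⟫_ℂ‖ := hy ▸ le_norm_inner_add_smul_rankOne hv hw hx hc
  have hyw : ‖y w‖ ≤ 9 / 16 := by
    simpa only [hw, mul_one] using y.le_of_opNorm_le (hy ▸ norm_add_smul_rankOne_le hv hw hx hc) w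
  have hnorm := norm_rankOne_sub_le hv hw hyw hvw fun k hk => by
    rw [hy, add_apply, smul_apply, rankOne_apply_of_inner_eq_zero v hk, smul_zero, add_zero]
    exact x.le_of_opNorm_le hx k
  have hmem := rankOne_sub_mem_corner (norm_pos_iff.1 (by linarith : 0 < ‖⟪v, y w⟫_ℂ‖))
  set r := rankOne ℂ ((⟪v, y w⟫_ℂ)⁻¹ • y w) (y.adjoint v) - y with hr
  have e : rankOne ℂ ((⟪v, y w⟫_ℂ)⁻¹ • y w) (y.adjoint v) - x =
      c • (rankOne ℂ v w + c⁻¹ • r) := by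
    rw [smul_add, smul_inv_smul₀ hc0, eq_add_of_sub_eq' hr.symm, sub_eq_iff_eq_add, hy]; abel
  have hface := rankOne_add_mem_face hv hw (Submodule.smul_of_tower_mem _ c⁻¹ hmem) (by
    rw [norm_smul, norm_inv, Real.norm_eq_abs, hc]; linarith)
  rw [e, norm_smul, Real.norm_eq_abs, hc]
  linarith [hface.1]

lemma exists_rankOne_norm_sub_le [CompleteSpace H] [CompleteSpace K] (hv : ‖v‖ = 1)
    (hw : ‖w‖ = 1) (huv : ⟪u, v⟫_ℂ = 0) (hqw : ⟪q, w⟫_ℂ = 0) (hx : x ∈ corner u q)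
    (hx1 : ‖x‖ ≤ 1 / 16) {c : ℝ} (hc : |c| = 1 / 2) :
    ∃ (a : K) (l : H), ⟪u, a⟫_ℂ = 0 ∧ ⟪q, l⟫_ℂ = 0 ∧ ‖a‖ * ‖l‖ ≤ 1 ∧
      reEntry v w (rankOne ℂ a l) = reEntry v w x + c ∧ ‖rankOne ℂ a l - x‖ ≤ 1 / 2 := by
  obtain ⟨y, hy⟩ : ∃ y, y = x + c • rankOne ℂ v w := ⟨_, rfl⟩
  have hyC : y ∈ corner u q := hy ▸ add_mem hx
    (Submodule.smul_of_tower_mem _ c (rankOne_mem_corner huv (inner_eq_zero_symm.1 hqw)))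
  have hy1 : ‖y‖ ≤ 9 / 16 := hy ▸ norm_add_smul_rankOne_le hv hw hx1 hc
  have hvw : 7 / 16 ≤ ‖⟪v, y w⟫_ℂ‖ := hy ▸ le_norm_inner_add_smul_rankOne hv hw hx1 hc
  have hvw0 : 0 < ‖⟪v, y w⟫_ℂ‖ := by linarith
  refine ⟨(⟪v, y w⟫_ℂ)⁻¹ • y w, y.adjoint v, ?_, ?_, ?_, ?_,
    norm_rankOne_sub_le_of_eq_add hv hw hx1 hc hy⟩
  · rw [inner_smul_right, hyC.2, mul_zero]
  · rw [ContinuousLinearMap.adjoint_inner_right, hyC.1, inner_zero_left]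
  · have hcol : ‖y w‖ ≤ 9 / 16 := by simpa only [hw, mul_one] using y.le_of_opNorm_le hy1 w
    have hrow : ‖y.adjoint v‖ ≤ 9 / 16 := by
      simpa only [hv, mul_one] using
        y.adjoint.le_of_opNorm_le ((LinearIsometryEquiv.norm_map _ y).trans_le hy1) v
    rw [norm_smul, norm_inv, mul_assoc, inv_mul_le_iff₀ hvw0]
    linarith [mul_le_mul hcol hrow (norm_nonneg _) (by norm_num)]
  · have hentry : rankOne ℂ ((⟪v, y w⟫_ℂ)⁻¹ • y w) (y.adjoint v) w = y w :=
      sub_eq_zero.1 (rankOne_sub_mem_corner (norm_pos_iff.1 hvw0)).1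
    rw [reEntry_apply, hentry, hy, inner_add_smul_rankOne hv hw, Complex.add_re,
      Complex.ofReal_re, reEntry_apply]

end RankOneApproximation

section Functionals

variable {H K Y : Type*} [NormedAddCommGroup H] [InnerProductSpace ℂ H] [NormedAddCommGroup K]
  [InnerProductSpace ℂ K] [NormedAddCommGroup Y] [NormedSpace ℝ Y] {Δ : (H →L[ℂ] K) → Y}
  {ψ : Y →L[ℝ] ℝ} {u v a : K} {q w l : H} {x y : H →L[ℂ] K}

lemma Supports.abs_apply_sub_le (hψ : Supports Δ v w ψ) (hΔ : IsSphereIsometry Δ) (hx : ‖x‖ = 1)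
    (hy : ‖y‖ = 1) : |ψ (Δ x) - ψ (Δ y)| ≤ ‖x - y‖ := by
  rw [← map_sub, ← hΔ.iso x y hx hy, ← Real.norm_eq_abs]
  exact (ψ.le_of_opNorm_le hψ.norm_le_one _).trans_eq (one_mul _)

lemma norm_rankOne_add_eq_one (hu : ‖u‖ = 1) (hq : ‖q‖ = 1) (hy : y ∈ corner u q)
    (hy1 : ‖y‖ ≤ 1) : ‖rankOne ℂ u q + y‖ = 1 :=
  norm_eq_one_of_mem_face hu hq (rankOne_add_mem_face hu hq hy hy1)

lemma IsSphereIsometry.apply_rankOne_add_smul_rankOne_of_inner_eq_zero (hΔ : IsSphereIsometry Δ)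
    (J : H →ₗᵢ[ℂ] K) (hu : ‖u‖ = 1) (hq : ‖q‖ = 1) (hv : ‖v‖ = 1) (hw : ‖w‖ = 1)
    (huv : ⟪u, v⟫_ℂ = 0) (hqw : ⟪q, w⟫_ℂ = 0) {s : ℝ} (hs : 0 ≤ s) (hs1 : s ≤ 1) :
    Δ (rankOne ℂ u q + s • rankOne ℂ v w) = Δ (rankOne ℂ u q) + s • Δ (rankOne ℂ v w) := by
  obtain ⟨V, rfl, rfl⟩ := exists_linearIsometry_of_orthonormal_pair J hq hw hqw hu hv huv
  exact hΔ.apply_rankOne_add_smul_rankOne (V := V.toContinuousLinearMap) V.norm_map hq hw hqw hs hs1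

lemma Supports.apply_rankOne_of_inner_eq_zero (hψ : Supports Δ v w ψ) (hΔ : IsSphereIsometry Δ)
    (J : H →ₗᵢ[ℂ] K) (hu : ‖u‖ = 1) (hq : ‖q‖ = 1) (hv : ‖v‖ = 1) (hw : ‖w‖ = 1)
    (huv : ⟪u, v⟫_ℂ = 0) (hqw : ⟪q, w⟫_ℂ = 0) : ψ (Δ (rankOne ℂ u q)) = 0 := by
  have hsum := hΔ.apply_rankOne_add_smul_rankOne_of_inner_eq_zero J hv hw hu hq
    (inner_eq_zero_symm.1 huv) (inner_eq_zero_symm.1 hqw) zero_le_one le_rfl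
  rw [one_smul, one_smul] at hsum
  have h := hψ.apply_eq_one _ (rankOne_add_mem_face hv hw
    (rankOne_mem_corner (inner_eq_zero_symm.1 huv) hqw) (norm_rankOne_eq_one hu hq).le)
  rwa [hsum, map_add, hψ.apply_eq_one _ (rankOne_mem_face hv hw), add_eq_left] at h

lemma Supports.mul_reEntry_rankOne_le (hψ : Supports Δ v w ψ) (hΔ : IsSphereIsometry Δ)
    (J : H →ₗᵢ[ℂ] K) (hu : ‖u‖ = 1) (hq : ‖q‖ = 1) (hv : ‖v‖ = 1) (hw : ‖w‖ = 1)
    (huv : ⟪u, v⟫_ℂ = 0) (hqw : ⟪q, w⟫_ℂ = 0) {v' : K} {w' : H} (hv' : ‖v'‖ = 1) (hw' : ‖w'‖ = 1)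
    (huv' : ⟪u, v'⟫_ℂ = 0) (hqw' : ⟪q, w'⟫_ℂ = 0) {t : ℝ} (ht : 0 ≤ t) (ht' : t ≤ 1 / 8) :
    t * reEntry v w (rankOne ℂ v' w') ≤ t * ψ (Δ (rankOne ℂ v' w')) + 4 * t ^ 2 := by
  have apply_zero := hψ.apply_rankOne_of_inner_eq_zero hΔ J hu hq hv hw huv hqw
  have norm_smul_le : ∀ {a : K} {l : H} {r : ℝ}, ‖a‖ = 1 → ‖l‖ = 1 → 0 ≤ r → r ≤ 1 →
      ‖r • rankOne ℂ a l‖ ≤ 1 := fun ha hl hr hr1 => by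
    rw [norm_smul, norm_rankOne_eq_one ha hl, mul_one, Real.norm_of_nonneg hr]; exact hr1
  have h := hψ.abs_apply_sub_le hΔ
    (norm_rankOne_add_eq_one hu hq (Submodule.smul_of_tower_mem _ (1 / 2 : ℝ)
      (rankOne_mem_corner huv (inner_eq_zero_symm.1 hqw)))
      (norm_smul_le hv hw (by norm_num) (by norm_num)))
    (norm_rankOne_add_eq_one hu hq (Submodule.smul_of_tower_mem _ t
      (rankOne_mem_corner huv' (inner_eq_zero_symm.1 hqw')))
      (norm_smul_le hv' hw' ht (by linarith)))
  have e : rankOne ℂ u q + (1 / 2 : ℝ) • rankOne ℂ v w - (rankOne ℂ u q + t • rankOne ℂ v' w') =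
      (1 / 2 : ℝ) • (rankOne ℂ v w - (2 * t) • rankOne ℂ v' w') := by module
  have hnorm := norm_rankOne_sub_smul_le (norm_rankOne_eq_one hv' hw').le hv hw (t := 2 * t)
    (by linarith) (by linarith)
  rw [e, norm_smul, Real.norm_of_nonneg (by norm_num),
    hΔ.apply_rankOne_add_smul_rankOne_of_inner_eq_zero J hu hq hv hw huv hqw (by norm_num)
      (by norm_num),
    hΔ.apply_rankOne_add_smul_rankOne_of_inner_eq_zero J hu hq hv' hw' huv' hqw' ht (by linarith),
    map_add, map_add, map_smul, map_smul, apply_zero,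
    hψ.apply_eq_one _ (rankOne_mem_face hv hw), smul_eq_mul, smul_eq_mul] at h
  linarith [le_abs_self (0 + 1 / 2 * 1 - (0 + t * ψ (Δ (rankOne ℂ v' w'))))]

lemma Supports.reEntry_le_apply_rankOne (hψ : Supports Δ v w ψ) (hΔ : IsSphereIsometry Δ)
    (J : H →ₗᵢ[ℂ] K) (hH : 3 ≤ Module.rank ℂ H) (hK : 3 ≤ Module.rank ℂ K) (hv : ‖v‖ = 1)
    (hw : ‖w‖ = 1) (ha : ‖a‖ = 1) (hl : ‖l‖ = 1) :
    reEntry v w (rankOne ℂ a l) ≤ ψ (Δ (rankOne ℂ a l)) := by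
  obtain ⟨u, hu, hvu, hau⟩ := exists_unit_orthogonal hK v a
  obtain ⟨q, hq, hwq, hlq⟩ := exists_unit_orthogonal hH w l
  have key := fun {t : ℝ} => hψ.mul_reEntry_rankOne_le hΔ J hu hq hv hw
    (inner_eq_zero_symm.1 hvu) (inner_eq_zero_symm.1 hwq) ha hl (inner_eq_zero_symm.1 hau)
    (inner_eq_zero_symm.1 hlq) (t := t)
  refine le_of_forall_pos_le_add fun ε hε => ?_
  obtain ⟨t, ht0, ht8, htε⟩ : ∃ t : ℝ, 0 < t ∧ t ≤ 1 / 8 ∧ t ≤ ε / 4 :=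
    ⟨min (1 / 8) (ε / 4), by positivity, min_le_left _ _, min_le_right _ _⟩
  refine le_of_mul_le_mul_left ((key ht0.le ht8).trans ?_) ht0
  nlinarith

lemma Supports.apply_rankOne (hψ : Supports Δ v w ψ) (hΔ : IsSphereIsometry Δ)
    (J : H →ₗᵢ[ℂ] K) (hH : 3 ≤ Module.rank ℂ H) (hK : 3 ≤ Module.rank ℂ K) (hv : ‖v‖ = 1)
    (hw : ‖w‖ = 1) (ha : ‖a‖ = 1) (hl : ‖l‖ = 1) :
    ψ (Δ (rankOne ℂ a l)) = reEntry v w (rankOne ℂ a l) := by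
  refine le_antisymm ?_ (hψ.reEntry_le_apply_rankOne hΔ J hH hK hv hw ha hl)
  have h := hψ.reEntry_le_apply_rankOne hΔ J hH hK hv hw (a := -a) (by rwa [norm_neg]) hl
  obtain ⟨V, rfl⟩ := exists_linearIsometry_of_unit J hl ha
  have hneg := hΔ.apply_neg_rankOne (V := V.toContinuousLinearMap) V.norm_map hl
  rw [LinearIsometry.coe_toContinuousLinearMap] at hneg
  rwa [map_neg, neg_apply, hneg, map_neg, map_neg, neg_le_neg_iff] at h

lemma Supports.apply_rankOne_add_rankOne (hψ : Supports Δ v w ψ) (hΔ : IsSphereIsometry Δ)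
    (J : H →ₗᵢ[ℂ] K) (hH : 3 ≤ Module.rank ℂ H) (hK : 3 ≤ Module.rank ℂ K) (hu : ‖u‖ = 1)
    (hq : ‖q‖ = 1) (hv : ‖v‖ = 1) (hw : ‖w‖ = 1) (huv : ⟪u, v⟫_ℂ = 0) (hqw : ⟪q, w⟫_ℂ = 0)
    (hua : ⟪u, a⟫_ℂ = 0) (hql : ⟪q, l⟫_ℂ = 0) (hal : ‖a‖ * ‖l‖ ≤ 1) :
    ψ (Δ (rankOne ℂ u q + rankOne ℂ a l)) = reEntry v w (rankOne ℂ a l) := by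
  have apply_zero := hψ.apply_rankOne_of_inner_eq_zero hΔ J hu hq hv hw huv hqw
  rcases eq_or_ne a 0 with rfl | ha
  · simpa using apply_zero
  rcases eq_or_ne l 0 with rfl | hl
  · simpa using apply_zero
  obtain ⟨a', ha', haa'⟩ : ∃ a', ‖a'‖ = 1 ∧ a = ‖a‖ • a' :=
    ⟨_, norm_inv_norm_smul ha, (smul_inv_smul₀ (norm_ne_zero_iff.2 ha) a).symm⟩
  obtain ⟨l', hl', hll'⟩ : ∃ l', ‖l'‖ = 1 ∧ l = ‖l‖ • l' :=
    ⟨_, norm_inv_norm_smul hl, (smul_inv_smul₀ (norm_ne_zero_iff.2 hl) l).symm⟩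
  have e : rankOne ℂ a l = (‖a‖ * ‖l‖) • rankOne ℂ a' l' := by
    rw [← rankOne_smul_smul, ← haa', ← hll']
  have hua' : ⟪u, a'⟫_ℂ = 0 := by
    rw [haa', inner_smul_right_eq_smul] at hua
    exact (smul_eq_zero.1 hua).resolve_left (norm_ne_zero_iff.2 ha)
  have hql' : ⟪q, l'⟫_ℂ = 0 := by
    rw [hll', inner_smul_right_eq_smul] at hql
    exact (smul_eq_zero.1 hql).resolve_left (norm_ne_zero_iff.2 hl)
  rw [e, hΔ.apply_rankOne_add_smul_rankOne_of_inner_eq_zero J hu hq ha' hl' hua' hql'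
    (by positivity) hal, map_add, map_smul, map_smul, apply_zero, zero_add,
    hψ.apply_rankOne hΔ J hH hK hv hw ha' hl']

lemma Supports.apply_rankOne_add [CompleteSpace H] [CompleteSpace K] (hψ : Supports Δ v w ψ)
    (hΔ : IsSphereIsometry Δ) (J : H →ₗᵢ[ℂ] K) (hH : 3 ≤ Module.rank ℂ H)
    (hK : 3 ≤ Module.rank ℂ K) (hu : ‖u‖ = 1) (hq : ‖q‖ = 1) (hv : ‖v‖ = 1) (hw : ‖w‖ = 1)
    (huv : ⟪u, v⟫_ℂ = 0) (hqw : ⟪q, w⟫_ℂ = 0) (hx : x ∈ corner u q) (hx1 : ‖x‖ ≤ 1 / 16) :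
    ψ (Δ (rankOne ℂ u q + x)) = reEntry v w x := by
  have key : ∀ c : ℝ, |c| = 1 / 2 →
      |reEntry v w x + c - ψ (Δ (rankOne ℂ u q + x))| ≤ 1 / 2 := fun c hc => by
    obtain ⟨a, l, hua, hql, hal, hentry, hnorm⟩ :=
      exists_rankOne_norm_sub_le hv hw huv hqw hx hx1 hc
    have hlip := hψ.abs_apply_sub_le hΔ
      (norm_rankOne_add_eq_one hu hq (rankOne_mem_corner hua (inner_eq_zero_symm.1 hql))
        (by rwa [InnerProductSpace.norm_rankOne]))
      (norm_rankOne_add_eq_one hu hq hx (by linarith))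
    rw [hψ.apply_rankOne_add_rankOne hΔ J hH hK hu hq hv hw huv hqw hua hql hal, hentry,
      add_sub_add_left_eq_sub] at hlip
    exact hlip.trans hnorm
  have h₁ := (abs_le.1 (key (1 / 2) (by norm_num))).2
  have h₂ := (abs_le.1 (key (-(1 / 2)) (by rw [abs_neg]; norm_num))).1
  linarith

end Functionals

section Propagation

variable {X : Type*} [NormedAddCommGroup X] [NormedSpace ℝ X] {M : Submodule ℝ X} {g : X → ℝ}
  {δ : ℝ} {d : X}

/-- The directions of `M` along which the vanishing of `g` on a ball of `M` of radius `δ` propagates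
as long as the moving ball is seen to stay in the unit ball. -/
def propagationDirections (M : Submodule ℝ X) (g : X → ℝ) (δ : ℝ) : Set X :=
  {d | d ∈ M ∧ ‖d‖ ≤ 1 ∧ ∀ x ∈ M, ∀ t, 0 ≤ t → ‖x‖ + t + δ ≤ 1 →
    (∀ y ∈ M, ‖y‖ < δ → g (x + y) = 0) → ∀ y ∈ M, ‖y‖ < δ → g (x + t • d + y) = 0}

lemma convex_propagationDirections : Convex ℝ (propagationDirections M g δ) := by
  rintro d ⟨hd, hd1, hdp⟩ e ⟨he, he1, hep⟩ r s hr hs hrs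
  refine ⟨M.add_mem (M.smul_mem r hd) (M.smul_mem s he), ?_, fun x hx t ht hxt hg y hy hyδ => ?_⟩
  · exact mem_closedBall_zero_iff.1 (convex_closedBall (0 : X) 1 (mem_closedBall_zero_iff.2 hd1)
      (mem_closedBall_zero_iff.2 he1) hr hs hrs)
  · have htr : 0 ≤ t * r := mul_nonneg ht hr
    have hts : 0 ≤ t * s := mul_nonneg ht hs
    have hsum : t * r + t * s = t := by rw [← mul_add, hrs, mul_one]
    have hnorm : ‖x + (t * r) • d‖ ≤ ‖x‖ + t * r := (norm_add_le _ _).trans (by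
      rw [norm_smul, Real.norm_of_nonneg htr]
      linarith [mul_le_of_le_one_right htr hd1])
    rw [smul_add, smul_smul, smul_smul, ← add_assoc x]
    exact hep _ (M.add_mem hx (M.smul_mem _ hd)) _ hts (by linarith)
      (hdp x hx _ htr (by linarith) hg) y hy hyδ

lemma mem_propagationDirections_of_mem_closure (hg : ContinuousOn g {x | x ∈ M ∧ ‖x‖ ≤ 1})
    (hd : d ∈ M) (hd1 : ‖d‖ ≤ 1) (h : d ∈ closure (propagationDirections M g δ)) :
    d ∈ propagationDirections M g δ := by
  refine ⟨hd, hd1, fun x hx t ht hxt hgx y hy hyδ => ?_⟩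
  have mem_ball : ∀ e, e ∈ M → ‖e‖ ≤ 1 → x + t • e + y ∈ {x | x ∈ M ∧ ‖x‖ ≤ 1} :=
    fun e he he1 => ⟨M.add_mem (M.add_mem hx (M.smul_mem t he)) hy, by
      refine (norm_add₃_le).trans ?_
      rw [norm_smul, Real.norm_of_nonneg ht]
      linarith [mul_le_of_le_one_right ht he1]⟩
  have hcont : ContinuousOn (fun e => g (x + t • e + y)) {e | e ∈ M ∧ ‖e‖ ≤ 1} :=
    hg.comp (by fun_prop) fun e he => mem_ball e he.1 he.2
  have heq : Set.EqOn (fun e => g (x + t • e + y)) 0 (propagationDirections M g δ) :=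
    fun e he => he.2.2 x hx t ht hxt hgx y hy hyδ
  exact heq.of_subset_closure (hcont.mono (Set.insert_subset ⟨hd, hd1⟩ fun e he => ⟨he.1, he.2.1⟩))
    continuousOn_const (Set.subset_insert _ _) (Set.insert_subset h subset_closure)
    (Set.mem_insert d _)

lemma mem_propagationDirections_of_affine (hd : d ∈ M) (hd1 : ‖d‖ ≤ 1)
    (hg : ∀ x ∈ M, ‖x‖ ≤ 1 → ∀ t, 0 ≤ t → ‖x + t • d‖ ≤ 1 → ∀ s, 0 ≤ s → s ≤ 1 →
      g (x + (s * t) • d) = (1 - s) * g x + s * g (x + t • d)) :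
    d ∈ propagationDirections M g δ := by
  refine ⟨hd, hd1, fun x hx t ht hxt hgx y hy hyδ => ?_⟩
  obtain ⟨s, hs, hs1, hst⟩ : ∃ s : ℝ, 0 < s ∧ s ≤ 1 ∧ ‖y‖ + s * t < δ := by
    have hpos : 0 < (δ - ‖y‖) / (t + 1) := div_pos (sub_pos.2 hyδ) (by linarith)
    refine ⟨min 1 ((δ - ‖y‖) / (t + 1)), lt_min one_pos hpos, min_le_left _ _, ?_⟩
    have h := mul_le_mul_of_nonneg_right (min_le_right 1 ((δ - ‖y‖) / (t + 1))) ht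
    have h' : (δ - ‖y‖) / (t + 1) * (t + 1) = δ - ‖y‖ := div_mul_cancel₀ _ (by linarith)
    linarith
  have norm_smul_le : ∀ r : ℝ, 0 ≤ r → ‖r • d‖ ≤ r := fun r hr => by
    rw [norm_smul, Real.norm_of_nonneg hr]
    exact mul_le_of_le_one_right hr hd1
  have hst0 := mul_nonneg hs.le ht
  have hnear : g (x + y + (s * t) • d) = 0 := by
    rw [add_assoc]
    exact hgx _ (M.add_mem hy (M.smul_mem _ hd))
      ((norm_add_le _ _).trans_lt (by linarith [norm_smul_le _ hst0]))
  have hxy : ‖x + y‖ ≤ 1 := (norm_add_le _ _).trans (by linarith)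
  rw [hg (x + y) (M.add_mem hx hy) hxy t ht
    ((norm_add₃_le).trans (by linarith [norm_smul_le t ht])) s hs.le hs1, hgx y hy hyδ, mul_zero,
    zero_add] at hnear
  rw [add_right_comm]
  exact (mul_eq_zero.1 hnear).resolve_left hs.ne'

end Propagation

section Extension

variable {H K Y : Type*} [NormedAddCommGroup H] [InnerProductSpace ℂ H] [NormedAddCommGroup K]
  [InnerProductSpace ℂ K] [NormedAddCommGroup Y] [NormedSpace ℝ Y] {Δ : (H →L[ℂ] K) → Y}
  {ψ : Y →L[ℝ] ℝ} {u v : K} {q w : H} {x y V : H →L[ℂ] K}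

/-- How far the values of `ψ ∘ Δ` on the face of `rankOne u q` are from those of `reEntry v w`, for
`u` orthogonal to `v`; the face is parametrized by the unit ball of `corner u q`. -/
noncomputable def faceDefect (Δ : (H →L[ℂ] K) → Y) (ψ : Y →L[ℝ] ℝ) (u v : K) (q w : H)
    (x : H →L[ℂ] K) : ℝ :=
  ψ (Δ (rankOne ℂ u q + x)) - reEntry v w x

lemma IsSphereIsometry.continuousOn_faceDefect (hΔ : IsSphereIsometry Δ) (hu : ‖u‖ = 1)
    (hq : ‖q‖ = 1) :
    ContinuousOn (faceDefect Δ ψ u v q w)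
      {x | x ∈ (corner u q).restrictScalars ℝ ∧ ‖x‖ ≤ 1} := by
  refine ContinuousOn.sub (ψ.continuous.comp_continuousOn ?_) (reEntry v w).continuous.continuousOn
  exact hΔ.continuousOn.comp (by fun_prop) fun x hx => norm_rankOne_add_eq_one hu hq hx.1 hx.2

lemma IsSphereIsometry.faceDefect_add_smul (hΔ : IsSphereIsometry Δ) (hu : ‖u‖ = 1)
    (hq : ‖q‖ = 1) (hV : V ∈ isometricFace u q) (hVc : V - rankOne ℂ u q ∈ corner u q)
    (hx : x ∈ corner u q) (hx1 : ‖x‖ ≤ 1) {t : ℝ} (ht : 0 ≤ t)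
    (hxt : ‖x + t • (V - rankOne ℂ u q)‖ ≤ 1) {s : ℝ} (hs : 0 ≤ s) (hs1 : s ≤ 1) :
    faceDefect Δ ψ u v q w (x + (s * t) • (V - rankOne ℂ u q)) =
      (1 - s) * faceDefect Δ ψ u v q w x +
        s * faceDefect Δ ψ u v q w (x + t • (V - rankOne ℂ u q)) := by
  have h := hΔ.apply_add_smul_sub_rankOne hu hq hV ht (rankOne_add_mem_face hu hq hx hx1)
    (by
      rw [add_assoc]
      exact rankOne_add_mem_face hu hq (add_mem hx (Submodule.smul_of_tower_mem _ t hVc)) hxt)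
    hs hs1
  simp only [faceDefect, ← add_assoc, h, map_add, map_smul, smul_eq_mul]
  ring

variable [CompleteSpace H] [CompleteSpace K]

lemma IsSphereIsometry.sub_rankOne_mem_propagationDirections (hΔ : IsSphereIsometry Δ)
    (J : H →ₗᵢ[ℂ] K) (hu : ‖u‖ = 1) (hq : ‖q‖ = 1) (hx : x ∈ face u q) (δ : ℝ) :
    x - rankOne ℂ u q ∈ propagationDirections ((corner u q).restrictScalars ℝ)
      (faceDefect Δ ψ u v q w) δ := by
  set D := propagationDirections ((corner u q).restrictScalars ℝ) (faceDefect Δ ψ u v q w) δ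
  obtain ⟨V₀, hV₀⟩ := exists_linearIsometry_of_unit J hq hu
  have hsub : isometricFace u q ⊆ (fun y => y - rankOne ℂ u q) ⁻¹' D := fun V hV => by
    have hVf := isometricFace_subset_face u q hV
    have hVc := sub_rankOne_mem_corner hu hq hVf
    exact mem_propagationDirections_of_affine hVc (norm_sub_rankOne_le hq hVf)
      fun y hy hy1 t ht hyt s hs hs1 => hΔ.faceDefect_add_smul hu hq hV hVc hy hy1 ht hyt hs hs1
  have hconv : Convex ℝ ((fun y => y - rankOne ℂ u q) ⁻¹' D) := by
    simp only [sub_eq_add_neg]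
    exact convex_propagationDirections.translate_preimage_left (-rankOne ℂ u q)
  refine mem_propagationDirections_of_mem_closure (hΔ.continuousOn_faceDefect hu hq)
    (sub_rankOne_mem_corner hu hq hx) (norm_sub_rankOne_le hq hx) ?_
  exact map_mem_closure (f := fun y => y - rankOne ℂ u q) (by fun_prop)
    (face_subset_closure_convexHull hu hq ⟨V₀.toContinuousLinearMap, V₀.norm_map, hV₀⟩ hx)
    (convexHull_min hsub hconv)

lemma Supports.apply_of_mem_face_of_inner_eq_zero (hψ : Supports Δ v w ψ)
    (hΔ : IsSphereIsometry Δ) (J : H →ₗᵢ[ℂ] K) (hH : 3 ≤ Module.rank ℂ H)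
    (hK : 3 ≤ Module.rank ℂ K) (hu : ‖u‖ = 1) (hq : ‖q‖ = 1) (hv : ‖v‖ = 1) (hw : ‖w‖ = 1)
    (huv : ⟪u, v⟫_ℂ = 0) (hqw : ⟪q, w⟫_ℂ = 0) (hx : x ∈ face u q) :
    ψ (Δ x) = reEntry v w x := by
  set d := x - rankOne ℂ u q with hd
  have hdc : d ∈ corner u q := sub_rankOne_mem_corner hu hq hx
  have hd1 : ‖d‖ ≤ 1 := norm_sub_rankOne_le hq hx
  have zero_of_lt : ∀ r ∈ Set.Ico (15 / 16 : ℝ) 1, faceDefect Δ ψ u v q w (r • d) = 0 := by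
    rintro r ⟨hr, hr1⟩
    have h := (hΔ.sub_rankOne_mem_propagationDirections J hu hq hx (1 - r) (ψ := ψ) (v := v)
      (w := w)).2.2 0 (zero_mem _) r (by linarith) (by simp) (fun y hy hyr => by
        rw [zero_add, faceDefect, hψ.apply_rankOne_add hΔ J hH hK hu hq hv hw huv hqw hy
          (by linarith), sub_self]) 0 (zero_mem _) (by rwa [norm_zero, sub_pos])
    rwa [zero_add, add_zero] at h
  have hcont : ContinuousOn (fun r : ℝ => faceDefect Δ ψ u v q w (r • d)) (Set.Icc (15 / 16) 1) :=
    (hΔ.continuousOn_faceDefect hu hq).comp (by fun_prop) fun r ⟨hr, hr1⟩ =>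
      ⟨Submodule.smul_of_tower_mem _ r hdc, by
        rw [norm_smul, Real.norm_of_nonneg (by linarith)]
        exact mul_le_one₀ hr1 (norm_nonneg _) hd1⟩
  have hlim : faceDefect Δ ψ u v q w ((1 : ℝ) • d) = 0 :=
    Set.EqOn.of_subset_closure (g := 0) zero_of_lt hcont continuousOn_const Set.Ico_subset_Icc_self
      (closure_Ico (by norm_num)).ge (Set.right_mem_Icc.2 (by norm_num))
  have hentry : reEntry v w (rankOne ℂ u q) = 0 := by
    rw [reEntry_apply, rankOne_apply_of_inner_eq_zero u hqw, inner_zero_right, Complex.zero_re]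
  rwa [one_smul, faceDefect, hd, add_sub_cancel, map_sub, hentry, sub_zero, sub_eq_zero] at hlim

lemma IsSphereIsometry.apply_combo_of_mem_face (hΔ : IsSphereIsometry Δ) (J : H →ₗᵢ[ℂ] K)
    (hH : 3 ≤ Module.rank ℂ H) (hK : 3 ≤ Module.rank ℂ K) (hu : ‖u‖ = 1) (hq : ‖q‖ = 1)
    (hx : x ∈ face u q) (hy : y ∈ face u q) {r s : ℝ} (hr : 0 ≤ r) (hs : 0 ≤ s)
    (hrs : r + s = 1) : Δ (r • x + s • y) = r • Δ x + s • Δ y := by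
  obtain ⟨z, hz, hzΔ⟩ := hΔ.convex_image_face hu hq ⟨x, hx, rfl⟩ ⟨y, hy, rfl⟩ hr hs hrs
  have hxy := convex_face u q hx hy hr hs hrs
  have hcorner : z - (r • x + s • y) ∈ corner u q := by
    rw [← sub_sub_sub_cancel_right z _ (rankOne ℂ u q)]
    exact sub_mem (sub_rankOne_mem_corner hu hq hz) (sub_rankOne_mem_corner hu hq hxy)
  rw [← hzΔ, ← sub_eq_zero.1 (eq_zero_of_mem_corner hq hcorner fun v w hv hw huv hqw => ?_)]
  obtain ⟨ψ, hψ⟩ := hΔ.exists_supports hv hw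
  have apply_face : ∀ {x}, x ∈ face u q → ψ (Δ x) = reEntry v w x :=
    hψ.apply_of_mem_face_of_inner_eq_zero hΔ J hH hK hu hq hv hw huv hqw
  rw [map_sub, ← apply_face hz, hzΔ, map_add, map_smul, map_smul, map_add, map_smul, map_smul,
    apply_face hx, apply_face hy, sub_self]

lemma Supports.apply_of_isometric (hψ : Supports Δ v w ψ) (hΔ : IsSphereIsometry Δ)
    (J : H →ₗᵢ[ℂ] K) (hH : 3 ≤ Module.rank ℂ H) (hK : 3 ≤ Module.rank ℂ K) (hv : ‖v‖ = 1)
    (hw : ‖w‖ = 1) (hV : ∀ h, ‖V h‖ = ‖h‖) : ψ (Δ V) = reEntry v w V := by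
  obtain ⟨q, hq, hwq, hvq⟩ := exists_unit_orthogonal hH w (V.adjoint v)
  rw [ContinuousLinearMap.adjoint_inner_left] at hvq
  exact hψ.apply_of_mem_face_of_inner_eq_zero hΔ J hH hK (by rw [hV, hq]) hq hv hw
    (inner_eq_zero_symm.1 hvq) (inner_eq_zero_symm.1 hwq) ⟨norm_le_one_of_isometric hV, rfl⟩

lemma Supports.apply_of_mem_face (hψ : Supports Δ v w ψ) (hΔ : IsSphereIsometry Δ)
    (J : H →ₗᵢ[ℂ] K) (hH : 3 ≤ Module.rank ℂ H) (hK : 3 ≤ Module.rank ℂ K) (hv : ‖v‖ = 1)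
    (hw : ‖w‖ = 1) (hu : ‖u‖ = 1) (hq : ‖q‖ = 1) (hx : x ∈ face u q) :
    ψ (Δ x) = reEntry v w x := by
  obtain ⟨V₀, hV₀⟩ := exists_linearIsometry_of_unit J hq hu
  have hconv : Convex ℝ {y | y ∈ face u q ∧ ψ (Δ y) = reEntry v w y} := by
    rintro y ⟨hy, hy'⟩ z ⟨hz, hz'⟩ r s hr hs hrs
    refine ⟨convex_face u q hy hz hr hs hrs, ?_⟩
    rw [hΔ.apply_combo_of_mem_face J hH hK hu hq hy hz hr hs hrs, map_add, map_smul, map_smul, hy',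
      hz', map_add, map_smul, map_smul]
  have hsub : convexHull ℝ (isometricFace u q) ⊆ {y | y ∈ face u q ∧ ψ (Δ y) = reEntry v w y} :=
    convexHull_min (fun V hV => ⟨isometricFace_subset_face u q hV,
      hψ.apply_of_isometric hΔ J hH hK hv hw hV.1⟩) hconv
  exact Set.EqOn.of_subset_closure (f := fun y => ψ (Δ y)) (g := reEntry v w)
    (fun y hy => (hsub hy).2)
    ((ψ.continuous.comp_continuousOn hΔ.continuousOn).mono fun y => norm_eq_one_of_mem_face hu hq)
    (reEntry v w).continuous.continuousOn (fun y hy => (hsub hy).1)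
    (face_subset_closure_convexHull hu hq ⟨V₀.toContinuousLinearMap, V₀.norm_map, hV₀⟩) hx

lemma Supports.apply_of_norm_eq_one (hψ : Supports Δ v w ψ) (hΔ : IsSphereIsometry Δ)
    (J : H →ₗᵢ[ℂ] K) (hH : 3 ≤ Module.rank ℂ H) (hK : 3 ≤ Module.rank ℂ K) (hv : ‖v‖ = 1)
    (hw : ‖w‖ = 1) (hx : ‖x‖ = 1) : ψ (Δ x) = reEntry v w x := by
  have heq : Set.EqOn (fun y => ψ (Δ y)) (reEntry v w)
      {y | ∃ u q, ‖u‖ = 1 ∧ ‖q‖ = 1 ∧ y ∈ face u q} :=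
    fun _ ⟨_, _, hu, hq, hy⟩ => hψ.apply_of_mem_face hΔ J hH hK hv hw hu hq hy
  exact heq.of_subset_closure (ψ.continuous.comp_continuousOn hΔ.continuousOn)
    (reEntry v w).continuous.continuousOn
    (fun _ ⟨_, _, hu, hq, hy⟩ => norm_eq_one_of_mem_face hu hq hy)
    (fun _ hy => mem_closure_faces hy) hx

lemma IsSphereIsometry.isLinearExtension_of_linearIsometry (hΔ : IsSphereIsometry Δ)
    (J : H →ₗᵢ[ℂ] K) (hH : 3 ≤ Module.rank ℂ H) (hK : 3 ≤ Module.rank ℂ K) :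
    IsLinearExtension Δ (homogeneousExtension Δ) := by
  refine hΔ.isLinearExtension_homogeneousExtension fun x hx => ?_
  obtain ⟨k, hk⟩ := DFunLike.ne_iff.1 hx
  have hk0 : k ≠ 0 := by rintro rfl; exact hk (map_zero x)
  have hv := norm_inv_norm_smul hk
  have hw := norm_inv_norm_smul hk0
  obtain ⟨ψ, hψ⟩ := hΔ.exists_supports hv hw
  exact ⟨ψ, reEntry (‖x k‖⁻¹ • x k) (‖k‖⁻¹ • k),
    fun z hz => hψ.apply_of_norm_eq_one hΔ J hH hK hv hw hz, reEntry_inv_norm_smul_ne_zero hk⟩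

end Extension

section HilbertBasis

variable {E F : Type*} [NormedAddCommGroup E] [InnerProductSpace ℂ E] [NormedAddCommGroup F]
  [InnerProductSpace ℂ F] [CompleteSpace F]

lemma exists_linearIsometry_of_embedding {ι κ : Type*} (b : HilbertBasis ι ℂ E)
    (c : HilbertBasis κ ℂ F) (f : ι ↪ κ) : Nonempty (E →ₗᵢ[ℂ] F) :=
  ⟨((c.orthonormal.comp f f.injective).orthogonalFamily.linearIsometry).comp
    b.repr.toLinearIsometry⟩

lemma exists_linearIsometry_or (E F : Type*) [NormedAddCommGroup E] [InnerProductSpace ℂ E]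
    [CompleteSpace E] [NormedAddCommGroup F] [InnerProductSpace ℂ F] [CompleteSpace F] :
    Nonempty (E →ₗᵢ[ℂ] F) ∨ Nonempty (F →ₗᵢ[ℂ] E) := by
  obtain ⟨s, b, -⟩ := exists_hilbertBasis ℂ E
  obtain ⟨t, c, -⟩ := exists_hilbertBasis ℂ F
  rcases Function.Embedding.total s t with ⟨⟨f⟩⟩ | ⟨⟨f⟩⟩
  · exact .inl (exists_linearIsometry_of_embedding b c f)
  · exact .inr (exists_linearIsometry_of_embedding c b f)

end HilbertBasis

/-- Taking adjoints, as an isometry of real Banach spaces. -/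
noncomputable def adjointRealIsometry (H K : Type*) [NormedAddCommGroup H] [InnerProductSpace ℂ H]
    [CompleteSpace H] [NormedAddCommGroup K] [InnerProductSpace ℂ K] [CompleteSpace K] :
    (H →L[ℂ] K) ≃ₗᵢ[ℝ] (K →L[ℂ] H) where
  toFun := ContinuousLinearMap.adjoint
  invFun := ContinuousLinearMap.adjoint
  map_add' := map_add _
  map_smul' r x := by
    rw [← Complex.coe_smul, LinearIsometryEquiv.map_smulₛₗ, Complex.conj_ofReal, Complex.coe_smul,
      RingHom.id_apply]
  left_inv := ContinuousLinearMap.adjoint_adjoint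
  right_inv := ContinuousLinearMap.adjoint_adjoint
  norm_map' := LinearIsometryEquiv.norm_map _

end OperatorSphere

theorem mazur_ulam_property_operators_rank_ge_three_general {H K Y : Type*} [NormedAddCommGroup H]
    [InnerProductSpace ℂ H] [CompleteSpace H] [NormedAddCommGroup K] [InnerProductSpace ℂ K]
    [CompleteSpace K] [NormedAddCommGroup Y] [NormedSpace ℝ Y] {Δ : (H →L[ℂ] K) → Y}
    (hΔ : OperatorSphere.IsSphereIsometry Δ) (hH : 3 ≤ Module.rank ℂ H) (hK : 3 ≤ Module.rank ℂ K) :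
    ∃! T, OperatorSphere.IsLinearExtension Δ T := by
  suffices ∃ T, OperatorSphere.IsLinearExtension Δ T by
    obtain ⟨T, hT⟩ := this
    exact ⟨T, hT, fun T' hT' => hT'.eq_homogeneousExtension.trans hT.eq_homogeneousExtension.symm⟩
  rcases OperatorSphere.exists_linearIsometry_or H K with ⟨⟨J⟩⟩ | ⟨⟨J⟩⟩
  · exact ⟨_, hΔ.isLinearExtension_of_linearIsometry J hH hK⟩
  · have hΔ' := hΔ.comp (OperatorSphere.adjointRealIsometry K H)
    exact ⟨_, (hΔ'.isLinearExtension_of_linearIsometry J hK hH).comp_symm⟩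

/-- the type 1 Cartan factor `B(H, K)` with `dim H ≥ 3` and
`dim K ≥ 3` satisfies the Mazur–Ulam property: every surjective isometry between
the unit sphere of `B(H, K)` and the unit sphere of a real Banach space `Y` admits
a unique extension to a surjective real-linear isometry from `B(H, K)` onto `Y`. -/
theorem mazur_ulam_property_operators_rank_ge_three
    {H K : Type*} [NormedAddCommGroup H] [InnerProductSpace ℂ H] [CompleteSpace H]
    [NormedAddCommGroup K] [InnerProductSpace ℂ K] [CompleteSpace K]
    (hH : 3 ≤ Module.rank ℂ H) (hK : 3 ≤ Module.rank ℂ K)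
    {Y : Type*} [NormedAddCommGroup Y] [NormedSpace ℝ Y] [CompleteSpace Y]
    (Δ : (H →L[ℂ] K) → Y)
    (hmap : ∀ x : H →L[ℂ] K, ‖x‖ = 1 → ‖Δ x‖ = 1)
    (hsurj : ∀ y : Y, ‖y‖ = 1 → ∃ x : H →L[ℂ] K, ‖x‖ = 1 ∧ Δ x = y)
    (hiso : ∀ x y : H →L[ℂ] K, ‖x‖ = 1 → ‖y‖ = 1 → ‖Δ x - Δ y‖ = ‖x - y‖) :
    ∃! T : (H →L[ℂ] K) → Y,
      (∀ x y : H →L[ℂ] K, T (x + y) = T x + T y) ∧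
      (∀ (r : ℝ) (x : H →L[ℂ] K), T (r • x) = r • T x) ∧
      (∀ x : H →L[ℂ] K, ‖T x‖ = ‖x‖) ∧
      Function.Surjective T ∧
      (∀ x : H →L[ℂ] K, ‖x‖ = 1 → T x = Δ x) :=
  mazur_ulam_property_operators_rank_ge_three_general ⟨hmap, hsurj, hiso⟩ hH hK
end

section
/- Every complex Hilbert space satisfies the Mazur–Ulam property: if H is a non-zero complex Hilbert space, Y is a real Banach space, and Δ : S(H) → S(Y) is a surjective isometry between the unit spheres, then Δ extends to a surjective real-linear isometry from H onto Y. -/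
/-!
A surjective isometry onto the unit sphere of `Y` commutes with `x ↦ -x`, so it preserves the norms
of both `u + v` and `u - v` for unit vectors `u`, `v`. Hence `Y` inherits from the Hilbert space the
rhombus law `‖u + v‖² + ‖u - v‖² = 4` on its unit sphere, and by a theorem of Day this already
forces the norm of `Y` to come from an inner product. Between inner product spaces distances are
determined by norms and by distances of directions, so the positively homogeneous extension of the
map is a surjective isometry fixing `0`, and it is linear by the classical Mazur–Ulam theorem.

For Day's theorem, take unit vectors `u`, `v` with `‖u + v‖ = ‖u - v‖` and compare the norm with the
Euclidean one on the ellipse `cos θ • u + sin θ • v`. The angles `θ` for which both the point and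
its conjugate `-sin θ • u + cos θ • v` are unit vectors form a closed set containing all multiples
of `π / 4`. By the rhombus law it contains the midpoint of any two of its members less than `π / 2`
apart, so it is all of `ℝ`.
-/

open Real Set NormedSpace

theorem Icc_subset_of_midpoint_mem {s : Set ℝ} {a b : ℝ} (hs : IsClosed s) (ha : a ∈ s)
    (hb : b ∈ s) (hmid : ∀ x ∈ s ∩ Icc a b, ∀ y ∈ s ∩ Icc a b, midpoint ℝ x y ∈ s) :
    Icc a b ⊆ s := by
  intro t ht
  -- `p` and `q` are the points of `s` nearest to `t` on either side. Their midpoint is in `s` too,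
  -- which forces `t = p` or `t = q`.
  have hleft : IsCompact (s ∩ Icc a t) := isCompact_Icc.inter_left hs
  have hright : IsCompact (s ∩ Icc t b) := isCompact_Icc.inter_left hs
  obtain ⟨p, ⟨hps, hap, hpt⟩, hp⟩ := hleft.exists_isGreatest ⟨a, ha, le_rfl, ht.1⟩
  obtain ⟨q, ⟨hqs, htq, hqb⟩, hq⟩ := hright.exists_isLeast ⟨b, hb, ht.2, le_rfl⟩
  have hm := hmid p ⟨hps, hap, by linarith⟩ q ⟨hqs, by linarith, hqb⟩
  rw [midpoint_eq_smul_add, smul_eq_mul, invOf_eq_inv] at hm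
  rcases le_total (2⁻¹ * (p + q)) t with hmt | htm
  · have := hp ⟨hm, by linarith, hmt⟩
    rwa [show t = p by linarith]
  · have := hq ⟨hm, htm, by linarith⟩
    rwa [show t = q by linarith]

section Ellipse

variable {Y : Type*} [AddCommGroup Y] [Module ℝ Y]

/-- The ellipse with conjugate semidiameters `u` and `v`, parametrised by the eccentric angle. -/
noncomputable def ellipse (u v : Y) (θ : ℝ) : Y := cos θ • u + sin θ • v

theorem ellipse_zero (u v : Y) : ellipse u v 0 = u := by simp [ellipse]

theorem ellipse_pi_div_two (u v : Y) : ellipse u v (π / 2) = v := by simp [ellipse]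

theorem ellipse_add_pi_div_two (u v : Y) (θ : ℝ) :
    ellipse u v (θ + π / 2) = -sin θ • u + cos θ • v := by
  simp [ellipse, cos_add_pi_div_two, sin_add_pi_div_two]

theorem ellipse_add_pi_div_two_add_pi_div_two (u v : Y) (θ : ℝ) :
    ellipse u v (θ + π / 2 + π / 2) = -ellipse u v θ := by
  rw [ellipse_add_pi_div_two, cos_add_pi_div_two, sin_add_pi_div_two, ellipse]
  module

theorem ellipse_pi_div_four (u v : Y) : ellipse u v (π / 4) = (√2 / 2) • (u + v) := by
  rw [ellipse, cos_pi_div_four, sin_pi_div_four, smul_add]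

theorem ellipse_pi_div_four_add_pi_div_two (u v : Y) :
    ellipse u v (π / 4 + π / 2) = (-(√2 / 2)) • (u - v) := by
  rw [ellipse_add_pi_div_two, cos_pi_div_four, sin_pi_div_four]
  module

theorem ellipse_sub_add_ellipse_add (u v : Y) (θ δ : ℝ) :
    ellipse u v (θ - δ) + ellipse u v (θ + δ) = (2 * cos δ) • ellipse u v θ := by
  simp only [ellipse, cos_add, cos_sub, sin_add, sin_sub]
  module

theorem ellipse_sub_sub_ellipse_add (u v : Y) (θ δ : ℝ) :
    ellipse u v (θ - δ) - ellipse u v (θ + δ) = (-(2 * sin δ)) • ellipse u v (θ + π / 2) := by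
  rw [ellipse_add_pi_div_two]
  simp only [ellipse, cos_add, cos_sub, sin_add, sin_sub]
  module

end Ellipse

section Day

variable {Y : Type*} [NormedAddCommGroup Y]

/-- Day's rhombus law: the parallelogram identity for unit vectors, which turns out to
characterise inner product spaces. -/
def RhombusLaw (Y : Type*) [NormedAddCommGroup Y] : Prop :=
  ∀ ⦃u v : Y⦄, ‖u‖ = 1 → ‖v‖ = 1 → ‖u + v‖ ^ 2 + ‖u - v‖ ^ 2 = 4

theorem rhombusLaw_of_innerProductSpaceable [InnerProductSpaceable Y] : RhombusLaw Y := by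
  intro u v hu hv
  have h := InnerProductSpaceable.parallelogram_identity u v
  rw [hu, hv] at h
  linarith

variable [NormedSpace ℝ Y] {u v x y : Y}

/-- Both the point of `ellipse u v` at angle `θ` and the conjugate one, a quarter turn further,
are unit vectors. The conjugate point is what makes this set of angles closed under midpoints. -/
def IsContact (u v : Y) (θ : ℝ) : Prop :=
  ‖ellipse u v θ‖ = 1 ∧ ‖ellipse u v (θ + π / 2)‖ = 1

theorem periodic_isContact (u v : Y) : Function.Periodic (IsContact u v) (π / 2) := by
  intro θ
  simp only [IsContact, ellipse_add_pi_div_two_add_pi_div_two, norm_neg, and_comm]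

theorem isClosed_setOf_isContact (u v : Y) : IsClosed {θ | IsContact u v θ} := by
  have hcont : Continuous (ellipse u v) := by unfold ellipse; fun_prop
  exact (isClosed_eq hcont.norm continuous_const).inter
    (isClosed_eq (hcont.comp (continuous_add_const _)).norm continuous_const)

theorem isContact_zero (hu : ‖u‖ = 1) (hv : ‖v‖ = 1) : IsContact u v 0 := by
  simp [IsContact, ellipse_zero, ellipse_pi_div_two, hu, hv]

namespace RhombusLaw

theorem isContact_pi_div_four (hY : RhombusLaw Y) (hu : ‖u‖ = 1) (hv : ‖v‖ = 1)
    (huv : ‖u + v‖ = ‖u - v‖) : IsContact u v (π / 4) := by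
  have hsum : ‖u + v‖ = √2 := by
    rw [← sqrt_sq (norm_nonneg (u + v))]
    congr 1
    linarith [hY hu hv, congrArg (· ^ 2) huv]
  have hunit : √2 / 2 * √2 = 1 := by
    rw [div_mul_eq_mul_div, mul_self_sqrt zero_le_two, div_self two_ne_zero]
  have habs : ‖√2 / 2‖ = √2 / 2 := norm_of_nonneg (by positivity)
  constructor
  · rw [ellipse_pi_div_four, norm_smul, habs, hsum, hunit]
  · rw [ellipse_pi_div_four_add_pi_div_two, norm_smul, norm_neg, habs, ← huv, hsum, hunit]

theorem isContact_of_sub_of_add (hY : RhombusLaw Y) {θ δ : ℝ} (hδ : cos (2 * δ) ≠ 0)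
    (hsub : IsContact u v (θ - δ)) (hadd : IsContact u v (θ + δ)) : IsContact u v θ := by
  set A := ‖ellipse u v θ‖ ^ 2 with hA
  set B := ‖ellipse u v (θ + π / 2)‖ ^ 2 with hB
  have hpoints : 4 * cos δ ^ 2 * A + 4 * sin δ ^ 2 * B = 4 := by
    have h := hY hsub.1 hadd.1
    rw [ellipse_sub_add_ellipse_add, ellipse_sub_sub_ellipse_add, norm_smul, norm_smul] at h
    simp only [mul_pow, norm_eq_abs, sq_abs, neg_sq, ← hA, ← hB] at h
    linarith
  have hconjugates : 4 * cos δ ^ 2 * B + 4 * sin δ ^ 2 * A = 4 := by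
    have h := hY hsub.2 hadd.2
    rw [sub_add_eq_add_sub, add_right_comm, ellipse_sub_add_ellipse_add,
      ellipse_sub_sub_ellipse_add, ellipse_add_pi_div_two_add_pi_div_two, norm_smul, norm_smul,
      norm_neg] at h
    simp only [mul_pow, norm_eq_abs, sq_abs, ← hA, ← hB, norm_neg] at h
    linarith
  have hpyth := cos_sq_add_sin_sq δ
  have hAB : A = B := by
    rw [cos_two_mul'] at hδ
    exact mul_left_cancel₀ hδ (by linarith)
  have hA1 : A = 1 := by
    rw [← hAB] at hpoints
    linear_combination hpoints / 4 - A * hpyth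
  have hB1 : B = 1 := hAB ▸ hA1
  exact ⟨(pow_eq_one_iff_of_nonneg (norm_nonneg _) two_ne_zero).mp hA1,
    (pow_eq_one_iff_of_nonneg (norm_nonneg _) two_ne_zero).mp hB1⟩

theorem isContact_of_mem_Icc (hY : RhombusLaw Y) {a b : ℝ} (hab : b - a < π / 2)
    (ha : IsContact u v a) (hb : IsContact u v b) {θ : ℝ} (hθ : θ ∈ Icc a b) :
    IsContact u v θ := by
  refine Icc_subset_of_midpoint_mem (isClosed_setOf_isContact u v) ha hb ?_ hθ
  rintro x ⟨hx, hax, hxb⟩ y ⟨hy, hay, hyb⟩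
  have hsub : midpoint ℝ x y - (y - x) / 2 = x := by
    rw [midpoint_eq_smul_add, smul_eq_mul, invOf_eq_inv]
    ring
  have hadd : midpoint ℝ x y + (y - x) / 2 = y := by
    rw [midpoint_eq_smul_add, smul_eq_mul, invOf_eq_inv]
    ring
  refine hY.isContact_of_sub_of_add (δ := (y - x) / 2) ?_ (hsub.symm ▸ hx) (hadd.symm ▸ hy)
  rw [mul_div_cancel₀ _ two_ne_zero]
  exact (cos_pos_of_mem_Ioo ⟨by linarith, by linarith⟩).ne'

theorem isContact (hY : RhombusLaw Y) (hu : ‖u‖ = 1) (hv : ‖v‖ = 1)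
    (huv : ‖u + v‖ = ‖u - v‖) (θ : ℝ) : IsContact u v θ := by
  have hπ := pi_pos
  have h_zero : IsContact u v 0 := isContact_zero hu hv
  have h_quarter : IsContact u v (π / 4) := hY.isContact_pi_div_four hu hv huv
  have h_half : IsContact u v (π / 2) := (periodic_isContact u v).eq.mpr h_zero
  obtain ⟨φ, ⟨hφ₀, hφ⟩, hθφ⟩ := (periodic_isContact u v).exists_mem_Ico₀ pi_div_two_pos θ
  rw [hθφ]
  rcases le_total φ (π / 4) with h | h
  · exact hY.isContact_of_mem_Icc (by linarith) h_zero h_quarter ⟨hφ₀, h⟩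
  · exact hY.isContact_of_mem_Icc (by linarith) h_quarter h_half ⟨h, hφ.le⟩

theorem norm_smul_add_smul_sq_of_unit (hY : RhombusLaw Y) (hu : ‖u‖ = 1) (hv : ‖v‖ = 1)
    (huv : ‖u + v‖ = ‖u - v‖) (a b : ℝ) : ‖a • u + b • v‖ ^ 2 = a ^ 2 + b ^ 2 := by
  set z : ℂ := ⟨a, b⟩
  have hz : a • u + b • v = ‖z‖ • ellipse u v z.arg := by
    rw [ellipse, smul_add, smul_smul, smul_smul, Complex.norm_mul_cos_arg,
      Complex.norm_mul_sin_arg]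
  rw [hz, norm_smul, norm_norm, (hY.isContact hu hv huv z.arg).1, mul_one, Complex.sq_norm,
    Complex.normSq_mk, sq, sq]

end RhombusLaw

/-- Singer orthogonality: `x` or `y` vanishes, or their directions `x / ‖x‖` and `y / ‖y‖` span a
rhombus with equal diagonals. Denominators are cleared, which makes the condition continuous. -/
def SingerOrthogonal (x y : Y) : Prop :=
  ‖‖y‖ • x + ‖x‖ • y‖ = ‖‖y‖ • x - ‖x‖ • y‖

theorem exists_singerOrthogonal_eq_smul_add_smul (x y : Y) :
    ∃ (w : Y) (a b : ℝ), SingerOrthogonal x w ∧ y = a • x + b • w := by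
  rcases eq_or_ne x 0 with rfl | hx
  · exact ⟨y, 0, 1, by simp [SingerOrthogonal], by simp⟩
  -- The difference `f` of the diagonals changes sign along a curve from `-x` through `y` to `x`.
  let w : ℝ → Y := fun t => (1 - t ^ 2) • y + t • x
  let f : ℝ → ℝ := fun t => ‖‖w t‖ • x + ‖x‖ • w t‖ - ‖‖w t‖ • x - ‖x‖ • w t‖
  have hf : Continuous f := by fun_prop
  have hnorm : 0 < ‖‖x‖ • x + ‖x‖ • x‖ := by
    rw [← two_smul ℝ, norm_pos_iff]
    simp [hx]
  have hf_one : 0 < f 1 := by simpa [f, w] using hnorm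
  have hf_neg_one : f (-1) < 0 := by simpa [f, w, ← sub_eq_add_neg] using hnorm
  obtain ⟨t, ht⟩ := mem_range_of_exists_le_of_exists_ge hf ⟨-1, hf_neg_one.le⟩ ⟨1, hf_one.le⟩
  have ht' : 1 - t ^ 2 ≠ 0 := by
    intro h
    rcases sq_eq_one_iff.mp (sub_eq_zero.mp h).symm with rfl | rfl
    · exact hf_one.ne' ht
    · exact hf_neg_one.ne ht
  refine ⟨w t, -((1 - t ^ 2)⁻¹ * t), (1 - t ^ 2)⁻¹, sub_eq_zero.mp ht, ?_⟩
  rw [smul_add, inv_smul_smul₀ ht']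
  module

namespace RhombusLaw

theorem norm_smul_add_smul_sq (hY : RhombusLaw Y) (hxy : SingerOrthogonal x y) (a b : ℝ) :
    ‖a • x + b • y‖ ^ 2 = a ^ 2 * ‖x‖ ^ 2 + b ^ 2 * ‖y‖ ^ 2 := by
  rcases eq_or_ne x 0 with rfl | hx
  · simp [norm_smul, mul_pow]
  rcases eq_or_ne y 0 with rfl | hy
  · simp [norm_smul, mul_pow]
  have hdir : ‖normalize x + normalize y‖ = ‖normalize x - normalize y‖ := by
    have hx_eq : ‖y‖ • x = (‖x‖ * ‖y‖) • normalize x := by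
      rw [mul_comm, mul_smul, norm_smul_normalize]
    have hy_eq : ‖x‖ • y = (‖x‖ * ‖y‖) • normalize y := by
      rw [mul_smul, norm_smul_normalize]
    rw [SingerOrthogonal, hx_eq, hy_eq, ← smul_add, ← smul_sub, norm_smul, norm_smul] at hxy
    exact mul_left_cancel₀ (by simp [hx, hy]) hxy
  have h := hY.norm_smul_add_smul_sq_of_unit (norm_normalize_eq_one_iff.mpr hx)
    (norm_normalize_eq_one_iff.mpr hy) hdir (a * ‖x‖) (b * ‖y‖)
  simpa only [mul_smul, norm_smul_normalize, mul_pow] using h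

/-- **Day's theorem**. -/
theorem innerProductSpaceable (hY : RhombusLaw Y) : InnerProductSpaceable Y where
  parallelogram_identity x y := by
    obtain ⟨w, a, b, hxw, rfl⟩ := exists_singerOrthogonal_eq_smul_add_smul x y
    have hadd : x + (a • x + b • w) = (1 + a) • x + b • w := by module
    have hsub : x - (a • x + b • w) = (1 - a) • x + (-b) • w := by module
    simp only [← sq, hadd, hsub, hY.norm_smul_add_smul_sq hxw]
    ring

end RhombusLaw

end Day

section Sphere

variable {E Y : Type*} [NormedAddCommGroup E] [NormedAddCommGroup Y] [NormedSpace ℝ Y] {Δ : E → Y}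

theorem map_neg_of_sphere_isometry [NormedSpace ℝ E] [StrictConvexSpace ℝ E]
    (hmap : ∀ x : E, ‖x‖ = 1 → ‖Δ x‖ = 1)
    (hsurj : ∀ y : Y, ‖y‖ = 1 → ∃ x : E, ‖x‖ = 1 ∧ Δ x = y)
    (hiso : ∀ x y : E, ‖x‖ = 1 → ‖y‖ = 1 → ‖Δ x - Δ y‖ = ‖x - y‖) {x : E} (hx : ‖x‖ = 1) :
    Δ (-x) = -Δ x := by
  obtain ⟨z, hz, hzx⟩ := hsurj (-Δ x) (by rw [norm_neg, hmap x hx])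
  have hdist : ‖x + -z‖ = ‖x‖ + ‖-z‖ := by
    rw [← sub_eq_add_neg, ← hiso x z hx hz, hzx, sub_neg_eq_add, ← two_smul ℝ, norm_smul,
      hmap x hx, norm_neg, hx, hz]
    norm_num
  have hxz : x = -z := eq_of_norm_eq_of_norm_add_eq (by rw [norm_neg, hx, hz]) hdist
  rw [hxz, neg_neg, hzx, ← hxz]

theorem rhombusLaw_of_sphere_isometry [InnerProductSpace ℝ E]
    (hmap : ∀ x : E, ‖x‖ = 1 → ‖Δ x‖ = 1)
    (hsurj : ∀ y : Y, ‖y‖ = 1 → ∃ x : E, ‖x‖ = 1 ∧ Δ x = y)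
    (hiso : ∀ x y : E, ‖x‖ = 1 → ‖y‖ = 1 → ‖Δ x - Δ y‖ = ‖x - y‖) : RhombusLaw Y := by
  intro u v hu hv
  obtain ⟨a, ha, rfl⟩ := hsurj u hu
  obtain ⟨b, hb, rfl⟩ := hsurj v hv
  have hadd : ‖Δ a + Δ b‖ = ‖a + b‖ := by
    simpa only [map_neg_of_sphere_isometry hmap hsurj hiso hb, sub_neg_eq_add]
      using hiso a (-b) ha (by rwa [norm_neg])
  rw [hadd, hiso a b ha hb]
  exact rhombusLaw_of_innerProductSpaceable ha hb

end Sphere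

section RadialExtension

variable {E Y : Type*} [NormedAddCommGroup E] [NormedSpace ℝ E]
  [NormedAddCommGroup Y] [NormedSpace ℝ Y] {Δ : E → Y}

/-- The positively homogeneous extension of a map on the unit sphere. The junk value
`Δ (normalize 0) = Δ 0` is multiplied by `‖0‖ = 0`. -/
noncomputable def radialExtension (Δ : E → Y) (x : E) : Y := ‖x‖ • Δ (normalize x)

theorem radialExtension_zero (Δ : E → Y) : radialExtension Δ 0 = 0 := by simp [radialExtension]

theorem radialExtension_of_norm_eq_one (Δ : E → Y) {x : E} (hx : ‖x‖ = 1) :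
    radialExtension Δ x = Δ x := by
  rw [radialExtension, normalize_eq_self_of_norm_eq_one hx, hx, one_smul]

theorem radialExtension_smul_of_pos (Δ : E → Y) {r : ℝ} (hr : 0 < r) (x : E) :
    radialExtension Δ (r • x) = r • radialExtension Δ x := by
  rw [radialExtension, radialExtension, normalize_smul_of_pos hr, norm_smul, norm_of_nonneg hr.le,
    mul_smul]

theorem norm_radialExtension (hmap : ∀ x : E, ‖x‖ = 1 → ‖Δ x‖ = 1) (x : E) :
    ‖radialExtension Δ x‖ = ‖x‖ := by
  rcases eq_or_ne x 0 with rfl | hx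
  · simp [radialExtension_zero]
  · rw [radialExtension, norm_smul, norm_norm, hmap _ (norm_normalize_eq_one_iff.mpr hx), mul_one]

theorem radialExtension_surjective
    (hsurj : ∀ y : Y, ‖y‖ = 1 → ∃ x : E, ‖x‖ = 1 ∧ Δ x = y) :
    Function.Surjective (radialExtension Δ) := by
  intro y
  rcases eq_or_ne y 0 with rfl | hy
  · exact ⟨0, radialExtension_zero Δ⟩
  obtain ⟨x, hx, hxy⟩ := hsurj (normalize y) (norm_normalize_eq_one_iff.mpr hy)
  exact ⟨‖y‖ • x, by rw [radialExtension_smul_of_pos Δ (norm_pos_iff.mpr hy),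
    radialExtension_of_norm_eq_one Δ hx, hxy, norm_smul_normalize]⟩

end RadialExtension

section InnerProduct

variable {E Y : Type*} [NormedAddCommGroup E] [InnerProductSpace ℝ E]
  [NormedAddCommGroup Y] [InnerProductSpace ℝ Y] {Δ : E → Y}

theorem norm_smul_sub_smul_sq_of_unit {u v : E} (hu : ‖u‖ = 1) (hv : ‖v‖ = 1) (a b : ℝ) :
    ‖a • u - b • v‖ ^ 2 = (a - b) ^ 2 + a * b * ‖u - v‖ ^ 2 := by
  simp only [norm_sub_sq_real, norm_smul, mul_pow, norm_eq_abs, sq_abs, real_inner_smul_left,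
    real_inner_smul_right, hu, hv]
  ring

theorem isometry_radialExtension (hmap : ∀ x : E, ‖x‖ = 1 → ‖Δ x‖ = 1)
    (hiso : ∀ x y : E, ‖x‖ = 1 → ‖y‖ = 1 → ‖Δ x - Δ y‖ = ‖x - y‖) :
    Isometry (radialExtension Δ) := by
  refine Isometry.of_dist_eq fun x y => ?_
  rw [dist_eq_norm, dist_eq_norm]
  rcases eq_or_ne x 0 with rfl | hx
  · simp [radialExtension_zero, norm_radialExtension hmap]
  rcases eq_or_ne y 0 with rfl | hy
  · simp [radialExtension_zero, norm_radialExtension hmap]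
  have hx' : ‖normalize x‖ = 1 := norm_normalize_eq_one_iff.mpr hx
  have hy' : ‖normalize y‖ = 1 := norm_normalize_eq_one_iff.mpr hy
  refine (sq_eq_sq₀ (norm_nonneg _) (norm_nonneg _)).mp ?_
  calc ‖radialExtension Δ x - radialExtension Δ y‖ ^ 2
      = (‖x‖ - ‖y‖) ^ 2 + ‖x‖ * ‖y‖ * ‖normalize x - normalize y‖ ^ 2 := by
        rw [radialExtension, radialExtension,
          norm_smul_sub_smul_sq_of_unit (hmap _ hx') (hmap _ hy'), hiso _ _ hx' hy']
    _ = ‖‖x‖ • normalize x - ‖y‖ • normalize y‖ ^ 2 :=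
        (norm_smul_sub_smul_sq_of_unit hx' hy' _ _).symm
    _ = ‖x - y‖ ^ 2 := by rw [norm_smul_normalize, norm_smul_normalize]

end InnerProduct

theorem mazur_ulam_property_complex_hilbert_general
    {E Y : Type*} [NormedAddCommGroup E] [InnerProductSpace ℝ E]
    [NormedAddCommGroup Y] [NormedSpace ℝ Y] (Δ : E → Y)
    (hmap : ∀ x : E, ‖x‖ = 1 → ‖Δ x‖ = 1)
    (hsurj : ∀ y : Y, ‖y‖ = 1 → ∃ x : E, ‖x‖ = 1 ∧ Δ x = y)
    (hiso : ∀ x y : E, ‖x‖ = 1 → ‖y‖ = 1 → ‖Δ x - Δ y‖ = ‖x - y‖) :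
    ∃ T : E ≃ₗᵢ[ℝ] Y, ∀ x : E, ‖x‖ = 1 → T x = Δ x := by
  have hY : InnerProductSpaceable Y :=
    (rhombusLaw_of_sphere_isometry hmap hsurj hiso).innerProductSpaceable
  let _ : InnerProductSpace ℝ Y := InnerProductSpace.ofNorm ℝ hY.parallelogram_identity
  have hisom : Isometry (radialExtension Δ) := isometry_radialExtension hmap hiso
  let e : E ≃ᵢ Y :=
    ⟨.ofBijective _ ⟨hisom.injective, radialExtension_surjective hsurj⟩, hisom⟩
  exact ⟨e.toRealLinearIsometryEquivOfMapZero (radialExtension_zero Δ),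
    fun _ hx => radialExtension_of_norm_eq_one Δ hx⟩

/-- every (non-zero) complex Hilbert space satisfies the Mazur–Ulam
property: every surjective isometry from its unit sphere onto the unit sphere of a
real Banach space `Y` extends to a surjective real-linear isometry onto `Y`. -/
theorem mazur_ulam_property_complex_hilbert
    {H : Type*} [NormedAddCommGroup H] [InnerProductSpace ℂ H] [CompleteSpace H]
    [Nontrivial H]
    {Y : Type*} [NormedAddCommGroup Y] [NormedSpace ℝ Y] [CompleteSpace Y]
    (Δ : H → Y)
    (hmap : ∀ x : H, ‖x‖ = 1 → ‖Δ x‖ = 1)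
    (hsurj : ∀ y : Y, ‖y‖ = 1 → ∃ x : H, ‖x‖ = 1 ∧ Δ x = y)
    (hiso : ∀ x y : H, ‖x‖ = 1 → ‖y‖ = 1 → ‖Δ x - Δ y‖ = ‖x - y‖) :
    ∃ T : H → Y,
      (∀ x y : H, T (x + y) = T x + T y) ∧
      (∀ (r : ℝ) (x : H), T (r • x) = r • T x) ∧
      (∀ x : H, ‖T x‖ = ‖x‖) ∧
      Function.Surjective T ∧
      (∀ x : H, ‖x‖ = 1 → T x = Δ x) := by
  let _ := InnerProductSpace.rclikeToReal ℂ H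
  obtain ⟨T, hT⟩ := mazur_ulam_property_complex_hilbert_general Δ hmap hsurj hiso
  exact ⟨T, map_add T, map_smul T, T.norm_map, T.surjective, hT⟩
end
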